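/- For all integers a, b with 1 ≤ a ≤ 10, b > a, and gcd(a,b) = 1, the number π*(a,b) of primes not representable as au + bv with u, v nonnegative integers satisfies π*(a,b) ≥ (1/2) · π(S(a,b)), where S(a,b) = ab − a − b; moreover, equality holds if and only if a = 1, or (a,b) = (2,3), or (a,b) = (2,5), or (a,b) = (3,5). -/

import Mathlib

/-- `piStar a b` is the number of primes not representable as `a*u + b*v`
with `u, v` nonnegative integers, i.e. the number of primes not in the
numerical semigroup `⟨a, b⟩`. -/
noncomputable def piStar (a b : ℕ) : ℕ :=
  Set.ncard {p : ℕ | p.Prime ∧ ¬ ∃ u v : ℕ, p = a * u + b * v}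

/-- `S a b = a*b - a - b` (the Frobenius-type quantity).
Note that for `a = 1` this truncated subtraction gives `S 1 b = 0`, and
`π(0) = 0`, which agrees with the convention `π(S(1,b)) = π(-1) = 0`. -/
def S (a b : ℕ) : ℕ := a * b - a - b

namespace PS
open Real

noncomputable def ff (z : ℝ) : ℝ := z * log z - z

lemma ff_tangent {w z : ℝ} (hw : 0 < w) (hz : 0 < z) :
    ff z + (w - z) * log z ≤ ff w := by
  unfold ff
  have h := Real.log_le_sub_one_of_pos (div_pos hz hw)
  rw [Real.log_div hz.ne' hw.ne'] at h
  have h2 : w * (log z - log w) ≤ w * (z / w - 1) := mul_le_mul_of_nonneg_left h hw.le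
  have h3 : w * (z / w - 1) = z - w := by field_simp
  rw [h3] at h2
  nlinarith

lemma ff_trap {n q : ℝ} (hn : 0 < n) (hq : 0 < q) :
    q / 2 * (log n + log (n + q)) ≤ ff (n + q) - ff n := by
  unfold ff
  have h := Real.le_log_one_add_of_nonneg (x := q / n) (by positivity)
  have e : log (1 + q / n) = log (n + q) - log n := by
    rw [← Real.log_div (by positivity) hn.ne']; congr 1; field_simp
  rw [e] at h
  have h2 : 2 * (q / n) / (q / n + 2) = 2 * q / (q + 2 * n) := by field_simp
  rw [h2, div_le_iff₀ (by positivity)] at h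
  nlinarith

lemma phi_neg {z : ℝ} (h0 : 0 ≤ z) (h1 : z < 1) :
    (1 + z) * log (1 + z) - (1 - z) * log (1 - z) - 2 * z ≤ 0 := by
  -- log(1+z) ≤ ... use antitone
  have key : AntitoneOn (fun z : ℝ => (1 + z) * log (1 + z) - (1 - z) * log (1 - z) - 2 * z)
      (Set.Ico 0 1) := by
    apply antitoneOn_of_hasDerivWithinAt_nonpos (f' := fun z => log (1 + z) + log (1 - z))
      (convex_Ico 0 1)
    · intro x hx
      have h1 : (1 + x) ≠ 0 := by have := hx.1; positivity
      have h2 : (1 - x) ≠ 0 := by have := hx.2; linarith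
      apply ContinuousAt.continuousWithinAt
      fun_prop (disch := assumption)
    · intro x hx
      rw [interior_Ico] at hx
      have h1 : (1 + x) ≠ 0 := by have := hx.1; positivity
      have h2 : (1 - x) ≠ 0 := by have := hx.2; linarith
      apply HasDerivAt.hasDerivWithinAt
      have a1 : HasDerivAt (fun z : ℝ => 1 + z) 1 x := by simpa using (hasDerivAt_id x).const_add 1
      have a2 : HasDerivAt (fun z : ℝ => 1 - z) (-1) x := by simpa using (hasDerivAt_id x).const_sub 1
      have := ((a1.mul (a1.log h1)).sub (a2.mul (a2.log h2))).sub ((hasDerivAt_id x).const_mul 2)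
      have e2 : (1 - x) * (-1 / (1 - x)) = -1 := by field_simp
      have e1 : (1 + x) * (1 / (1 + x)) = 1 := by field_simp
      rw [e1, e2] at this
      exact this.congr_deriv (by ring)
    · intro x hx
      rw [interior_Ico] at hx
      have h1 : 0 < (1 + x) := by have := hx.1; linarith
      have h2 : 0 < (1 - x) := by have := hx.2; linarith
      rw [← Real.log_mul h1.ne' h2.ne']
      apply Real.log_nonpos
      · positivity
      · nlinarith [hx.1]
  have := key (a := 0) (b := z) ⟨le_refl _, by norm_num⟩ ⟨h0, h1⟩ h0
  simpa using this

lemma ff_mid {n q : ℝ} (hn : q / 2 < n) (hq : 0 < q) :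
    ff (n + q / 2) - ff (n - q / 2) ≤ q * log n := by
  have hn0 : 0 < n := by linarith
  have h := phi_neg (z := q / (2 * n)) (by positivity) (by rw [div_lt_one (by positivity)]; linarith)
  have e1 : log (1 + q / (2 * n)) = log (n + q / 2) - log n := by
    rw [← Real.log_div (by positivity) hn0.ne']; congr 1; field_simp
  have e2 : log (1 - q / (2 * n)) = log (n - q / 2) - log n := by
    rw [← Real.log_div (by linarith) hn0.ne']; congr 1; field_simp
  rw [e1, e2] at h
  unfold ff
  have h3 := mul_le_mul_of_nonneg_left h hn0.le
  have : n * ((1 + q / (2 * n)) * (log (n + q / 2) - log n) - (1 - q / (2 * n)) * (log (n - q / 2) - log n) - 2 * (q / (2 * n))) = (n + q / 2) * (log (n + q / 2) - log n) - (n - q / 2) * (log (n - q / 2) - log n) - q := by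
    field_simp
  rw [this] at h3
  nlinarith

/-- sum of logs over a progression l, l+q, ..., l+q*j -/
lemma prog_upper (q l : ℕ) (hl : 1 ≤ l) (hlq : l ≤ q) (hq : q ≤ 10) (j : ℕ) :
    (q : ℝ) * ∑ i ∈ Finset.range (j + 1), log ((l + q * i : ℕ) : ℝ)
      ≤ ff ((l + q * j : ℕ) : ℝ) + q / 2 * log ((l + q * j : ℕ) : ℝ) + 2.7 * q := by
  have hl' : (1 : ℝ) ≤ l := by exact_mod_cast hl
  have hlq' : (l : ℝ) ≤ q := by exact_mod_cast hlq
  have hq' : (q : ℝ) ≤ 10 := by exact_mod_cast hq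
  induction j with
  | zero =>
    simp [ff]
    have h1 : log (l : ℝ) ≤ 4 * log 2 := by
      have : (4 : ℝ) * log 2 = log (2 ^ 4) := by rw [Real.log_pow]; norm_num
      rw [this]; apply Real.log_le_log (by linarith); linarith
    have h2 := Real.log_two_lt_d9
    have h3 : 0 ≤ log (l : ℝ) := Real.log_nonneg hl'
    nlinarith
  | succ j ih =>
    rw [Finset.sum_range_succ, mul_add]
    have h := ff_trap (n := ((l + q * j : ℕ) : ℝ)) (q := q) (by push_cast; positivity) (by linarith)
    have e : ((l + q * (j + 1) : ℕ) : ℝ) = ((l + q * j : ℕ) : ℝ) + q := by push_cast; ring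
    rw [e]
    nlinarith

lemma prog_lower (q l : ℕ) (hl : 1 ≤ l) (hlq : l ≤ q) (hq : q ≤ 10) (j : ℕ) :
    ff ((l + q * j : ℕ) + q / 2 : ℝ) - 2.7 * q ≤
    (q : ℝ) * ∑ i ∈ Finset.range (j + 1), log ((l + q * i : ℕ) : ℝ) := by
  have hl' : (1 : ℝ) ≤ l := by exact_mod_cast hl
  have hlq' : (l : ℝ) ≤ q := by exact_mod_cast hlq
  have hq' : (q : ℝ) ≤ 10 := by exact_mod_cast hq
  induction j with
  | zero =>
    simp [ff]
    have h1 : log (l + q / 2 : ℝ) ≤ 4 * log 2 := by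
      have : (4 : ℝ) * log 2 = log (2 ^ 4) := by rw [Real.log_pow]; norm_num
      rw [this]; apply Real.log_le_log (by linarith); linarith
    have h2 := Real.log_two_lt_d9
    have h3 : 0 ≤ log (l : ℝ) := Real.log_nonneg hl'
    have h4 : (l + q / 2 : ℝ) * (log (l + q / 2 : ℝ) - 1) ≤ (l + q / 2 : ℝ) * 1.7726 := by
      apply mul_le_mul_of_nonneg_left _ (by positivity); linarith
    nlinarith
  | succ j ih =>
    rw [Finset.sum_range_succ, mul_add (q : ℝ)]
    have hj : (0 : ℝ) ≤ q * j := by positivity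
    have h := ff_mid (n := ((l + q * (j + 1) : ℕ) : ℝ)) (q := q) (by push_cast; linarith) (by linarith)
    have e : ((l + q * (j + 1) : ℕ) : ℝ) - q / 2 = ((l + q * j : ℕ) : ℝ) + q / 2 := by push_cast; ring
    rw [e] at h
    linarith

lemma class_sum_eq (q l M : ℕ) (hl : 1 ≤ l) (hlq : l ≤ q) (hM : l ≤ M) (f : ℕ → ℝ) :
    ∑ m ∈ (Finset.Icc 1 M).filter (fun m => m % q = l % q), f m =
      ∑ i ∈ Finset.range ((M - l) / q + 1), f (l + q * i) := by
  symm
  have hq : 0 < q := by omega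
  apply Finset.sum_bij (fun i _ => l + q * i)
  · intro i hi
    simp only [Finset.mem_range, Finset.mem_filter, Finset.mem_Icc] at hi ⊢
    refine ⟨⟨by omega, ?_⟩, by simp⟩
    have : i ≤ (M - l) / q := by omega
    have := (Nat.le_div_iff_mul_le hq).1 this
    rw [mul_comm] at this; omega
  · intro i _ j _ h
    have : q * i = q * j := by omega
    exact Nat.eq_of_mul_eq_mul_left hq this
  · intro m hm
    simp only [Finset.mem_filter, Finset.mem_Icc] at hm
    have hlm : l ≤ m := by
      by_contra hc
      have h1 : m % q = m := Nat.mod_eq_of_lt (by omega)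
      rcases eq_or_lt_of_le hlq with h | h
      · rw [h, Nat.mod_self] at hm; omega
      · rw [Nat.mod_eq_of_lt h] at hm; omega
    have hd : q ∣ m - l := (Nat.modEq_iff_dvd' hlm).1 (Nat.ModEq.symm hm.2)
    obtain ⟨i, hi⟩ := hd
    refine ⟨i, ?_, by omega⟩
    simp only [Finset.mem_range]
    have : i ≤ (M - l) / q := by
      rw [Nat.le_div_iff_mul_le hq, mul_comm]; omega
    omega
  · intros; rfl

lemma T_bound (q l : ℕ) (hl : 1 ≤ l) (hlq : l ≤ q) (hq : q ≤ 10) (z : ℝ) (hz : 1 ≤ z) :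
    |(q : ℝ) * (∑ m ∈ (Finset.Icc 1 ⌊z⌋₊).filter (fun m => m % q = l % q), log (m : ℝ)) - ff z|
      ≤ q / 2 * log z + 2.7 * q := by
  have hl' : (1 : ℝ) ≤ l := by exact_mod_cast hl
  have hlq' : (l : ℝ) ≤ q := by exact_mod_cast hlq
  have hq' : (q : ℝ) ≤ 10 := by exact_mod_cast hq
  have hlz : 0 ≤ log z := Real.log_nonneg hz
  have hfl : (⌊z⌋₊ : ℝ) ≤ z := Nat.floor_le (by linarith)
  have hq1 : 1 ≤ q := by omega
  rcases lt_or_ge ⌊z⌋₊ l with hM | hM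
  · have he : (Finset.Icc 1 ⌊z⌋₊).filter (fun m => m % q = l % q) = ∅ := by
      rw [Finset.filter_eq_empty_iff]
      intro m hm hc
      rw [Finset.mem_Icc] at hm
      have h1 : m % q = m := Nat.mod_eq_of_lt (by omega)
      rcases eq_or_lt_of_le hlq with h | h
      · rw [h, Nat.mod_self] at hc; omega
      · rw [Nat.mod_eq_of_lt h] at hc; omega
    rw [he]
    simp only [Finset.sum_empty, mul_zero, zero_sub, abs_neg]
    have hzl : z < l := by
      have := Nat.lt_floor_add_one z
      have h2 : ((⌊z⌋₊ + 1 : ℕ) : ℝ) ≤ l := by exact_mod_cast hM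
      push_cast at h2; linarith
    have h1 : log z ≤ 4 * log 2 := by
      have : (4 : ℝ) * log 2 = log (2 ^ 4) := by rw [Real.log_pow]; norm_num
      rw [this]; apply Real.log_le_log (by linarith); linarith
    have h2 := Real.log_two_lt_d9
    have h3 := ff_tangent (w := z) (z := 1) (by linarith) one_pos
    have h4 : ff 1 = -1 := by simp [ff]
    rw [h4, Real.log_one] at h3
    rw [abs_le]
    constructor
    · nlinarith
    · unfold ff; nlinarith
  · rw [class_sum_eq q l _ hl hlq hM]
    set j := (⌊z⌋₊ - l) / q with hj
    have hjle : l + q * j ≤ ⌊z⌋₊ := by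
      have := Nat.div_mul_le_self (⌊z⌋₊ - l) q
      rw [mul_comm, ← hj] at this; omega
    have hjlt : ⌊z⌋₊ + 1 ≤ l + q * j + q := by
      have := Nat.lt_div_mul_add (a := ⌊z⌋₊ - l) (b := q) (by omega)
      rw [mul_comm, ← hj] at this; omega
    have hU := prog_upper q l hl hlq hq j
    have hL := prog_lower q l hl hlq hq j
    set n : ℝ := ((l + q * j : ℕ) : ℝ) with hn
    have hn1 : 1 ≤ n := by rw [hn]; exact_mod_cast (by omega : 1 ≤ l + q * j)
    have hnz : n ≤ z := le_trans (by rw [hn]; exact_mod_cast hjle) hfl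
    have hzn : z ≤ n + q := by
      have := Nat.lt_floor_add_one z
      have h2 : ((⌊z⌋₊ + 1 : ℕ) : ℝ) ≤ ((l + q * j + q : ℕ) : ℝ) := by exact_mod_cast hjlt
      rw [Nat.cast_add (l + q * j)] at h2
      push_cast at h2 hn; linarith
    have hlog : log n ≤ log z := Real.log_le_log (by linarith) hnz
    have hlogn : 0 ≤ log n := Real.log_nonneg hn1
    have t1 := ff_tangent (w := z) (z := n) (by linarith) (by linarith)
    have t2 := ff_tangent (w := n + q / 2) (z := z) (by positivity) (by linarith)
    have t3 : 0 ≤ (z - n) * log n := mul_nonneg (by linarith) hlogn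
    have t4 : -(q / 2 : ℝ) * log z ≤ (n + q / 2 - z) * log z := by
      apply mul_le_mul_of_nonneg_right _ hlz; linarith
    have t5 : (q / 2 : ℝ) * log n ≤ q / 2 * log z := by
      apply mul_le_mul_of_nonneg_left hlog; positivity
    rw [abs_le]
    constructor <;> nlinarith
end PS

namespace PS
open Real Finset
open scoped ArithmeticFunction.vonMangoldt

noncomputable def psiq (q r x : ℕ) : ℝ := ∑ N ∈ (Icc 1 x).filter (fun N => N % q = r % q), Λ N

def cnt (q k n r : ℕ) : ℕ := ((Icc 1 n).filter (fun m => k ∣ m ∧ m % q = r % q)).card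

lemma sum_divisors_swap (M : ℕ) (F : ℕ → ℕ → ℝ) :
    ∑ m ∈ Icc 1 M, ∑ d ∈ m.divisors, F d (m / d) =
      ∑ d ∈ Icc 1 M, ∑ j ∈ Icc 1 (M / d), F d j := by
  rw [Finset.sum_sigma', Finset.sum_sigma']
  refine Finset.sum_bij' (fun p _ => ⟨p.2, p.1 / p.2⟩) (fun p _ => ⟨p.1 * p.2, p.1⟩) ?_ ?_ ?_ ?_ ?_
  · rintro ⟨m, d⟩ h
    simp only [mem_sigma, mem_Icc, Nat.mem_divisors] at h ⊢
    obtain ⟨⟨h1, h2⟩, ⟨j, rfl⟩, h4⟩ := h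
    have hd : 0 < d := Nat.pos_of_ne_zero (by rintro rfl; simp at h4)
    have hj : 0 < j := Nat.pos_of_ne_zero (by rintro rfl; simp at h4)
    rw [Nat.mul_div_cancel_left _ hd]
    refine ⟨⟨hd, le_trans (Nat.le_mul_of_pos_right d hj) h2⟩, hj, ?_⟩
    rw [Nat.le_div_iff_mul_le hd, mul_comm]; exact h2
  · rintro ⟨d, j⟩ h
    simp only [mem_sigma, mem_Icc, Nat.mem_divisors] at h ⊢
    obtain ⟨⟨h1, h2⟩, h3, h4⟩ := h
    rw [Nat.le_div_iff_mul_le h1, mul_comm] at h4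
    have : 0 < d * j := Nat.mul_pos h1 h3
    exact ⟨⟨this, h4⟩, ⟨j, rfl⟩, by omega⟩
  · rintro ⟨m, d⟩ h
    simp only [mem_sigma, mem_Icc, Nat.mem_divisors] at h ⊢
    obtain ⟨_, h3, _⟩ := h
    simp [Nat.mul_div_cancel' h3]
  · rintro ⟨d, j⟩ h
    simp only [mem_sigma, mem_Icc] at h ⊢
    rw [Nat.mul_div_cancel_left _ (by omega)]
  · rintro ⟨m, d⟩ h
    rfl

lemma T_eq (q r x k : ℕ) (hk : 1 ≤ k) :
    ∑ m ∈ (Icc 1 (x / k)).filter (fun m => (k * m) % q = r % q), log (m : ℝ) =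
    ∑ N ∈ Icc 1 x, Λ N * (((Icc 1 (x / N)).filter (fun m => k ∣ m ∧ (N * m) % q = r % q)).card : ℝ) := by
  have h1 : ∀ m ∈ (Icc 1 (x / k)).filter (fun m => (k * m) % q = r % q),
      log (m : ℝ) = ∑ d ∈ m.divisors, Λ d := by
    intro m _; rw [ArithmeticFunction.vonMangoldt_sum]
  rw [Finset.sum_congr rfl h1, Finset.sum_filter]
  have h2 : ∀ m ∈ Icc 1 (x / k), (if (k * m) % q = r % q then ∑ d ∈ m.divisors, Λ d else 0) =
      ∑ d ∈ m.divisors, (fun d j => if (k * (d * j)) % q = r % q then Λ d else 0) d (m / d) := by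
    intro m _
    split_ifs with h
    · apply Finset.sum_congr rfl
      intro d hd
      rw [Nat.mem_divisors] at hd
      simp [Nat.mul_div_cancel' hd.1, h]
    · symm; apply Finset.sum_eq_zero
      intro d hd
      rw [Nat.mem_divisors] at hd
      simp [Nat.mul_div_cancel' hd.1, h]
  rw [Finset.sum_congr rfl h2, sum_divisors_swap (x / k) (fun d j => if (k * (d * j)) % q = r % q then Λ d else 0)]
  have h3 : Icc 1 (x / k) ⊆ Icc 1 x := Finset.Icc_subset_Icc_right (Nat.div_le_self x k)
  rw [← Finset.sum_subset h3 (f := fun d => Λ d * (((Icc 1 (x / d)).filter (fun m => k ∣ m ∧ (d * m) % q = r % q)).card : ℝ))]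
  · apply Finset.sum_congr rfl
    intro N hN
    rw [mem_Icc] at hN
    rw [← Finset.sum_filter, Finset.sum_const, nsmul_eq_mul, mul_comm]
    congr 2
    apply Finset.card_bij (fun j _ => k * j)
    · intro j hj
      simp only [mem_filter, mem_Icc] at hj ⊢
      obtain ⟨⟨h1, h2⟩, h4⟩ := hj
      rw [Nat.le_div_iff_mul_le (by omega), Nat.le_div_iff_mul_le (by omega)] at h2
      refine ⟨⟨Nat.mul_pos hk h1, ?_⟩, ⟨j, rfl⟩, ?_⟩
      · rw [Nat.le_div_iff_mul_le (by omega)]; calc k * j * N = j * N * k := by ring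
          _ ≤ x := h2
      · rw [← h4]; congr 1; ring
    · intro i _ j _ h; exact Nat.eq_of_mul_eq_mul_left (by omega) h
    · intro m hm
      simp only [mem_filter, mem_Icc] at hm
      obtain ⟨⟨h1, h2⟩, ⟨j, rfl⟩, h4⟩ := hm
      refine ⟨j, ?_, rfl⟩
      simp only [mem_filter, mem_Icc]
      refine ⟨⟨Nat.pos_of_ne_zero (by rintro rfl; simp at h1), ?_⟩, ?_⟩
      · rw [Nat.le_div_iff_mul_le (by omega)] at h2
        rw [Nat.le_div_iff_mul_le (by omega), Nat.le_div_iff_mul_le (by omega)]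
        calc j * N * k = k * j * N := by ring
          _ ≤ x := h2
      · rw [← h4]; congr 1; ring
  · intro N hN hN'
    rw [mem_Icc] at hN hN'
    have hlt : x / k < N := by omega
    have : (Icc 1 (x / N)).filter (fun m => k ∣ m ∧ (N * m) % q = r % q) = ∅ := by
      rw [Finset.filter_eq_empty_iff]
      rintro m hm ⟨⟨j, rfl⟩, _⟩
      rw [mem_Icc, Nat.le_div_iff_mul_le (by omega)] at hm
      have hj : 0 < j := Nat.pos_of_ne_zero (by rintro rfl; simp at hm)
      have : N ≤ x / k := by
        rw [Nat.le_div_iff_mul_le (by omega)]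
        calc N * k ≤ N * k * j := Nat.le_mul_of_pos_right _ hj
          _ = k * j * N := by ring
          _ ≤ x := hm.2
      omega
    rw [this]; simp

variable {ι κ : Type} [Fintype ι] [Fintype κ]

/-- largest element of a residue class -/
lemma exists_top (q n0 y : ℕ) (hne : ∃ n ∈ Icc 1 y, n % q = n0 % q) :
    ∃ n, 1 ≤ n ∧ n ≤ y ∧ n % q = n0 % q ∧
      ∀ m ∈ Icc 1 y, m % q = n0 % q → m ≤ n := by
  classical
  let s := (Icc 1 y).filter (fun n => n % q = n0 % q)
  have hs : s.Nonempty := by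
    obtain ⟨n, h1, h2⟩ := hne; exact ⟨n, by simp only [s, mem_filter]; exact ⟨h1, h2⟩⟩
  have := s.max'_mem hs
  simp only [s, mem_filter, mem_Icc] at this
  refine ⟨s.max' hs, this.1.1, this.1.2, this.2, fun m hm hmm => ?_⟩
  apply Finset.le_max'
  simp only [s, mem_filter]; exact ⟨hm, hmm⟩

lemma G_bound (q r x N : ℕ) (hr : Nat.Coprime r q) (hN : 1 ≤ N) (hNx : N ≤ x)
    (k : ι → ℕ) (c : ι → ℝ) (σ : ℝ) (h : ℕ → ℝ) (hmono : Monotone h) (h0 : ∀ n, 0 ≤ h n)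
    (cert : ∀ n, 1 ≤ n → Nat.Coprime n q →
      ∑ i, c i * (cnt q (k i) n n : ℝ) ≤ (if n % q = 1 % q then σ else 0) + h n) :
    ∑ i, c i * (((Icc 1 (x / N)).filter (fun m => k i ∣ m ∧ (N * m) % q = r % q)).card : ℝ)
      ≤ (if N % q = r % q then σ else 0) + h (x / N) := by
  have hy : 1 ≤ x / N := by rw [Nat.le_div_iff_mul_le (by omega)]; omega
  by_cases hne : ∃ n ∈ Icc 1 (x / N), (N * n) % q = r % q
  · obtain ⟨n0, hn0, hn0r⟩ := hne
    have hcop : Nat.Coprime (N * n0) q := by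
      unfold Nat.Coprime
      have : Nat.gcd (N * n0) q = Nat.gcd r q := Nat.ModEq.gcd_eq hn0r
      rw [this]; exact hr
    have hcN : Nat.Coprime N q := Nat.Coprime.coprime_mul_right hcop
    have hequiv : ∀ m, (N * m) % q = r % q ↔ m % q = n0 % q := by
      intro m
      rw [← hn0r]
      exact ⟨fun hh => Nat.ModEq.cancel_left_of_coprime (by rw [Nat.gcd_comm]; exact hcN) hh,
        fun hh => Nat.ModEq.mul_left N hh⟩
    obtain ⟨n, hn1, hn2, hn3, hn4⟩ := exists_top q n0 (x / N) ⟨n0, hn0, rfl⟩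
    have hcn : Nat.Coprime n q := by
      unfold Nat.Coprime
      have : Nat.gcd n q = Nat.gcd n0 q := Nat.ModEq.gcd_eq hn3
      rw [this]; exact Nat.Coprime.coprime_mul_left hcop
    have e : ∀ i, (Icc 1 (x / N)).filter (fun m => k i ∣ m ∧ (N * m) % q = r % q) =
        (Icc 1 n).filter (fun m => k i ∣ m ∧ m % q = n % q) := by
      intro i
      ext m
      simp only [mem_filter, mem_Icc, hequiv, hn3]
      constructor
      · rintro ⟨⟨h1, h2⟩, h3, h4⟩
        exact ⟨⟨h1, hn4 m (mem_Icc.2 ⟨h1, h2⟩) h4⟩, h3, h4⟩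
      · rintro ⟨⟨h1, h2⟩, h3, h4⟩
        exact ⟨⟨h1, h2.trans hn2⟩, h3, h4⟩
    simp_rw [e]
    have hc := cert n hn1 hcn
    unfold cnt at hc
    refine hc.trans ?_
    have e2 : (n % q = 1 % q) ↔ (N % q = r % q) := by
      have := hequiv n
      constructor
      · intro hh
        have h1 : (N * n) % q = r % q := this.2 hn3
        have h2 : (N * n) % q = (N * 1) % q := Nat.ModEq.mul_left N hh
        rw [mul_one] at h2; omega
      · intro hh
        have h1 : (N * n) % q = r % q := this.2 hn3
        have h2 : (N * n) % q = (N * 1) % q := by rw [h1, mul_one, hh]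
        exact Nat.ModEq.cancel_left_of_coprime (by rw [Nat.gcd_comm]; exact hcN) h2
    simp only [e2]
    have := hmono hn2
    linarith
  · have hs : ∑ i, c i * (((Icc 1 (x / N)).filter (fun m => k i ∣ m ∧ (N * m) % q = r % q)).card : ℝ) = 0 := by
      apply Finset.sum_eq_zero
      intro i _
      have : (Icc 1 (x / N)).filter (fun m => k i ∣ m ∧ (N * m) % q = r % q) = ∅ := by
        rw [Finset.filter_eq_empty_iff]
        intro m hm hh
        exact hne ⟨m, hm, hh.2⟩
      rw [this]; simp
    rw [hs, if_neg]
    · simpa using h0 _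
    · intro hh
      exact hne ⟨1, mem_Icc.2 ⟨le_refl _, hy⟩, by rw [mul_one]; exact hh⟩

noncomputable def psiN (x : ℕ) : ℝ := ∑ N ∈ Icc 1 x, Λ N

lemma psiN_eq (x : ℕ) : psiN x = Chebyshev.psi x := by
  unfold psiN; rw [Chebyshev.psi]; simp; rfl

lemma cert_upper (q r x : ℕ) (hr : Nat.Coprime r q)
    (k : ι → ℕ) (hk : ∀ i, 1 ≤ k i) (c : ι → ℝ) (σ : ℝ)
    (Y : κ → ℕ) (a : κ → ℝ) (ha : ∀ j, 0 ≤ a j) (hY : ∀ j, 1 ≤ Y j)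
    (C : ℝ) (hC : ∀ n : ℕ, psiN n ≤ C * n) (hC0 : 0 ≤ C)
    (cert : ∀ n, 1 ≤ n → Nat.Coprime n q →
      ∑ i, c i * (cnt q (k i) n n : ℝ) ≤ (if n % q = 1 % q then σ else 0) + ∑ j, if Y j ≤ n then a j else 0) :
    ∑ i, c i * ∑ m ∈ (Icc 1 (x / k i)).filter (fun m => (k i * m) % q = r % q), log (m : ℝ)
      ≤ σ * psiq q r x + C * x * ∑ j, a j / Y j := by
  simp_rw [fun i => T_eq q r x (k i) (hk i), Finset.mul_sum]
  rw [Finset.sum_comm]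
  have step : ∀ N ∈ Icc 1 x, ∑ i, c i * (Λ N * (((Icc 1 (x / N)).filter (fun m => k i ∣ m ∧ (N * m) % q = r % q)).card : ℝ))
      ≤ (if N % q = r % q then σ * Λ N else 0) + ∑ j, (if Y j ≤ x / N then Λ N * a j else 0) := by
    intro N hN
    rw [mem_Icc] at hN
    have hmono : Monotone (fun n : ℕ => ∑ j, if Y j ≤ n then a j else 0) := by
      intro m n hmn
      apply Finset.sum_le_sum
      intro j _
      split_ifs with h1 h2
      · exact le_refl _
      · omega
      · exact ha j
      · exact le_refl _
    have h0 : ∀ n : ℕ, 0 ≤ ∑ j, if Y j ≤ n then a j else 0 := by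
      intro n; apply Finset.sum_nonneg; intro j _; split_ifs
      · exact ha j
      · exact le_refl _
    have := G_bound q r x N hr hN.1 hN.2 k c σ _ hmono h0 cert
    have h2 := mul_le_mul_of_nonneg_left this (ArithmeticFunction.vonMangoldt_nonneg (n := N))
    rw [mul_add, Finset.mul_sum, Finset.mul_sum] at h2
    calc _ = ∑ i, Λ N * (c i * (((Icc 1 (x / N)).filter (fun m => k i ∣ m ∧ (N * m) % q = r % q)).card : ℝ)) := by
            apply Finset.sum_congr rfl; intros; ring
      _ ≤ _ := h2
      _ = _ := by
        congr 1
        · split_ifs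
          · ring
          · ring
        · apply Finset.sum_congr rfl; intros; split_ifs
          · rfl
          · ring
  refine (Finset.sum_le_sum step).trans ?_
  rw [Finset.sum_add_distrib]
  apply add_le_add
  · rw [← Finset.sum_filter, psiq, Finset.mul_sum]
  · rw [Finset.sum_comm]
    apply Finset.sum_le_sum
    intro j _
    rw [← Finset.sum_filter]
    have hYj := hY j
    have e : (Icc 1 x).filter (fun N => Y j ≤ x / N) = Icc 1 (x / Y j) := by
      ext N
      simp only [mem_filter, mem_Icc]
      constructor
      · rintro ⟨⟨h1, h2⟩, h3⟩
        rw [Nat.le_div_iff_mul_le (by omega)] at h3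
        refine ⟨h1, ?_⟩
        rw [Nat.le_div_iff_mul_le (by omega), mul_comm]; exact h3
      · rintro ⟨h1, h2⟩
        rw [Nat.le_div_iff_mul_le (by omega)] at h2
        refine ⟨⟨h1, le_trans (Nat.le_mul_of_pos_right _ (by omega)) h2⟩, ?_⟩
        rw [Nat.le_div_iff_mul_le (by omega), mul_comm]; exact h2
    rw [e, ← Finset.sum_mul]
    have h1 := hC (x / Y j)
    have h2 : ((x / Y j : ℕ) : ℝ) ≤ x / Y j := Nat.cast_div_le
    unfold psiN at h1
    calc _ ≤ C * (x / Y j) * a j := by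
          apply mul_le_mul_of_nonneg_right _ (ha j)
          exact h1.trans (mul_le_mul_of_nonneg_left h2 hC0)
      _ = _ := by ring

lemma cert_lower (q r x : ℕ) (hq : 1 ≤ q) (hq10 : q ≤ 10)
    (k : ι → ℕ) (hk : ∀ i, 1 ≤ k i) (hkx : ∀ i, k i ≤ x) (hkq : ∀ i, Nat.Coprime (k i) q) (c : ι → ℝ)
    (hsum : ∑ i, c i / k i = 0) :
    -(x / q) * ∑ i, c i * log (k i) / k i - (∑ i, |c i|) * (log x / 2 + 2.7) ≤
    ∑ i, c i * ∑ m ∈ (Icc 1 (x / k i)).filter (fun m => (k i * m) % q = r % q), log (m : ℝ) := by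
  have hq0 : (0 : ℝ) < q := by exact_mod_cast hq
  have key : ∀ i, c i * (ff (x / k i) / q) - |c i| * (log x / 2 + 2.7) ≤
      c i * ∑ m ∈ (Icc 1 (x / k i)).filter (fun m => (k i * m) % q = r % q), log (m : ℝ) := by
    intro i
    have hki := hk i
    have hx1 : 1 ≤ x := hki.trans (hkx i)
    have hk0 : (0 : ℝ) < k i := by exact_mod_cast hki
    have hkR : (1 : ℝ) ≤ k i := by exact_mod_cast hki
    have hxk : (k i : ℝ) ≤ x := by exact_mod_cast hkx i
    obtain ⟨l, hl1, hlq, hl⟩ : ∃ l, 1 ≤ l ∧ l ≤ q ∧ (k i * l) % q = r % q := by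
      obtain ⟨u, hu⟩ := Nat.exists_mul_mod_eq_of_coprime (r) (hkq i) (by omega)
      rcases Nat.eq_zero_or_pos (u % q) with h0 | h0
      · refine ⟨q, hq, le_refl _, ?_⟩
        have hd : q ∣ u := Nat.dvd_of_mod_eq_zero h0
        rw [Nat.mul_mod_left, ← hu.2, Nat.mod_eq_zero_of_dvd (hd.mul_left _)]
      · refine ⟨u % q, h0, (Nat.mod_lt _ (by omega)).le, ?_⟩
        rw [Nat.mul_mod, Nat.mod_mod, ← Nat.mul_mod]; exact hu.2
    have hset : (Icc 1 (x / k i)).filter (fun m => (k i * m) % q = r % q) =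
        (Icc 1 ⌊(x / k i : ℝ)⌋₊).filter (fun m => m % q = l % q) := by
      rw [Nat.floor_div_natCast, Nat.floor_natCast]
      ext m
      simp only [mem_filter]
      apply and_congr_right
      intro _
      rw [← hl]
      exact ⟨fun hh => Nat.ModEq.cancel_left_of_coprime (by rw [Nat.gcd_comm]; exact hkq i) hh,
        fun hh => Nat.ModEq.mul_left (k i) hh⟩
    rw [hset]
    have hz : (1 : ℝ) ≤ x / k i := by rw [le_div_iff₀ hk0]; linarith
    have hT := T_bound q l hl1 hlq hq10 (x / k i) hz
    set T := ∑ m ∈ (Icc 1 ⌊(x / k i : ℝ)⌋₊).filter (fun m => m % q = l % q), log (m : ℝ) with hTdef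
    have hlog : log (x / k i : ℝ) ≤ log x := by
      apply Real.log_le_log (by linarith)
      exact div_le_self (by linarith) hkR
    have e : c i * (ff (x / k i) / q) - c i * T = - (c i / q) * (q * T - ff (x / k i)) := by
      field_simp; ring
    have h2 : c i * (ff (x / k i) / q) - c i * T ≤ |c i| * (log x / 2 + 2.7) := by
      rw [e]
      refine (le_abs_self _).trans ?_
      rw [abs_mul, abs_neg, abs_div, abs_of_pos hq0, div_mul_eq_mul_div, mul_div_assoc]
      apply mul_le_mul_of_nonneg_left _ (abs_nonneg _)
      rw [div_le_iff₀ hq0]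
      refine hT.trans ?_
      nlinarith
    linarith
  have hs := Finset.sum_le_sum (fun i (_ : i ∈ Finset.univ) => key i)
  refine le_trans (le_of_eq ?_) hs
  rw [Finset.sum_sub_distrib, ← Finset.sum_mul]
  congr 1
  have e : ∀ i, c i * (ff (x / k i) / q) = (x * log x - x) / q * (c i / k i) - x / q * (c i * log (k i) / k i) := by
    intro i
    have hki := hk i
    have hx1 : 1 ≤ x := hki.trans (hkx i)
    have hx0 : (x : ℝ) ≠ 0 := by exact_mod_cast (by omega : x ≠ 0)
    have hk0 : (k i : ℝ) ≠ 0 := by exact_mod_cast (by omega : k i ≠ 0)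
    unfold ff
    rw [Real.log_div hx0 hk0]
    field_simp
    ring
  simp_rw [e]
  rw [Finset.sum_sub_distrib, ← Finset.mul_sum, ← Finset.mul_sum, hsum]
  ring

end PS

namespace PS
def force {β : Type} (g : ℕ) (f : ℕ → β) : β := Nat.rec (f 0) (fun m _ => f (m + 1)) g

def dbl (sh g : ℕ) : ℕ := g + g <<< sh

def geo (w s : ℕ) : ℕ → ℕ
  | 0 => 1
  | t + 1 => force (geo w s t) (dbl (w * s * 2 ^ t))

def combs (w y : ℕ) : List (ℕ × ℕ) → ℕ
  | [] => 0
  | e :: l => e.2 * (geo w e.1 (y - Nat.log2 e.1) <<< (w * e.1)) + combs w y l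

def monos (w : ℕ) : List (ℕ × ℕ) → ℕ
  | [] => 0
  | e :: l => e.2 * 2 ^ (w * e.1) + monos w l

def sideL (w y q : ℕ) (P A1 : List (ℕ × ℕ)) : ℕ :=
  geo w q (y - Nat.log2 q) * (combs w y P + monos w A1)

def sideR (w y q : ℕ) (N A2 H : List (ℕ × ℕ)) : ℕ :=
  geo w q (y - Nat.log2 q) * (combs w y N + monos w A2) + geo w 1 y * monos w H

def gm (w s x : ℕ) : ℕ → ℕ
  | 0 => x
  | t + 1 => force (gm w s x t) (dbl (w * s * 2 ^ t))

def monosF (w : ℕ) : List (ℕ × ℕ) → ℕ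
  | [] => 0
  | e :: l => e.2 <<< (w * e.1) + monosF w l

def sideLF (w y q : ℕ) (P A1 : List (ℕ × ℕ)) : ℕ :=
  gm w q (combs w y P + monosF w A1) (y - Nat.log2 q)

def sideRF (w y q : ℕ) (N A2 H : List (ℕ × ℕ)) : ℕ :=
  gm w q (combs w y N + monosF w A2) (y - Nat.log2 q) + gm w 1 (monosF w H) y

def packCheckF (w y q : ℕ) (P N A1 A2 H : List (ℕ × ℕ)) : Bool :=
  Nat.blt (sideLF 0 y q P A1) (2 ^ (w - 1)) &&
  (Nat.blt (sideRF 0 y q N A2 H) (2 ^ (w - 1)) &&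
  force (1 <<< (w * 2 ^ y) - 1) (fun full =>
  force (geo w 1 y <<< (w - 1)) (fun mask =>
    Nat.beq (Nat.land (mask + (sideRF w y q N A2 H &&& full) - (sideLF w y q P A1 &&& full)) mask) mask)))

def packCheck (w y q : ℕ) (P N A1 A2 H : List (ℕ × ℕ)) : Bool :=
  Nat.blt (sideL 0 y q P A1) (2 ^ (w - 1)) &&
  (Nat.blt (sideR 0 y q N A2 H) (2 ^ (w - 1)) &&
  force (geo w 1 y <<< (w - 1)) (fun mask =>
    Nat.beq (Nat.land (mask + sideR w y q N A2 H % 2 ^ (w * 2 ^ y) - sideL w y q P A1 % 2 ^ (w * 2 ^ y)) mask) mask))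
end PS

namespace PS
open Polynomial Finset

lemma force_eq {β : Type} (g : ℕ) (f : ℕ → β) : force g f = f g := by
  cases g <;> rfl

lemma gm_eq (w s x t : ℕ) : gm w s x t = geo w s t * x := by
  induction t with
  | zero => simp [gm, geo]
  | succ t ih => rw [gm, geo, force_eq, force_eq, ih, dbl, dbl, Nat.shiftLeft_eq, Nat.shiftLeft_eq]; ring

lemma monosF_eq (w : ℕ) (l : List (ℕ × ℕ)) : monosF w l = monos w l := by
  induction l with
  | nil => rfl
  | cons e l ih => rw [monosF, monos, ih, Nat.shiftLeft_eq]

lemma packCheckF_eq : packCheckF = packCheck := by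
  funext w y q P N A1 A2 H
  simp only [packCheckF, packCheck, sideLF, sideRF, sideL, sideR, gm_eq, monosF_eq, force_eq,
    Nat.shiftLeft_eq, one_mul, Nat.and_two_pow_sub_one_eq_mod]

noncomputable def geoP (s t : ℕ) : ℕ[X] := ∑ i ∈ range (2 ^ t), X ^ (s * i)

lemma geoP_succ (s t : ℕ) : geoP s (t + 1) = geoP s t + X ^ (s * 2 ^ t) * geoP s t := by
  unfold geoP
  rw [pow_succ, mul_two, Finset.sum_range_add, Finset.mul_sum]
  congr 1
  apply Finset.sum_congr rfl
  intro i _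
  rw [← pow_add, mul_add]

lemma geo_eval (w s t : ℕ) : geo w s t = (geoP s t).eval (2 ^ w) := by
  induction t with
  | zero => simp [geo, geoP]
  | succ t ih =>
    rw [geo, force_eq, dbl, Nat.shiftLeft_eq, ih, geoP_succ]
    simp only [eval_add, eval_mul, eval_pow, eval_X]
    rw [← pow_mul, mul_assoc]; ring

noncomputable def combsP (y : ℕ) (l : List (ℕ × ℕ)) : ℕ[X] :=
  (l.map (fun e => C e.2 * (X ^ e.1 * geoP e.1 (y - Nat.log2 e.1)))).sum

noncomputable def monosP (l : List (ℕ × ℕ)) : ℕ[X] :=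
  (l.map (fun e => C e.2 * X ^ e.1)).sum

lemma combs_eval (w y : ℕ) (l : List (ℕ × ℕ)) : combs w y l = (combsP y l).eval (2 ^ w) := by
  induction l with
  | nil => simp [combs, combsP]
  | cons e l ih =>
    have h1 : combsP y (e :: l) = C e.2 * (X ^ e.1 * geoP e.1 (y - Nat.log2 e.1)) + combsP y l := by
      simp [combsP]
    rw [combs, ih, h1, Nat.shiftLeft_eq, geo_eval]
    simp only [eval_add, eval_mul, eval_pow, eval_X, eval_C]
    rw [← pow_mul]; ring

lemma monos_eval (w : ℕ) (l : List (ℕ × ℕ)) : monos w l = (monosP l).eval (2 ^ w) := by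
  induction l with
  | nil => simp [monos, monosP]
  | cons e l ih =>
    have h1 : monosP (e :: l) = C e.2 * X ^ e.1 + monosP l := by
      simp [monosP]
    rw [monos, ih, h1]
    simp only [eval_add, eval_mul, eval_pow, eval_X, eval_C]
    rw [← pow_mul]

noncomputable def LP (y q : ℕ) (P A1 : List (ℕ × ℕ)) : ℕ[X] :=
  geoP q (y - Nat.log2 q) * (combsP y P + monosP A1)
noncomputable def RP (y q : ℕ) (N A2 H : List (ℕ × ℕ)) : ℕ[X] :=
  geoP q (y - Nat.log2 q) * (combsP y N + monosP A2) + geoP 1 y * monosP H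

lemma sideL_eval (w y q : ℕ) (P A1) : sideL w y q P A1 = (LP y q P A1).eval (2 ^ w) := by
  simp [sideL, LP, geo_eval, combs_eval, monos_eval]
lemma sideR_eval (w y q : ℕ) (N A2 H) : sideR w y q N A2 H = (RP y q N A2 H).eval (2 ^ w) := by
  simp [sideR, RP, geo_eval, combs_eval, monos_eval]

lemma coeff_le_eval_one (p : ℕ[X]) (n : ℕ) : p.coeff n ≤ p.eval 1 := by
  by_cases h : n ≤ p.natDegree
  · rw [eval_eq_sum_range]
    simp only [one_pow, mul_one]
    exact Finset.single_le_sum (f := fun i => p.coeff i) (fun _ _ => Nat.zero_le _) (by simp; omega)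
  · rw [coeff_eq_zero_of_natDegree_lt (by omega)]; exact Nat.zero_le _

lemma digits_lt (w : ℕ) (d : ℕ → ℕ) (hd : ∀ n, d n < 2 ^ w) (m : ℕ) :
    ∑ n ∈ range m, d n * 2 ^ (w * n) < 2 ^ (w * m) := by
  induction m with
  | zero => simp
  | succ m ih =>
    rw [Finset.sum_range_succ]
    have h1 : d m + 1 ≤ 2 ^ w := hd m
    have h2 : (d m + 1) * 2 ^ (w * m) ≤ 2 ^ w * 2 ^ (w * m) := Nat.mul_le_mul_right _ h1
    rw [mul_add, mul_one, pow_add]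
    nlinarith

lemma eval_mod (w : ℕ) (p : ℕ[X]) (hp : ∀ n, p.coeff n < 2 ^ w) (m : ℕ) :
    p.eval (2 ^ w) % 2 ^ (w * m) = ∑ n ∈ range m, p.coeff n * 2 ^ (w * n) := by
  have h : p.eval (2 ^ w) = ∑ n ∈ range (m + (p.natDegree + 1)), p.coeff n * (2 ^ w) ^ n :=
    eval_eq_sum_range' (by omega) _
  rw [h, Finset.sum_range_add]
  have h2 : ∑ x ∈ range (p.natDegree + 1), p.coeff (m + x) * (2 ^ w) ^ (m + x)
      = 2 ^ (w * m) * ∑ x ∈ range (p.natDegree + 1), p.coeff (m + x) * (2 ^ w) ^ x := by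
    rw [Finset.mul_sum]; apply Finset.sum_congr rfl; intro i _; rw [pow_add, pow_mul]; ring
  simp only [← pow_mul] at h2 ⊢
  rw [h2, Nat.add_mul_mod_self_left, Nat.mod_eq_of_lt (digits_lt w _ hp m)]

lemma digit_testBit (w : ℕ) (hw : 1 ≤ w) (d : ℕ → ℕ) (hd : ∀ n, d n < 2 ^ w) (m n : ℕ) (hn : n < m) :
    (∑ n ∈ range m, d n * 2 ^ (w * n)).testBit (w * n + (w - 1)) = (d n).testBit (w - 1) := by
  induction m with
  | zero => omega
  | succ m ih =>
    rw [Finset.sum_range_succ, add_comm, mul_comm (d m), Nat.testBit_two_pow_mul_add _ (digits_lt w d hd m)]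
    rcases Nat.lt_succ_iff_lt_or_eq.1 hn with h | h
    · rw [if_pos, ih h]
      calc w * n + (w - 1) < w * n + w := by omega
        _ = w * (n + 1) := by ring
        _ ≤ w * m := Nat.mul_le_mul_left _ h
    · subst h
      rw [if_neg (by omega)]; congr 1; omega

lemma geo_testBit (w t n : ℕ) (hw : 1 ≤ w) (hn : n < 2 ^ t) :
    (geo w 1 t <<< (w - 1)).testBit (w * n + (w - 1)) = true := by
  have h : geo w 1 t <<< (w - 1) = ∑ n ∈ range (2 ^ t), 2 ^ (w - 1) * 2 ^ (w * n) := by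
    rw [Nat.shiftLeft_eq, geo_eval, geoP, eval_finsetSum, Finset.sum_mul]
    apply Finset.sum_congr rfl; intro i _
    simp only [eval_pow, eval_X, one_mul]; rw [← pow_mul, mul_comm]
  rw [h, digit_testBit w hw (fun _ => 2 ^ (w - 1)) (fun _ => Nat.pow_lt_pow_right (by norm_num) (by omega)) _ _ hn]
  simp

theorem packCheck_sound (w y q : ℕ) (hw : 1 ≤ w) (P N A1 A2 H : List (ℕ × ℕ))
    (h : packCheck w y q P N A1 A2 H = true) (n : ℕ) (hn : n < 2 ^ y) :
    (LP y q P A1).coeff n ≤ (RP y q N A2 H).coeff n := by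
  simp only [packCheck, Bool.and_eq_true, Nat.blt_eq, force_eq, Nat.beq_eq] at h
  obtain ⟨h1, h2, h3⟩ := h
  rw [sideL_eval, pow_zero] at h1
  rw [sideR_eval, pow_zero] at h2
  set p := LP y q P A1
  set r := RP y q N A2 H
  have hp : ∀ n, p.coeff n < 2 ^ (w - 1) := fun n => (coeff_le_eval_one p n).trans_lt h1
  have hr : ∀ n, r.coeff n < 2 ^ (w - 1) := fun n => (coeff_le_eval_one r n).trans_lt h2
  have hww : 2 ^ w = 2 ^ (w - 1) + 2 ^ (w - 1) := by
    rw [← mul_two, ← pow_succ]; congr 1; omega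
  rw [sideL_eval, sideR_eval, eval_mod w p (fun n => by have := hp n; omega),
    eval_mod w r (fun n => by have := hr n; omega)] at h3
  have hgeo : geo w 1 y <<< (w - 1) = ∑ n ∈ range (2 ^ y), 2 ^ (w - 1) * 2 ^ (w * n) := by
    rw [Nat.shiftLeft_eq, geo_eval, geoP, eval_finsetSum, Finset.sum_mul]
    apply Finset.sum_congr rfl; intro i _
    simp only [eval_pow, eval_X, one_mul]; rw [← pow_mul, mul_comm]
  have hZ : geo w 1 y <<< (w - 1) + ∑ n ∈ range (2 ^ y), r.coeff n * 2 ^ (w * n)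
      - ∑ n ∈ range (2 ^ y), p.coeff n * 2 ^ (w * n) =
      ∑ n ∈ range (2 ^ y), (2 ^ (w - 1) + r.coeff n - p.coeff n) * 2 ^ (w * n) := by
    rw [hgeo]
    apply Nat.sub_eq_of_eq_add
    rw [← Finset.sum_add_distrib, ← Finset.sum_add_distrib]
    apply Finset.sum_congr rfl
    intro i _
    rw [← add_mul, ← add_mul]; congr 1
    have := hp i; omega
  rw [hZ] at h3
  have hb := geo_testBit w y n hw hn
  have h4 := congrArg (fun z => Nat.testBit z (w * n + (w - 1))) h3
  change Nat.testBit (_ &&& _) _ = _ at h4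
  rw [Nat.testBit_and, hb, Bool.and_true,
    digit_testBit w hw (fun n => 2 ^ (w - 1) + r.coeff n - p.coeff n)
      (fun n => by have := hp n; have := hr n; omega) _ _ hn] at h4
  have h5 := Nat.ge_two_pow_of_testBit h4
  have := hp n
  omega

/-! coefficients -/
lemma coeff_geo_mul (q t n : ℕ) (f : ℕ[X]) :
    (geoP q t * f).coeff n = ∑ i ∈ range (2 ^ t), if q * i ≤ n then f.coeff (n - q * i) else 0 := by
  unfold geoP
  rw [Finset.sum_mul, finsetSum_coeff]
  apply Finset.sum_congr rfl
  intro i _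
  rw [coeff_X_pow_mul']

lemma range_enough (k y n : ℕ) (hk : 1 ≤ k) (hn : n < 2 ^ y) : n / k < 2 ^ (y - Nat.log2 k) := by
  rw [Nat.div_lt_iff_lt_mul (by omega)]
  have h1 : 2 ^ Nat.log2 k ≤ k := Nat.log2_self_le (by omega)
  calc n < 2 ^ y := hn
    _ ≤ 2 ^ (y - Nat.log2 k + Nat.log2 k) := Nat.pow_le_pow_right (by norm_num) (by omega)
    _ = 2 ^ (y - Nat.log2 k) * 2 ^ Nat.log2 k := by rw [pow_add]
    _ ≤ _ := Nat.mul_le_mul_left _ h1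

lemma coeff_comb (q y n k : ℕ) (hq : 1 ≤ q) (hk : 1 ≤ k) (hn : n < 2 ^ y) :
    (geoP q (y - Nat.log2 q) * (X ^ k * geoP k (y - Nat.log2 k))).coeff n = cnt q k n n := by
  rw [coeff_geo_mul]
  simp only [geoP, Finset.mul_sum, ← pow_add, finsetSum_coeff, coeff_X_pow]
  rw [cnt, Finset.card_eq_sum_ones, Finset.sum_filter]
  have h1 : ∀ i ∈ range (2 ^ (y - Nat.log2 q)), (if q * i ≤ n then ∑ j ∈ range (2 ^ (y - Nat.log2 k)), (if n - q * i = k + k * j then 1 else 0) else 0) = (if q * i < n ∧ k ∣ n - q * i then 1 else 0) := by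
    intro i _
    by_cases hi : q * i < n ∧ k ∣ n - q * i
    · rw [if_pos hi, if_pos hi.1.le]
      obtain ⟨h1, m, hm⟩ := hi
      have hm0 : 0 < m := Nat.pos_of_ne_zero (by rintro rfl; omega)
      obtain ⟨m', rfl⟩ : ∃ m', m = m' + 1 := ⟨m - 1, by omega⟩
      rw [Finset.sum_eq_single m']
      · rw [if_pos]; rw [hm]; ring
      · intro j _ hj
        rw [if_neg]
        intro h
        rw [hm] at h
        have : k * (m' + 1) = k * (j + 1) := by rw [h]; ring
        have := Nat.eq_of_mul_eq_mul_left hk this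
        omega
      · intro hh
        exfalso; apply hh
        rw [mem_range]
        refine lt_of_le_of_lt ?_ (range_enough k y n hk hn)
        rw [Nat.le_div_iff_mul_le (by omega)]
        calc m' * k ≤ k * (m' + 1) := by nlinarith
          _ = n - q * i := hm.symm
          _ ≤ n := Nat.sub_le _ _
    · rw [if_neg hi]
      split_ifs with h2
      · apply Finset.sum_eq_zero
        intro j _
        rw [if_neg]
        intro h
        apply hi
        constructor
        · omega
        · rw [h]; exact ⟨1 + j, by ring⟩
      · rfl
  rw [Finset.sum_congr rfl h1]
  rw [← Finset.sum_filter, ← Finset.sum_filter, ← Finset.card_eq_sum_ones, ← Finset.card_eq_sum_ones]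
  apply Finset.card_bij (fun i _ => n - q * i)
  · intro i hi
    simp only [mem_filter, mem_range, mem_Icc] at hi ⊢
    refine ⟨⟨by omega, Nat.sub_le _ _⟩, hi.2.2, ?_⟩
    have : (n - q * i) + q * i = n := by omega
    conv_rhs => rw [← this]
    rw [Nat.add_mul_mod_self_left]
  · intro i hi j hj h
    simp only [mem_filter] at hi hj
    have : q * i = q * j := by omega
    exact Nat.eq_of_mul_eq_mul_left hq this
  · intro m hm
    simp only [mem_filter, mem_Icc] at hm
    obtain ⟨⟨hm1, hm2⟩, hm3, hm4⟩ := hm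
    obtain ⟨i, hi⟩ := (Nat.modEq_iff_dvd' hm2).1 hm4
    refine ⟨i, ?_, by omega⟩
    simp only [mem_filter, mem_range]
    refine ⟨?_, by omega, by rw [show n - q * i = m by omega]; exact hm3⟩
    refine lt_of_le_of_lt ?_ (range_enough q y n hq hn)
    rw [Nat.le_div_iff_mul_le (by omega), mul_comm]; omega

lemma coeff_mono (q y n e : ℕ) (hq : 1 ≤ q) (hn : n < 2 ^ y) :
    (geoP q (y - Nat.log2 q) * X ^ e).coeff n = if e ≤ n ∧ n % q = e % q then 1 else 0 := by
  rw [coeff_geo_mul]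
  simp only [coeff_X_pow]
  split_ifs with h
  · obtain ⟨i, hi⟩ := (Nat.modEq_iff_dvd' h.1).1 (Nat.ModEq.symm h.2)
    rw [Finset.sum_eq_single i]
    · rw [if_pos (by omega), if_pos (by omega)]
    · intro j _ hj
      split_ifs with h1 h2
      · exfalso; apply hj
        have : q * j = q * i := by omega
        exact Nat.eq_of_mul_eq_mul_left hq this
      · rfl
      · rfl
    · intro hh
      exfalso; apply hh; rw [mem_range]
      refine lt_of_le_of_lt ?_ (range_enough q y n hq hn)
      rw [Nat.le_div_iff_mul_le (by omega), mul_comm]; omega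
  · apply Finset.sum_eq_zero
    intro i _
    split_ifs with h1 h2
    · exfalso; apply h
      refine ⟨by omega, ?_⟩
      rw [show n = e + q * i by omega, Nat.add_mul_mod_self_left]
    · rfl
    · rfl

lemma coeff_combsP (q y n : ℕ) (hq : 1 ≤ q) (hn : n < 2 ^ y) (l : List (ℕ × ℕ)) (hl : ∀ e ∈ l, 1 ≤ e.1) :
    (geoP q (y - Nat.log2 q) * combsP y l).coeff n = (l.map (fun e => e.2 * cnt q e.1 n n)).sum := by
  induction l with
  | nil => simp [combsP]
  | cons e l ih =>
    rw [combsP, List.map_cons, List.sum_cons, mul_add, coeff_add, List.map_cons, List.sum_cons,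
      ← combsP, ih (fun e he => hl e (List.mem_cons_of_mem _ he)), mul_left_comm, coeff_C_mul,
      coeff_comb q y n e.1 hq (hl e List.mem_cons_self) hn]

lemma coeff_monosP (q y n : ℕ) (hq : 1 ≤ q) (hn : n < 2 ^ y) (l : List (ℕ × ℕ)) :
    (geoP q (y - Nat.log2 q) * monosP l).coeff n = (l.map (fun e => if e.1 ≤ n ∧ n % q = e.1 % q then e.2 else 0)).sum := by
  induction l with
  | nil => simp [monosP]
  | cons e l ih =>
    rw [monosP, List.map_cons, List.sum_cons, mul_add, coeff_add, List.map_cons, List.sum_cons,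
      ← monosP, ih, mul_left_comm, coeff_C_mul, coeff_mono q y n e.1 hq hn]
    simp

theorem pack_final (w y q : ℕ) (hw : 1 ≤ w) (hq : 1 ≤ q) (P N A1 A2 H : List (ℕ × ℕ))
    (hP : ∀ e ∈ P, 1 ≤ e.1) (hN : ∀ e ∈ N, 1 ≤ e.1)
    (h : packCheck w y q P N A1 A2 H = true) (n : ℕ) (hn : n < 2 ^ y) :
    (P.map (fun e => e.2 * cnt q e.1 n n)).sum +
      (A1.map (fun e => if e.1 ≤ n ∧ n % q = e.1 % q then e.2 else 0)).sum ≤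
    (N.map (fun e => e.2 * cnt q e.1 n n)).sum +
      (A2.map (fun e => if e.1 ≤ n ∧ n % q = e.1 % q then e.2 else 0)).sum +
      (H.map (fun e => if e.1 ≤ n then e.2 else 0)).sum := by
  have := packCheck_sound w y q hw P N A1 A2 H h n hn
  have h1 : geoP 1 y = geoP 1 (y - Nat.log2 1) := by simp [Nat.log2_def]
  rw [LP, RP, h1, mul_add, mul_add, coeff_add, coeff_add, coeff_add, coeff_combsP q y n hq hn P hP,
    coeff_combsP q y n hq hn N hN, coeff_monosP q y n hq hn, coeff_monosP q y n hq hn,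
    coeff_monosP 1 y n le_rfl hn] at this
  simpa [Nat.mod_one] using this
end PS

namespace PS
open Finset Real

structure Cert where
  q : ℕ
  s : Bool
  D : ℕ
  y : ℕ
  w : ℕ
  K : ℕ
  P : List (ℕ × ℕ)
  N : List (ℕ × ℕ)
  H : List (ℕ × ℕ)
  T : ℕ
  Z1 : ℕ
  Z2 : ℕ
  Z3 : ℕ
  B : ℕ

def nsum (f : ℕ → ℕ) : List (ℕ × ℕ) → ℕ
  | [] => 0
  | e :: l => e.2 * f e.1 + nsum f l

def LL : ℕ := 10 ^ 18
def MM : ℕ := 16384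
def lgA (k : ℕ) : ℕ → ℕ
  | 0 => Nat.log2 k
  | t + 1 => force (lgA k t) (fun e => cond (Nat.ble (2 ^ (2 * e + 1)) (k ^ 2 ^ (t + 1))) (2 * e + 1) (2 * e))
def lg (k : ℕ) : ℕ := lgA k 14

def bigs (q : ℕ) : List (ℕ × ℕ) :=
  ((List.range' 1 q).filter (fun e => Nat.gcd e q != 1)).map (fun e => (e, 10 ^ 6))

def Cert.A1 (c : Cert) : List (ℕ × ℕ) := if c.s then [] else [(1, c.D)]
def Cert.A2 (c : Cert) : List (ℕ × ℕ) := bigs c.q ++ if c.s then [(1, c.D)] else []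
def Cert.H' (c : Cert) : List (ℕ × ℕ) := (2 ^ c.y, c.T) :: c.H

def kOK (K q k : ℕ) : Bool := Nat.ble 1 k && (Nat.ble k K && Nat.beq (Nat.gcd k q) 1)

def Cert.ok (c : Cert) : Bool :=
  c.P.all (fun e => kOK c.K c.q e.1) && (c.N.all (fun e => kOK c.K c.q e.1) && (
  c.H.all (fun e => Nat.ble 1 e.1 && Nat.ble e.1 (2 ^ c.y)) && (
  Nat.ble (nsum (fun k => LL / k + 1) c.N) (nsum (fun k => LL / k) c.P) && (
  Nat.ble (nsum (fun k => LL / k + 1) c.P) (nsum (fun k => LL / k) c.N + LL) && (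
  Nat.ble (c.B + c.D) (nsum (fun _ => 1) c.H + c.T) && (
  Nat.ble (nsum (fun _ => 1) c.P + nsum (fun _ => 1) c.N + 1) c.B && (
  Nat.ble (nsum (fun k => (lg k + 1) * LL / k + 1) c.P + c.Z1) (nsum (fun k => lg k * LL / k) c.N + c.Z2) && (
  Nat.ble (nsum (fun k => LL / k + 1) c.H') c.Z3 &&
  packCheckF c.w c.y c.q c.P c.N c.A1 c.A2 c.H))))))))

noncomputable def rsum (g : ℕ → ℝ) (l : List (ℕ × ℕ)) : ℝ := (l.map (fun e => (e.2 : ℝ) * g e.1)).sum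

lemma rsum_cons (g : ℕ → ℝ) (e : ℕ × ℕ) (l : List (ℕ × ℕ)) : rsum g (e :: l) = e.2 * g e.1 + rsum g l := by
  simp [rsum]

lemma rsum_le_nsum (g : ℕ → ℝ) (f : ℕ → ℕ) (l : List (ℕ × ℕ)) (h : ∀ e ∈ l, g e.1 ≤ f e.1) :
    rsum g l ≤ nsum f l := by
  induction l with
  | nil => simp [rsum, nsum]
  | cons e l ih =>
    rw [rsum_cons, nsum]; push_cast
    exact add_le_add (mul_le_mul_of_nonneg_left (h e List.mem_cons_self) (Nat.cast_nonneg _))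
      (ih fun e he => h e (List.mem_cons_of_mem _ he))

lemma nsum_le_rsum (g : ℕ → ℝ) (f : ℕ → ℕ) (l : List (ℕ × ℕ)) (h : ∀ e ∈ l, (f e.1 : ℝ) ≤ g e.1) :
    (nsum f l : ℝ) ≤ rsum g l := by
  induction l with
  | nil => simp [rsum, nsum]
  | cons e l ih =>
    rw [rsum_cons, nsum]; push_cast
    exact add_le_add (mul_le_mul_of_nonneg_left (h e List.mem_cons_self) (Nat.cast_nonneg _))
      (ih fun e he => h e (List.mem_cons_of_mem _ he))

lemma rsum_le_rsum (g f : ℕ → ℝ) (l : List (ℕ × ℕ)) (h : ∀ e ∈ l, g e.1 ≤ f e.1) :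
    rsum g l ≤ rsum f l := by
  induction l with
  | nil => simp [rsum]
  | cons e l ih =>
    rw [rsum_cons, rsum_cons]
    exact add_le_add (mul_le_mul_of_nonneg_left (h e List.mem_cons_self) (Nat.cast_nonneg _))
      (ih fun e he => h e (List.mem_cons_of_mem _ he))

lemma rsum_mul (g : ℕ → ℝ) (t : ℝ) (l : List (ℕ × ℕ)) : rsum (fun k => g k * t) l = rsum g l * t := by
  induction l with
  | nil => simp [rsum]
  | cons e l ih => rw [rsum_cons, rsum_cons, ih]; ring

lemma rsum_add (f g : ℕ → ℝ) (l : List (ℕ × ℕ)) : rsum (fun k => f k + g k) l = rsum f l + rsum g l := by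
  induction l with
  | nil => simp [rsum]
  | cons e l ih => rw [rsum_cons, rsum_cons, rsum_cons, ih]; ring

lemma fin_rsum (g : ℕ → ℝ) (l : List (ℕ × ℕ)) : ∑ i : Fin l.length, ((l[i].2 : ℕ) : ℝ) * g l[i].1 = rsum g l := by
  exact Fin.sum_univ_fun_getElem l (fun e => (e.2 : ℝ) * g e.1)

lemma lgA_bounds (k : ℕ) (hk : 1 ≤ k) (t : ℕ) : 2 ^ lgA k t ≤ k ^ 2 ^ t ∧ k ^ 2 ^ t < 2 ^ (lgA k t + 1) := by
  induction t with
  | zero => simpa [lgA] using ⟨Nat.log2_self_le (by omega), Nat.lt_log2_self⟩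
  | succ t ih =>
    obtain ⟨h1, h2⟩ := ih
    rw [lgA, force_eq]
    have e1 : k ^ 2 ^ (t + 1) = k ^ 2 ^ t * k ^ 2 ^ t := by rw [pow_succ, mul_two, pow_add]
    generalize lgA k t = e at *
    have h3 : 2 ^ (2 * e) ≤ k ^ 2 ^ (t + 1) := by
      rw [e1, two_mul, pow_add]; exact Nat.mul_le_mul h1 h1
    have h4 : k ^ 2 ^ (t + 1) < 2 ^ (2 * e + 1 + 1) := by
      rw [e1, show 2 * e + 1 + 1 = (e + 1) + (e + 1) by ring, pow_add]; exact Nat.mul_lt_mul'' h2 h2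
    cases hb : Nat.ble (2 ^ (2 * e + 1)) (k ^ 2 ^ (t + 1)) with
    | true => exact ⟨by simpa using Nat.le_of_ble_eq_true hb, h4⟩
    | false =>
      refine ⟨h3, ?_⟩
      by_contra hc
      push Not at hc
      have := Nat.ble_eq_true_of_le hc
      simp [hb] at this

lemma lg_bounds (k : ℕ) (hk : 1 ≤ k) : (lg k : ℝ) * log 2 ≤ log k * MM ∧ log k * MM ≤ (lg k + 1) * log 2 := by
  have h1 : 2 ^ lg k ≤ k ^ MM := (lgA_bounds k hk 14).1
  have h2 : k ^ MM < 2 ^ (lg k + 1) := (lgA_bounds k hk 14).2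
  have h1' : ((2 : ℝ) ^ lg k) ≤ (k : ℝ) ^ MM := by exact_mod_cast h1
  have h2' : (k : ℝ) ^ MM ≤ (2 : ℝ) ^ (lg k + 1) := by exact_mod_cast h2.le
  have hk0 : (0 : ℝ) < k := by exact_mod_cast hk
  have l1 := log_le_log (by positivity) h1'
  have l2 := log_le_log (by positivity) h2'
  rw [log_pow, log_pow] at l1 l2
  push_cast at l2
  constructor <;> linarith

lemma nat_div_bounds (a k : ℕ) (hk : 1 ≤ k) : ((a / k : ℕ) : ℝ) ≤ (a : ℝ) / k ∧ (a : ℝ) / k ≤ ((a / k + 1 : ℕ) : ℝ) := by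
  refine ⟨Nat.cast_div_le, ?_⟩
  have hk0 : (0 : ℝ) < k := by exact_mod_cast hk
  rw [div_le_iff₀ hk0]
  have h := Nat.div_add_mod a k
  have h2 := Nat.mod_lt a hk
  have h3 : a ≤ (a / k + 1) * k := by rw [add_mul, mul_comm (a / k)]; omega
  exact_mod_cast h3

lemma cnt_bounds (q k n : ℕ) (hq : 1 ≤ q) (hk : 1 ≤ k) (h : Nat.Coprime k q) :
    (n : ℝ) / (k * q) - 1 ≤ cnt q k n n ∧ (cnt q k n n : ℝ) ≤ n / (k * q) + 1 := by
  obtain ⟨v, hv1, hv2⟩ := Nat.chineseRemainder h 0 n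
  have hset : cnt q k n n = #{x ∈ Ioc 0 n | x ≡ v [MOD k * q]} := by
    unfold cnt
    congr 1
    ext m
    simp only [mem_filter, mem_Icc, mem_Ioc]
    refine and_congr (by omega) ?_
    rw [← Nat.modEq_and_modEq_iff_modEq_mul h]
    refine and_congr ?_ ?_
    · rw [← Nat.modEq_zero_iff_dvd]
      exact ⟨fun h => h.trans hv1.symm, fun h => h.trans hv1⟩
    · exact ⟨fun h => Nat.ModEq.trans h hv2.symm, fun h => Nat.ModEq.trans h hv2⟩
  have hr : 0 < k * q := Nat.mul_pos hk hq
  have hc := Nat.Ioc_filter_modEq_card 0 n hr v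
  rw [← hset] at hc
  have hrq : (0 : ℚ) < ((k * q : ℕ) : ℚ) := by exact_mod_cast hr
  set A : ℚ := ((n : ℕ) - (v : ℚ)) / ((k * q : ℕ) : ℚ) with hA
  set A0 : ℚ := (((0 : ℕ) : ℚ) - (v : ℚ)) / ((k * q : ℕ) : ℚ) with hA0
  have hAA : A - A0 = n / ((k * q : ℕ) : ℚ) := by rw [hA, hA0]; push_cast; ring
  have hle : A0 ≤ A := by
    have : (0 : ℚ) ≤ n / ((k * q : ℕ) : ℚ) := by positivity
    linarith
  have hfl : ⌊A0⌋ ≤ ⌊A⌋ := Int.floor_le_floor hle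
  rw [max_eq_left (by linarith)] at hc
  have hcq : ((cnt q k n n : ℕ) : ℚ) = (⌊A⌋ : ℚ) - ⌊A0⌋ := by exact_mod_cast hc
  have f1 := Int.floor_le A
  have f2 := Int.lt_floor_add_one A
  have f3 := Int.floor_le A0
  have f4 := Int.lt_floor_add_one A0
  have g1 : (n : ℚ) / ((k * q : ℕ) : ℚ) - 1 ≤ cnt q k n n := by rw [hcq, ← hAA]; linarith
  have g2 : ((cnt q k n n : ℕ) : ℚ) ≤ (n : ℚ) / ((k * q : ℕ) : ℚ) + 1 := by rw [hcq, ← hAA]; linarith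
  have g1' : (((n : ℚ) / ((k * q : ℕ) : ℚ) - 1 : ℚ) : ℝ) ≤ ((cnt q k n n : ℚ) : ℝ) := by exact_mod_cast g1
  have g2' : ((cnt q k n n : ℚ) : ℝ) ≤ (((n : ℚ) / ((k * q : ℕ) : ℚ) + 1 : ℚ) : ℝ) := by exact_mod_cast g2
  push_cast at g1' g2'
  exact ⟨g1', g2'⟩

lemma bigs_zero (q n : ℕ) (hn : Nat.Coprime n q) (l : List (ℕ × ℕ)) (hl : ∀ e ∈ l, Nat.gcd e.1 q ≠ 1) :
    (l.map (fun e => if e.1 ≤ n ∧ n % q = e.1 % q then e.2 else 0)).sum = 0 := by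
  induction l with
  | nil => simp
  | cons e l ih =>
    rw [List.map_cons, List.sum_cons, ih (fun e he => hl e (List.mem_cons_of_mem _ he)), if_neg]
    rintro ⟨_, h⟩
    apply hl e List.mem_cons_self
    have h2 : n ≡ e.1 [MOD q] := h
    rw [← h2.gcd_eq]; exact hn

lemma cast_cnt_sum (q n : ℕ) (l : List (ℕ × ℕ)) :
    (((l.map (fun e => e.2 * cnt q e.1 n n)).sum : ℕ) : ℝ) = rsum (fun k => (cnt q k n n : ℝ)) l := by
  induction l with
  | nil => simp [rsum]
  | cons e l ih => rw [List.map_cons, List.sum_cons, rsum_cons]; push_cast; rw [← ih]; push_cast; rfl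

lemma cast_if_sum (n : ℕ) (l : List (ℕ × ℕ)) :
    (((l.map (fun e => if e.1 ≤ n then e.2 else 0)).sum : ℕ) : ℝ) = rsum (fun k => if k ≤ n then 1 else 0) l := by
  induction l with
  | nil => simp [rsum]
  | cons e l ih =>
    rw [List.map_cons, List.sum_cons, rsum_cons]; push_cast; rw [← ih]; push_cast
    congr 1
    split_ifs <;> simp

lemma bigs_prop (q : ℕ) : ∀ e ∈ bigs q, Nat.gcd e.1 q ≠ 1 := by
  intro e he
  unfold bigs at he
  simp only [List.mem_map, List.mem_filter] at he
  obtain ⟨a, ⟨_, h⟩, rfl⟩ := he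
  simpa using h

lemma Cert.cert_ineq (c : Cert) (hq : 1 ≤ c.q) (hw : 1 ≤ c.w)
    (hP : ∀ e ∈ c.P, 1 ≤ e.1 ∧ Nat.Coprime e.1 c.q) (hN : ∀ e ∈ c.N, 1 ≤ e.1 ∧ Nat.Coprime e.1 c.q)
    (δ : ℝ) (hδ : δ = rsum (fun k => 1 / (k : ℝ)) c.P - rsum (fun k => 1 / (k : ℝ)) c.N)
    (hδ0 : 0 ≤ δ) (hδ1 : δ ≤ 1)
    (hB : nsum (fun _ => 1) c.P + nsum (fun _ => 1) c.N + 1 ≤ c.B)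
    (hT : c.B + c.D ≤ nsum (fun _ => 1) c.H + c.T)
    (hH : ∀ e ∈ c.H, 1 ≤ e.1 ∧ e.1 ≤ 2 ^ c.y)
    (hp : packCheckF c.w c.y c.q c.P c.N c.A1 c.A2 c.H = true) (n : ℕ) (hn : 1 ≤ n) (hnq : Nat.Coprime n c.q) :
    rsum (fun k => (cnt c.q k n n : ℝ)) c.P - rsum (fun k => (cnt c.q k n n : ℝ)) c.N - δ * cnt c.q 1 n n ≤
      (if n % c.q = 1 % c.q then (if c.s then (c.D : ℝ) else -c.D) else 0) +
      rsum (fun k => if k ≤ n then 1 else 0) c.H' := by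
  have hδc : 0 ≤ δ * cnt c.q 1 n n := mul_nonneg hδ0 (Nat.cast_nonneg _)
  have hH' : rsum (fun k => if k ≤ n then 1 else 0) c.H' = (if 2 ^ c.y ≤ n then (c.T : ℝ) else 0) +
      rsum (fun k => if k ≤ n then 1 else 0) c.H := by
    rw [Cert.H', rsum_cons]; congr 1; split_ifs <;> simp
  rw [hH']
  by_cases hny : n < 2 ^ c.y
  · rw [if_neg (not_le.2 hny)]
    rw [packCheckF_eq] at hp
    have h := pack_final c.w c.y c.q hw hq c.P c.N c.A1 c.A2 c.H (fun e he => (hP e he).1)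
      (fun e he => (hN e he).1) hp n hny
    have hA2 : (c.A2.map (fun e => if e.1 ≤ n ∧ n % c.q = e.1 % c.q then e.2 else 0)).sum =
        if n % c.q = 1 % c.q then (if c.s then c.D else 0) else 0 := by
      rw [Cert.A2, List.map_append, List.sum_append, bigs_zero c.q n hnq _ (bigs_prop c.q)]
      cases c.s <;> simp [hn]
    have hA1 : (c.A1.map (fun e => if e.1 ≤ n ∧ n % c.q = e.1 % c.q then e.2 else 0)).sum =
        if n % c.q = 1 % c.q then (if c.s then 0 else c.D) else 0 := by
      rw [Cert.A1]
      cases c.s <;> simp [hn]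
    rw [hA2, hA1] at h
    have h' : (((c.P.map (fun e => e.2 * cnt c.q e.1 n n)).sum : ℕ) : ℝ) +
        ((if n % c.q = 1 % c.q then (if c.s then 0 else c.D) else 0 : ℕ) : ℝ) ≤
        (((c.N.map (fun e => e.2 * cnt c.q e.1 n n)).sum : ℕ) : ℝ) +
        ((if n % c.q = 1 % c.q then (if c.s then c.D else 0) else 0 : ℕ) : ℝ) +
        (((c.H.map (fun e => if e.1 ≤ n then e.2 else 0)).sum : ℕ) : ℝ) := by exact_mod_cast h
    rw [cast_cnt_sum, cast_cnt_sum, cast_if_sum] at h'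
    revert h'
    cases c.s <;> split_ifs <;> simp <;> intro h' <;> linarith
  · rw [if_pos (not_lt.1 hny)]
    push Not at hny
    have hq0 : (0 : ℝ) < c.q := by exact_mod_cast hq
    have e1 : rsum (fun k => (cnt c.q k n n : ℝ)) c.P ≤ rsum (fun k => 1 / (k : ℝ)) c.P * (n / c.q) + nsum (fun _ => 1) c.P := by
      calc _ ≤ rsum (fun k => 1 / (k : ℝ) * (n / c.q) + 1) c.P := by
            apply rsum_le_rsum
            intro e he
            have := (cnt_bounds c.q e.1 n hq (hP e he).1 (hP e he).2).2
            refine this.trans (le_of_eq ?_)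
            congr 1; rw [div_mul_div_comm, one_mul]
        _ = rsum (fun k => 1 / (k : ℝ)) c.P * (n / c.q) + rsum (fun _ => 1) c.P := by
            rw [rsum_add, rsum_mul]
        _ ≤ _ := by
            gcongr
            exact rsum_le_nsum _ _ _ (fun e _ => by simp)
    have e2 : rsum (fun k => 1 / (k : ℝ)) c.N * (n / c.q) - nsum (fun _ => 1) c.N ≤ rsum (fun k => (cnt c.q k n n : ℝ)) c.N := by
      have : rsum (fun k => 1 / (k : ℝ) * (n / c.q)) c.N ≤ rsum (fun k => (cnt c.q k n n : ℝ) + 1) c.N := by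
            apply rsum_le_rsum
            intro e he
            have := (cnt_bounds c.q e.1 n hq (hN e he).1 (hN e he).2).1
            have h2 : (n : ℝ) / (e.1 * c.q) = 1 / (e.1 : ℝ) * (n / c.q) := by rw [div_mul_div_comm, one_mul]
            rw [← h2]; linarith
      rw [rsum_add, rsum_mul] at this
      have h3 : rsum (fun _ => 1) c.N ≤ nsum (fun _ => 1) c.N := rsum_le_nsum _ _ _ (fun e _ => by simp)
      linarith
    have e3 : δ * (n / c.q) - 1 ≤ δ * cnt c.q 1 n n := by
      have := (cnt_bounds c.q 1 n hq le_rfl (Nat.coprime_one_left _)).1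
      rw [Nat.cast_one, one_mul] at this
      have := mul_le_mul_of_nonneg_left this hδ0
      linarith
    have e4 : ((nsum (fun _ => 1) c.H : ℕ) : ℝ) ≤ rsum (fun k => if k ≤ n then 1 else 0) c.H := by
      apply nsum_le_rsum
      intro e he
      rw [if_pos ((hH e he).2.trans hny)]; simp
    have hB' : ((nsum (fun _ => 1) c.P : ℕ) : ℝ) + (nsum (fun _ => 1) c.N : ℕ) + 1 ≤ c.B := by exact_mod_cast hB
    have hT' : (c.B : ℝ) + c.D ≤ (nsum (fun _ => 1) c.H : ℕ) + c.T := by exact_mod_cast hT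
    have hD : -(c.D : ℝ) ≤ (if n % c.q = 1 % c.q then (if c.s then (c.D : ℝ) else -c.D) else 0) := by
      have : (0 : ℝ) ≤ c.D := Nat.cast_nonneg _
      split_ifs <;> linarith
    have e5 : rsum (fun k => 1 / (k : ℝ)) c.P * (n / c.q) - rsum (fun k => 1 / (k : ℝ)) c.N * (n / c.q) = δ * (n / c.q) := by
      rw [hδ]; ring
    linarith

theorem Cert.sound (c : Cert) (h : c.ok = true) (hq : 1 ≤ c.q) (hq10 : c.q ≤ 10) (hw : 1 ≤ c.w)
    (r x : ℕ) (hr : Nat.Coprime r c.q) (hx1 : 1 ≤ x) (hx : c.K ≤ x)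
    (C : ℝ) (hC : ∀ n : ℕ, psiN n ≤ C * n) (hC0 : 0 ≤ C) :
    (((c.Z1 : ℝ) - c.Z2) * log 2 / (MM * LL * c.q) - C * (c.Z3 / LL)) * x - c.B * (log x / 2 + 2.7) ≤
      (if c.s then (c.D : ℝ) else -c.D) * psiq c.q r x := by
  unfold Cert.ok at h
  simp only [Bool.and_eq_true, Nat.ble_eq, List.all_eq_true, kOK, Nat.beq_eq] at h
  obtain ⟨hP, hN, hH, hd0, hd1, hT, hB, hL, hZ3, hp⟩ := h
  have hq0 : (0 : ℝ) < c.q := by exact_mod_cast hq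
  have hLL : (0 : ℝ) < LL := by norm_num [LL]
  have hMM : (0 : ℝ) < MM := by norm_num [MM]
  have hl2 : 0 < log 2 := log_pos (by norm_num)
  obtain ⟨δ, hδ⟩ : ∃ δ, δ = rsum (fun k => 1 / (k : ℝ)) c.P - rsum (fun k => 1 / (k : ℝ)) c.N := ⟨_, rfl⟩
  have up : ∀ l : List (ℕ × ℕ), (∀ e ∈ l, 1 ≤ e.1) → rsum (fun k => 1 / (k : ℝ)) l * LL ≤ nsum (fun k => LL / k + 1) l := by
    intro l hl
    rw [← rsum_mul]
    apply rsum_le_nsum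
    intro e he
    have := (nat_div_bounds LL e.1 (hl e he)).2
    rw [one_div_mul_eq_div]; exact this
  have lo : ∀ l : List (ℕ × ℕ), (∀ e ∈ l, 1 ≤ e.1) → nsum (fun k => LL / k) l ≤ rsum (fun k => 1 / (k : ℝ)) l * LL := by
    intro l hl
    rw [← rsum_mul]
    apply nsum_le_rsum
    intro e he
    have := (nat_div_bounds LL e.1 (hl e he)).1
    rw [one_div_mul_eq_div]; exact this
  have hP1 : ∀ e ∈ c.P, 1 ≤ e.1 := fun e he => (hP e he).1
  have hN1 : ∀ e ∈ c.N, 1 ≤ e.1 := fun e he => (hN e he).1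
  have hδ0 : 0 ≤ δ := by
    have h1 := up c.N hN1
    have h2 := lo c.P hP1
    have h3 : ((nsum (fun k => LL / k + 1) c.N : ℕ) : ℝ) ≤ (nsum (fun k => LL / k) c.P : ℕ) := by exact_mod_cast hd0
    have h4 : 0 ≤ δ * LL := by rw [hδ]; linarith
    exact nonneg_of_mul_nonneg_left h4 hLL
  have hδ1 : δ ≤ 1 := by
    have h1 := up c.P hP1
    have h2 := lo c.N hN1
    have h3 : ((nsum (fun k => LL / k + 1) c.P : ℕ) : ℝ) ≤ (nsum (fun k => LL / k) c.N : ℕ) + LL := by exact_mod_cast hd1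
    have h4 : δ * LL ≤ 1 * LL := by rw [hδ]; linarith
    exact le_of_mul_le_mul_right h4 hLL
  have hcert := c.cert_ineq hq hw (fun e he => ⟨(hP e he).1, (hP e he).2.2⟩) (fun e he => ⟨(hN e he).1, (hN e he).2.2⟩)
    δ hδ hδ0 hδ1 hB hT hH hp
  let kk : Fin c.P.length ⊕ (Fin c.N.length ⊕ Unit) → ℕ :=
    Sum.elim (fun i => c.P[i].1) (Sum.elim (fun i => c.N[i].1) (fun _ => 1))
  let cc : Fin c.P.length ⊕ (Fin c.N.length ⊕ Unit) → ℝ :=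
    Sum.elim (fun i => (c.P[i].2 : ℝ)) (Sum.elim (fun i => -(c.N[i].2 : ℝ)) (fun _ => -δ))
  have hsumg : ∀ g : ℕ → ℝ, ∑ i, cc i * g (kk i) = rsum g c.P - rsum g c.N - δ * g 1 := by
    intro g
    rw [Fintype.sum_sum_type, Fintype.sum_sum_type]
    simp only [kk, cc, Sum.elim_inl, Sum.elim_inr, Finset.univ_unique, Finset.sum_singleton, neg_mul,
      Finset.sum_neg_distrib]
    rw [fin_rsum, fin_rsum]; ring
  have hkP : ∀ i, kOK c.K c.q (kk i) = true ∨ kk i = 1 := by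
    rintro (i | i | i)
    · left; simp only [kk, Sum.elim_inl, kOK, Bool.and_eq_true, Nat.ble_eq, Nat.beq_eq]
      exact hP _ (List.getElem_mem _)
    · left; simp only [kk, Sum.elim_inl, Sum.elim_inr, kOK, Bool.and_eq_true, Nat.ble_eq, Nat.beq_eq]
      exact hN _ (List.getElem_mem _)
    · right; rfl
  simp only [kOK, Bool.and_eq_true, Nat.ble_eq, Nat.beq_eq] at hkP
  have hk1 : ∀ i, 1 ≤ kk i := fun i => by rcases hkP i with h | h <;> omega
  have hkx : ∀ i, kk i ≤ x := fun i => by rcases hkP i with h | h <;> omega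
  have hkq : ∀ i, Nat.Coprime (kk i) c.q := fun i => by
    rcases hkP i with h | h
    · exact h.2.2
    · rw [h]; exact Nat.coprime_one_left _
  have low := cert_lower c.q r x hq hq10 kk hk1 hkx hkq cc (by
    have := hsumg (fun k => 1 / (k : ℝ))
    simp only [mul_one_div] at this
    rw [this, hδ]; simp)
  have hH'1 : ∀ e ∈ c.H', 1 ≤ e.1 := by
    intro e he
    rcases List.mem_cons.1 he with h | h
    · rw [h]; exact Nat.one_le_two_pow
    · exact (hH e h).1
  have upp := cert_upper c.q r x hr kk hk1 cc (if c.s then (c.D : ℝ) else -c.D)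
    (fun i : Fin c.H'.length => c.H'[i].1) (fun i : Fin c.H'.length => (c.H'[i].2 : ℝ)) (fun _ => Nat.cast_nonneg _)
    (fun i => hH'1 _ (List.getElem_mem _)) C hC hC0 (by
      intro n hn hnq
      have h1 := hsumg (fun k => (cnt c.q k n n : ℝ))
      rw [h1]
      have h2 := fin_rsum (fun k => if k ≤ n then 1 else 0) c.H'
      simp only [mul_ite, mul_one, mul_zero] at h2
      rw [h2]
      exact hcert n hn hnq)
  have hHs : ∑ j : Fin c.H'.length, (c.H'[j].2 : ℝ) / c.H'[j].1 ≤ c.Z3 / LL := by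
    have h2 := fin_rsum (fun k => 1 / (k : ℝ)) c.H'
    simp only [mul_one_div] at h2
    rw [h2, le_div_iff₀ hLL]
    refine (up _ hH'1).trans ?_
    exact_mod_cast hZ3
  have hlogs : ∑ i, cc i * log (kk i) / kk i ≤ ((c.Z2 : ℝ) - c.Z1) * log 2 / (MM * LL) := by
    have h1 := hsumg (fun k => log k / k)
    simp only [← mul_div_assoc] at h1
    rw [h1, Nat.cast_one, log_one, mul_zero, zero_div, sub_zero, le_div_iff₀ (by positivity)]
    have u1 : rsum (fun k => log k / k * (MM * LL / log 2)) c.P ≤ nsum (fun k => (lg k + 1) * LL / k + 1) c.P := by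
      apply rsum_le_nsum
      intro e he
      have hb := (lg_bounds e.1 (hP1 e he)).2
      have hk0 : (0 : ℝ) < e.1 := by exact_mod_cast hP1 e he
      refine le_trans ?_ (nat_div_bounds _ e.1 (hP1 e he)).2
      rw [div_mul_div_comm, div_le_div_iff₀ (by positivity) (by positivity)]
      push_cast
      have := mul_le_mul_of_nonneg_right hb (show (0 : ℝ) ≤ LL * e.1 by positivity)
      nlinarith
    have u2 : nsum (fun k => lg k * LL / k) c.N ≤ rsum (fun k => log k / k * (MM * LL / log 2)) c.N := by
      apply nsum_le_rsum
      intro e he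
      have hb := (lg_bounds e.1 (hN1 e he)).1
      have hk0 : (0 : ℝ) < e.1 := by exact_mod_cast hN1 e he
      refine le_trans (nat_div_bounds _ e.1 (hN1 e he)).1 ?_
      rw [div_mul_div_comm, div_le_div_iff₀ (by positivity) (by positivity)]
      push_cast
      have := mul_le_mul_of_nonneg_right hb (show (0 : ℝ) ≤ LL * e.1 by positivity)
      nlinarith
    rw [rsum_mul] at u1 u2
    have u3 : ((nsum (fun k => (lg k + 1) * LL / k + 1) c.P : ℕ) : ℝ) + c.Z1 ≤ (nsum (fun k => lg k * LL / k) c.N : ℕ) + c.Z2 := by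
      exact_mod_cast hL
    have u4 : (rsum (fun k => log k / k) c.P - rsum (fun k => log k / k) c.N) * (MM * LL / log 2) ≤ c.Z2 - c.Z1 := by
      linarith
    rw [mul_div_assoc', div_le_iff₀ hl2] at u4
    linarith
  have habs : ∑ i, |cc i| ≤ c.B := by
    rw [Fintype.sum_sum_type, Fintype.sum_sum_type]
    simp only [cc, Sum.elim_inl, Sum.elim_inr, Finset.univ_unique, Finset.sum_singleton, abs_neg, Nat.abs_cast]
    have h1 := fin_rsum (fun _ => 1) c.P
    have h2 := fin_rsum (fun _ => 1) c.N
    simp only [mul_one] at h1 h2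
    rw [h1, h2, abs_of_nonneg hδ0]
    have h3 : rsum (fun _ => 1) c.P ≤ nsum (fun _ => 1) c.P := rsum_le_nsum _ _ _ (fun e _ => by simp)
    have h4 : rsum (fun _ => 1) c.N ≤ nsum (fun _ => 1) c.N := rsum_le_nsum _ _ _ (fun e _ => by simp)
    have hB' : ((nsum (fun _ => 1) c.P : ℕ) : ℝ) + (nsum (fun _ => 1) c.N : ℕ) + 1 ≤ c.B := by exact_mod_cast hB
    linarith
  have hx0 : (0 : ℝ) < x := by exact_mod_cast hx1
  have hlx : 0 ≤ log x / 2 + 2.7 := by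
    have := log_nonneg (show (1 : ℝ) ≤ x by exact_mod_cast hx1)
    linarith
  have m1 := mul_le_mul_of_nonneg_right habs hlx
  have m2 := mul_le_mul_of_nonneg_left hlogs (show (0 : ℝ) ≤ x / c.q by positivity)
  have m3 := mul_le_mul_of_nonneg_left hHs (show (0 : ℝ) ≤ C * x by positivity)
  have m4 : (x : ℝ) / c.q * (((c.Z2 : ℝ) - c.Z1) * log 2 / (MM * LL)) = - (((c.Z1 : ℝ) - c.Z2) * log 2 / (MM * LL * c.q)) * x := by
    field_simp; ring
  rw [m4] at m2
  have := low.trans upp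
  nlinarith
end PS

namespace PS
set_option maxRecDepth 100000
def c3 : Cert := ⟨3, true, 20, 15, 37, 59,
  [(1, 20), (10, 20), (14, 19), (22, 20), (26, 20), (34, 19), (35, 7), (44, 1), (46, 20), (56, 13)],
  [(2, 20), (5, 20), (7, 20), (11, 20), (13, 20), (17, 19), (19, 20), (23, 20), (28, 12), (29, 20), (31, 6), (37, 20), (43, 16), (47, 12), (52, 12), (53, 12), (55, 4), (58, 1), (59, 12)],
  [(31, 1), (43, 4), (59, 7), (73, 2), (179, 8), (197, 7), (229, 2), (599, 9), (1619, 8), (1699, 1), (4663, 9), (30739, 3)],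
  405, 688009077000226677723278, 0, 395224253222002163, 446⟩
theorem c3_ok : c3.ok = true := by decide +kernel
def c4 : Cert := ⟨4, true, 20, 15, 36, 59,
  [(1, 20), (15, 20), (21, 20), (33, 19), (35, 13), (39, 20), (49, 1), (51, 20), (55, 14), (57, 1)],
  [(3, 20), (5, 20), (7, 20), (11, 20), (13, 20), (17, 20), (19, 20), (23, 20), (25, 5), (29, 15), (31, 21), (37, 19), (41, 20), (43, 12), (45, 1), (47, 20), (53, 21), (59, 55)],
  [(79, 14), (83, 20), (271, 5), (383, 4), (409, 1), (503, 13), (523, 20), (751, 1)],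
  440, 918882901512921750049453, 0, 528363222299067539, 498⟩
theorem c4_ok : c4.ok = true := by decide +kernel
def c5 : Cert := ⟨5, true, 20, 15, 36, 299,
  [(1, 20), (6, 20), (14, 20), (21, 20), (22, 20), (26, 20), (33, 20), (34, 20), (38, 14), (39, 20), (46, 20), (51, 20), (57, 20), (58, 20), (62, 20), (69, 20), (74, 7), (76, 6), (77, 20), (82, 17), (86, 14), (87, 9), (91, 13), (93, 20), (94, 20), (96, 5), (106, 18), (111, 22), (112, 3), (117, 1), (118, 18), (119, 11), (122, 14), (123, 20), (124, 2), (129, 21), (133, 20), (134, 13), (136, 3), (141, 8), (142, 20), (146, 17), (158, 4), (159, 14), (161, 19), (164, 8), (166, 17), (168, 1), (177, 18), (178, 17), (183, 14), (187, 20), (189, 1), (194, 12), (201, 7), (202, 18), (203, 4), (206, 22), (208, 1), (209, 20), (212, 2), (213, 17), (214, 10), (216, 5), (217, 5), (218, 19), (219, 6), (221, 20), (224, 1), (226, 14), (237, 5), (247, 4), (249, 8), (252, 1), (253, 18), (254, 18), (259, 4), (261, 10), (262, 3), (267, 3), (268, 4), (274, 22), (276, 4), (277, 1), (278, 14), (286,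 1), (287, 3), (291, 17), (292, 4), (296, 13), (298, 11), (299, 1)],
  [(2, 20), (3, 20), (7, 20), (11, 20), (13, 20), (17, 20), (19, 20), (23, 20), (29, 20), (31, 20), (37, 20), (41, 20), (42, 20), (43, 14), (47, 20), (53, 20), (54, 2), (56, 4), (59, 18), (61, 16), (66, 20), (67, 20), (68, 3), (71, 20), (73, 17), (78, 20), (79, 7), (83, 20), (89, 20), (92, 3), (97, 12), (101, 18), (102, 17), (103, 20), (107, 14), (108, 3), (109, 20), (113, 15), (114, 14), (121, 2), (126, 18), (127, 18), (137, 20), (138, 20), (139, 13), (144, 2), (149, 18), (151, 8), (152, 7), (154, 20), (156, 1), (157, 13), (163, 3), (167, 18), (171, 11), (173, 1), (174, 20), (176, 12), (179, 8), (181, 2), (182, 12), (186, 22), (188, 2), (191, 3), (193, 5), (197, 16), (199, 8), (211, 5), (222, 11), (223, 2), (227, 2), (229, 12), (231, 18), (233, 17), (234, 1), (236, 2), (238, 10), (239, 8), (241, 15), (242, 10), (246, 18), (248, 6), (251, 19), (257, 2), (258, 22), (263, 12), (264, 4), (266, 18), (269, 18), (271, 13), (273, 8), (279, 3), (281, 11),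 (282, 12), (283, 14), (284, 3), (289, 1), (293, 15), (294, 10), (297, 1)],
  [(182, 1), (191, 4), (192, 1), (197, 4), (227, 1), (233, 2), (238, 1), (239, 1), (273, 2), (278, 1), (281, 7), (286, 1), (288, 1), (291, 4), (293, 1), (311, 8), (367, 4), (499, 1), (839, 6), (864, 2), (1223, 4), (1553, 8), (1619, 2), (1709, 1), (2037, 2), (2411, 3), (2963, 2), (3038, 1), (3329, 1), (3797, 5), (6203, 13), (11351, 3), (11789, 3), (13183, 18)],
  2306, 584652959022907990454852, 0, 270822384536037573, 2405⟩
theorem c5_ok : c5.ok = true := by decide +kernel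
def c6 : Cert := ⟨6, true, 20, 15, 37, 119,
  [(1, 20), (35, 20), (55, 14), (65, 19), (77, 13), (85, 20), (91, 10), (95, 28)],
  [(5, 20), (7, 20), (11, 20), (13, 20), (17, 20), (19, 20), (23, 20), (29, 20), (31, 20), (37, 20), (41, 20), (43, 20), (47, 20), (53, 20), (59, 20), (61, 25), (67, 10), (71, 20), (73, 18), (79, 20), (83, 26), (89, 19), (97, 35), (101, 18), (103, 37), (107, 17), (109, 51), (113, 20), (115, 27), (119, 100)],
  [(73, 1), (269, 19), (281, 14), (373, 6), (379, 20), (385, 7), (439, 9), (463, 1), (1129, 16), (1297, 3), (1303, 20), (4663, 16), (11489, 12), (11495, 2), (22717, 4), (24151, 9)],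
  749, 1352137425206276486397073, 0, 303741880374605415, 888⟩
theorem c6_ok : c6.ok = true := by decide +kernel
def c8 : Cert := ⟨8, true, 20, 15, 36, 299,
  [(1, 20), (15, 20), (21, 20), (33, 20), (35, 20), (39, 20), (51, 19), (55, 20), (57, 20), (65, 20), (69, 20), (77, 20), (85, 12), (87, 18), (91, 20), (93, 8), (95, 8), (111, 20), (115, 19), (119, 8), (123, 20), (129, 20), (133, 15), (141, 17), (143, 7), (145, 20), (151, 4), (153, 1), (155, 11), (159, 11), (161, 20), (169, 1), (171, 1), (177, 7), (183, 28), (185, 18), (187, 20), (189, 2), (201, 20), (203, 4), (205, 20), (213, 18), (219, 16), (221, 13), (223, 1), (235, 21), (237, 21), (241, 5), (247, 20), (249, 16), (253, 7), (257, 2), (259, 20), (265, 13), (267, 20), (279, 13), (281, 2), (287, 20), (291, 1), (295, 14)],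
  [(3, 20), (5, 20), (7, 20), (11, 20), (13, 20), (17, 20), (19, 20), (23, 20), (29, 20), (31, 20), (37, 20), (41, 20), (43, 20), (47, 20), (53, 20), (59, 19), (61, 20), (63, 2), (67, 20), (71, 18), (73, 20), (75, 1), (79, 20), (83, 20), (89, 20), (97, 20), (99, 5), (101, 11), (103, 3), (105, 17), (107, 12), (109, 6), (113, 20), (117, 5), (125, 1), (127, 13), (131, 20), (135, 6), (137, 20), (139, 20), (149, 7), (157, 19), (163, 11), (165, 35), (167, 12), (173, 4), (175, 7), (179, 19), (181, 19), (191, 17), (193, 6), (195, 20), (197, 20), (199, 20), (207, 1), (209, 7), (211, 20), (217, 9), (225, 13), (229, 13), (231, 20), (239, 19), (251, 20), (255, 11), (261, 6), (263, 19), (271, 17), (273, 32), (277, 13), (283, 25), (285, 14), (289, 2), (293, 7), (297, 3), (299, 9)],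
  [(103, 3), (169, 1), (181, 1), (191, 1), (239, 1), (263, 1), (271, 3), (277, 1), (293, 7), (357, 4), (389, 7), (397, 20), (429, 2), (457, 15), (487, 2), (587, 9), (827, 1), (1567, 9), (1663, 1), (2275, 8), (2357, 1), (2437, 1), (5313, 1), (6577, 2), (10695, 1), (10973, 18), (11131, 17), (11213, 3), (32611, 6)],
  1871, 936781477719148046277550, 0, 302070584394214712, 1998⟩
theorem c8_ok : c8.ok = true := by decide +kernel
def c10 : Cert := ⟨10, true, 20, 15, 36, 399,
  [(1, 20), (21, 20), (33, 20), (39, 20), (51, 19), (57, 20), (69, 16), (77, 20), (87, 12), (91, 20), (93, 20), (111, 20), (119, 20), (123, 4), (129, 17), (133, 37), (141, 11), (143, 20), (159, 17), (161, 20), (169, 2), (177, 20), (183, 19), (187, 18), (201, 14), (203, 19), (207, 4), (209, 20), (213, 17), (217, 18), (219, 20), (221, 21), (237, 14), (247, 9), (249, 20), (253, 23), (259, 20), (261, 6), (267, 18), (287, 15), (291, 12), (299, 1), (301, 18), (303, 19), (309, 5), (321, 20), (323, 20), (327, 19), (329, 5), (339, 33), (341, 19), (359, 1), (369, 14), (371,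 8), (377, 20), (381, 5), (387, 1), (389, 2), (391, 2), (393, 14)],
  [(3, 20), (7, 20), (11, 20), (13, 20), (17, 20), (19, 20), (23, 20), (29, 20), (31, 20), (37, 20), (41, 20), (43, 20), (47, 20), (53, 20), (59, 20), (61, 19), (67, 20), (71, 20), (73, 20), (79, 16), (83, 20), (89, 20), (97, 12), (99, 1), (101, 20), (103, 27), (107, 20), (109, 19), (113, 13), (127, 20), (131, 20), (137, 20), (139, 17), (149, 20), (151, 11), (157, 20), (163, 21), (167, 20), (171, 6), (173, 18), (179, 19), (181, 13), (191, 20), (193, 20), (197, 18), (199, 20), (211, 20), (223, 16), (227, 18), (229, 20), (231, 19), (233, 20), (239, 20), (241, 17), (243, 9), (251, 18), (257, 12), (263, 15), (269, 23), (271, 17), (273, 19), (277, 15), (279, 9), (281, 20), (283, 20), (289, 9), (293, 20), (297, 8), (307, 9), (311, 18), (313, 20), (317, 14), (331, 19), (337, 21), (347, 20), (349, 1), (351, 1), (353, 20), (357, 19), (361, 5), (367, 18), (373, 20), (379, 2), (383, 20), (397, 18), (399, 147)],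
  [(133, 1), (251, 1), (271, 1), (331, 1), (509, 5), (647, 17), (661, 3), (701, 3), (907, 9), (967, 10), (977, 20), (997, 16), (1061, 6), (1531, 1), (1753, 1), (2083, 11), (2093, 1), (2113, 20), (2153, 18), (2293, 16), (2473, 1), (3581, 2), (10513, 5), (13033, 3), (13043, 20), (13093, 18), (13103, 20), (13183, 1)],
  2324, 1162505825152014652832184, 0, 234456172150161581, 2535⟩
theorem c10_ok : c10.ok = true := by decide +kernel
def c7 : Cert := ⟨7, true, 20, 16, 38, 300,
  [(1, 20), (6, 20), (10, 20), (15, 20), (22, 20), (26, 20), (33, 20), (34, 20), (38, 20), (39, 20), (46, 17), (51, 20), (55, 20), (57, 20), (58, 20), (62, 19), (65, 19), (69, 5), (74, 20), (80, 1), (82, 20), (85, 20), (86, 17), (87, 20), (90, 1), (92, 3), (93, 9), (94, 19), (95, 16), (106, 6), (111, 20), (115, 9), (118, 19), (122, 2), (123, 19), (124, 1), (125, 1), (129, 7), (134, 20), (141, 19), (142, 11), (143, 8), (145, 20), (146, 3), (152, 5), (155, 19), (158, 16), (159, 11), (162, 1), (166, 1), (169, 1), (172, 4), (177, 18), (178,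 3), (180, 1), (183, 10), (194, 19), (198, 1), (200, 9), (201, 11), (202, 18), (205, 19), (206, 23), (207, 13), (209, 14), (213, 20), (214, 2), (215, 3), (216, 1), (218, 3), (219, 9), (220, 8), (221, 20), (225, 1), (226, 9), (227, 1), (228, 2), (232, 4), (233, 4), (235, 17), (237, 16), (240, 1), (244, 17), (247, 13), (248, 8), (250, 5), (253, 11), (254, 14), (257, 1), (260, 2), (262, 28), (265, 17), (267, 20), (270, 2), (272, 5), (274, 13), (278, 20), (284, 5), (288, 4), (291, 16), (292, 15), (295, 18), (298, 19), (299, 16), (300, 26)],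
  [(2, 20), (3, 20), (5, 20), (11, 20), (13, 20), (17, 20), (19, 20), (23, 20), (29, 20), (30, 20), (31, 20), (37, 20), (40, 1), (41, 20), (43, 20), (47, 19), (53, 17), (59, 20), (61, 20), (66, 20), (67, 20), (71, 20), (72, 4), (73, 20), (76, 5), (78, 20), (79, 16), (89, 20), (97, 20), (100, 7), (101, 20), (102, 20), (103, 20), (107, 1), (109, 16), (110, 20), (113, 9), (114, 17), (120, 4), (127, 14), (130, 20), (131, 20), (137, 18), (138, 2), (139, 20), (149, 11), (150, 25), (151, 16), (153, 13), (160, 1), (163, 20), (165, 20), (167, 1), (170, 18), (171, 3), (173, 12), (174, 8), (176, 7), (179, 15), (181, 16), (184, 11), (185, 2), (186, 7), (187, 1), (190, 11), (191, 3), (193, 19), (195, 17), (197, 7), (211, 15), (222, 1), (223, 9), (230, 6), (236, 11), (239, 11), (241, 5), (242, 5), (243, 2), (246, 17), (249, 3), (251, 16), (255, 1), (258, 1), (261, 5), (263, 6), (264, 3), (268, 2), (269, 8), (271, 13), (275, 3), (276, 3), (277, 18), (281, 5), (282, 17), (283, 15), (285, 16), (286, 20), (289, 4), (290, 20), (293,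 8), (296, 14), (297, 19)],
  [(127, 1), (169, 1), (173, 1), (179, 3), (186, 1), (193, 1), (200, 1), (246, 2), (258, 1), (269, 1), (270, 2), (272, 2), (283, 1), (307, 2), (367, 11), (464, 1), (569, 7), (641, 7), (743, 1), (757, 1), (967, 1), (1009, 11), (1117, 1), (1321, 11), (1326, 1), (1451, 1), (1549, 1), (2141, 2), (2484, 6), (2689, 10), (4153, 6), (4524, 2), (8178, 5), (8360, 5), (16543, 1), (16592, 1), (25621, 20), (25628, 9), (33359, 9), (33366, 9), (54403, 12)],
  2449, 536699084124787561809608, 0, 223231977176029318, 2601⟩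
theorem c7_ok : c7.ok = true := by decide +kernel
def c9 : Cert := ⟨9, true, 20, 18, 40, 299,
  [(1, 20), (10, 20), (14, 20), (22, 20), (26, 20), (34, 20), (35, 20), (38, 20), (46, 20), (55, 20), (58, 19), (62, 20), (65, 20), (74, 17), (77, 20), (82, 20), (85, 12), (86, 20), (88, 3), (91, 20), (94, 20), (95, 18), (106, 17), (115, 20), (116, 1), (118, 20), (119, 4), (122, 14), (128, 2), (133, 20), (134, 19), (142, 20), (143, 20), (145, 15), (146, 19), (148, 3), (152, 2), (155, 20), (158, 20), (161, 19), (166, 17), (178, 20), (185, 19), (193, 4), (194, 15), (200, 4), (202, 12), (203, 7), (205, 3), (206, 11), (208, 6), (209, 9), (214, 20), (215, 4), (217, 17), (220, 3), (221, 10), (223, 1), (226, 16), (227, 10), (232, 2), (235, 17), (242, 5), (244, 7), (245, 2), (247, 21), (248, 1), (253, 12), (254, 22), (256, 2), (259, 3), (260, 3), (262, 14), (265, 9), (272, 13), (274, 22), (275, 1), (278, 23), (280, 5), (287, 21), (292, 1), (299, 8)],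
  [(2, 20), (5, 20), (7, 20), (11, 20), (13, 20), (17, 20), (19, 20), (23, 20), (29, 20), (31, 20), (37, 20), (41, 20), (43, 20), (44, 3), (47, 20), (53, 17), (59, 20), (61, 20), (67, 19), (70, 20), (71, 20), (73, 20), (76, 1), (79, 20), (83, 17), (89, 20), (97, 20), (100, 4), (101, 20), (103, 11), (104, 6), (107, 20), (109, 15), (110, 21), (113, 13), (127, 20), (130, 21), (131, 14), (136, 10), (137, 6), (139, 19), (140, 1), (149, 18), (151, 20), (154, 24), (157, 20), (160, 2), (164, 6), (167, 20), (169, 2), (170, 15), (173, 13), (175, 19), (179, 16), (181, 20), (182, 20), (184, 1), (187, 6), (188, 7), (190, 16), (191, 16), (197, 10), (199, 20), (211, 12), (212, 9), (218, 5), (224, 16), (229, 20), (230, 11), (238, 4), (241, 8), (250, 6), (251, 9), (257, 5), (263, 13), (266, 18), (269, 13), (277, 7), (281, 16), (283, 16), (286, 27), (289, 9), (290, 12), (293, 11), (295, 5), (298, 3)],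
  [(109, 1), (163, 1), (190, 2), (251, 4), (260, 2), (263, 3), (269, 4), (278, 4), (287, 1), (317, 1), (353, 1), (367, 3), (385, 13), (406, 5), (419, 7), (439, 2), (457, 4), (631, 3), (653, 2), (1597, 1), (1741, 1), (1777, 9), (1840, 2), (1867, 20), (2129, 3), (2647, 4), (2999, 1), (3631, 1), (4129, 7), (13690, 8), (20219, 10), (37397, 8), (48823, 9), (72907, 4), (100459, 1), (165073, 8)],
  2191, 700511242477098487685656, 0, 224926693794714271, 2331⟩
theorem c9_ok : c9.ok = true := by decide +kernel
def cU : Cert := ⟨1, false, 20, 17, 41, 399,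
  [(2, 20), (3, 20), (5, 20), (7, 20), (11, 20), (13, 20), (17, 20), (19, 20), (23, 20), (29, 20), (30, 20), (31, 15), (37, 19), (41, 20), (42, 20), (43, 20), (47, 20), (53, 20), (59, 20), (61, 4), (66, 15), (67, 11), (68, 1), (70, 20), (71, 20), (75, 9), (76, 6), (78, 20), (79, 3), (89, 2), (97, 20), (101, 20), (102, 20), (103, 16), (104, 2), (105, 15), (110, 5), (112, 1), (114, 12), (117, 3), (127, 1), (128, 1), (130, 20), (137, 4), (138, 11), (149, 11), (151, 11), (152, 2), (154, 2), (163, 3), (165, 15), (167, 12), (169, 5), (170, 1), (174, 26), (175, 1), (181, 2), (190, 19), (191, 12), (195, 5), (223, 10), (227, 20), (228, 2), (230, 4), (231, 2), (239, 11), (242, 3), (245, 7), (246, 2), (271, 3), (273, 3), (282, 4), (285, 12), (296, 1), (315, 2), (347, 13), (349, 2), (350, 1), (359, 12), (368, 1), (372, 9), (399, 1)],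
  [(1, 20), (6, 20), (10, 20), (14, 20), (15, 20), (21, 20), (22, 20), (26, 20), (33, 15), (34, 20), (35, 20), (38, 19), (39, 20), (46, 20), (51, 20), (55, 20), (57, 20), (58, 20), (65, 20), (69, 11), (74, 18), (77, 17), (82, 3), (84, 1), (85, 2), (86, 17), (87, 19), (91, 2), (93, 15), (94, 20), (95, 20), (99, 5), (106, 13), (111, 2), (122, 4), (123, 20), (124, 15), (129, 2), (134, 11), (140, 4), (142, 14), (143, 5), (145, 20), (148, 2), (159, 3), (161, 20), (177, 10), (187, 2), (201, 5), (202, 11), (203, 9), (205, 1), (206, 16), (208, 2), (210, 15), (212, 2), (213, 8), (215, 3), (217, 15), (221, 5), (258, 1), (259, 1), (265, 4), (269, 2), (295, 1), (298, 5), (302, 8), (304, 2), (305, 4), (327, 3), (334, 9), (335, 10), (345, 4), (382, 1), (388, 6), (390, 7)],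
  [(87, 1), (143, 1), (209, 5), (215, 14), (304, 1), (345, 1), (418, 1), (533, 18), (534, 2), (539, 1), (726, 1), (1150, 3), (1180, 3), (1183, 3), (1185, 3), (1200, 1), (1208, 1), (3451, 1), (3456, 1), (3689, 1), (5635, 1), (8993, 14), (9612, 2), (11859, 3), (16059, 16), (43778, 7)],
  1634, 0, 476381433467944521724704, 185404391582786371, 1720⟩
theorem cU_ok : cU.ok = true := by decide +kernel
def cA : Cert := ⟨1, false, 20, 17, 41, 100,
  [(2, 20), (3, 20), (5, 20), (7, 20), (11, 20), (13, 18), (17, 16), (18, 4), (19, 8), (23, 13), (24, 2), (29, 11), (30, 13), (37, 2), (40, 1), (42, 6), (43, 1), (45, 4), (48, 5), (50, 2), (51, 1), (52, 3), (53, 4), (54, 1), (56, 11), (59, 1), (60, 5), (62, 4), (63, 2), (64, 8), (66, 13), (70, 9), (71, 3), (75, 11), (77, 3), (79, 4), (81, 9), (82, 2), (83, 1), (84, 3), (87, 2), (88, 2), (92, 1), (94, 3), (97, 12), (98, 2), (100, 5)],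
  [(1, 20), (6, 20), (10, 20), (14, 18), (15, 20), (20, 1), (21, 6), (22, 20), (25, 6), (26, 8), (27, 2), (32, 2), (33, 7), (34, 8), (35, 3), (36, 4), (38, 4), (39, 4), (41, 2), (46, 9), (47, 4), (49, 8), (55, 1), (57, 1), (58, 7), (61, 4), (65, 7), (69, 6), (72, 1), (74, 2), (76, 2), (80, 3), (85, 5), (90, 7), (91, 1), (95, 4), (96, 5), (99, 2)],
  [(21, 1), (325, 2), (408, 2), (568, 1), (806, 4), (819, 2), (1408, 2), (1859, 4), (1860, 1), (1926, 1), (2262, 1), (5049, 2), (5776, 1), (8268, 1), (11349, 2), (12906, 1), (31059, 1), (36687, 1), (40275, 6), (84305, 1), (109707, 1)],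
  568, 0, 492734192446628545544555, 78418090355436888, 586⟩
theorem cA_ok : cA.ok = true := by decide +kernel
end PS

namespace PS
open Finset Real

def lcmF (x y : ℕ) : ℕ := force x (fun x => force y (fun y => x * y / Nat.gcd x y))
def lcmSeg (a : ℕ) : ℕ → ℕ
  | 0 => a
  | t + 1 => lcmF (lcmSeg a t) (lcmSeg (a + 2 ^ t) t)

def psiChk : ℕ → ℕ → ℕ → Bool
  | 0, m, _ => Nat.ble 16384 m
  | f + 1, m, L => force (Nat.log2 m - 5) (fun t => force (lcmF L (lcmSeg (m + 1) t)) (fun L' =>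
      Nat.ble L' (2 ^ (15581 * (m + 1) / 10000)) && force (m + 2 ^ t) (fun m' => psiChk f m' L')))

set_option maxRecDepth 100000 in
theorem psiChk_ok : psiChk 319 1 1 = true := by decide +kernel

lemma lcmF_eq (x y : ℕ) : lcmF x y = Nat.lcm x y := by
  simp [lcmF, force_eq, Nat.lcm]

lemma lcmSeg_dvd (t : ℕ) : ∀ a i : ℕ, a ≤ i → i < a + 2 ^ t → i ∣ lcmSeg a t := by
  induction t with
  | zero => intro a i h1 h2; simp at h2; simp [lcmSeg, show i = a by omega]
  | succ t ih =>
    intro a i h1 h2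
    rw [lcmSeg, lcmF_eq]
    rw [pow_succ] at h2
    by_cases h : i < a + 2 ^ t
    · exact (ih a i h1 h).trans (Nat.dvd_lcm_left _ _)
    · exact (ih (a + 2 ^ t) i (by omega) (by omega)).trans (Nat.dvd_lcm_right _ _)

lemma lcmSeg_pos (t : ℕ) : ∀ a : ℕ, 0 < a → 0 < lcmSeg a t := by
  induction t with
  | zero => intro a h; simpa [lcmSeg] using h
  | succ t ih =>
    intro a h
    rw [lcmSeg, lcmF_eq]
    exact Nat.lcm_pos (ih _ h) (ih _ (by positivity))

lemma psiChk_sound (f : ℕ) : ∀ m L : ℕ, 0 < L → (∀ i, 1 ≤ i → i ≤ m → i ∣ L) → psiChk f m L = true →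
    ∀ n, m < n → n ≤ 16384 → psiN n ≤ 1.08 * n := by
  induction f with
  | zero =>
    intro m L _ _ h n h1 h2
    simp only [psiChk, Nat.ble_eq] at h; omega
  | succ f ih =>
    intro m L hL hd h n h1 h2
    simp only [psiChk, force_eq, lcmF_eq, Bool.and_eq_true, Nat.ble_eq] at h
    generalize Nat.log2 m - 5 = t at h
    obtain ⟨h3, h4⟩ := h
    have hL' : 0 < Nat.lcm L (lcmSeg (m + 1) t) := Nat.lcm_pos hL (lcmSeg_pos _ _ (by omega))
    have hd' : ∀ i, 1 ≤ i → i ≤ m + 2 ^ t → i ∣ Nat.lcm L (lcmSeg (m + 1) t) := by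
      intro i hi1 hi2
      by_cases him : i ≤ m
      · exact (hd i hi1 him).trans (Nat.dvd_lcm_left _ _)
      · exact (lcmSeg_dvd t _ i (by omega) (by omega)).trans (Nat.dvd_lcm_right _ _)
    by_cases hn : n ≤ m + 2 ^ t
    · rw [psiN_eq, Chebyshev.psi_eq_log_lcmUpto]
      have e1 : Nat.lcmUpto n ≤ 2 ^ (15581 * (m + 1) / 10000) := by
        refine (Nat.le_of_dvd hL' ?_).trans h3
        apply Finset.lcm_dvd
        intro i hi
        rw [mem_Icc] at hi
        exact hd' i hi.1 (hi.2.trans hn)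
      have e2 : ((Nat.lcmUpto n : ℕ) : ℝ) ≤ 2 ^ (15581 * (m + 1) / 10000) := by exact_mod_cast e1
      have e3 := log_le_log (by exact_mod_cast Nat.lcmUpto_pos n) e2
      rw [log_pow] at e3
      have e4 : ((15581 * (m + 1) / 10000 : ℕ) : ℝ) ≤ 15581 * (m + 1) / 10000 := by
        refine Nat.cast_div_le.trans (le_of_eq ?_); push_cast; ring
      have e5 : (m : ℝ) + 1 ≤ n := by exact_mod_cast h1
      have l2 := log_two_lt_d9
      have l3 : 0 < log 2 := log_pos (by norm_num)
      calc log (Nat.lcmUpto n) ≤ _ := e3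
        _ ≤ 15581 * n / 10000 * log 2 := by
          apply mul_le_mul_of_nonneg_right _ l3.le
          refine e4.trans ?_
          linarith
        _ ≤ 1.08 * n := by nlinarith
    · exact ih _ _ hL' hd' h4 n (by omega) h2

lemma psiq_one (x : ℕ) : psiq 1 0 x = psiN x := by
  unfold psiq psiN
  congr 1
  ext; simp [Nat.mod_one]

lemma psi_crude (n : ℕ) : psiN n ≤ 5.39 * n := by
  rw [psiN_eq]
  have h := Chebyshev.psi_le_const_mul_self (x := n) (Nat.cast_nonneg _)
  have h2 : log 4 = 2 * log 2 := by
    rw [show (4 : ℝ) = 2 ^ 2 by norm_num, log_pow]; norm_num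
  have h3 := log_two_lt_d9
  refine h.trans (mul_le_mul_of_nonneg_right ?_ (Nat.cast_nonneg _))
  rw [h2]; linarith

lemma log_tangent (x y : ℝ) (hx : 0 < x) (hy : 0 < y) : log x ≤ x / y + log y - 1 := by
  have := log_le_sub_one_of_pos (show 0 < x / y by positivity)
  rw [log_div hx.ne' hy.ne'] at this
  linarith

theorem psi_bound (n : ℕ) : psiN n ≤ 1.08 * n := by
  by_cases hn : n ≤ 16384
  · rcases Nat.lt_or_ge 1 n with h | h
    · exact psiChk_sound 319 1 1 one_pos (fun i h1 h2 => by rw [show i = 1 by omega]) psiChk_ok n h hn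
    · rw [psiN_eq, Chebyshev.psi_eq_zero_of_le_one (by exact_mod_cast h)]; positivity
  · push Not at hn
    have h := cA.sound cA_ok (by decide) (by decide) (by decide) 0 n (by decide) (by omega)
      (le_trans (by decide : cA.K ≤ 400) (by omega)) 5.39 psi_crude (by norm_num)
    have hv : -(20 * 1.0635 : ℝ) ≤ ((cA.Z1 : ℝ) - cA.Z2) * log 2 / (MM * LL * cA.q) - 5.39 * (cA.Z3 / LL) := by
      have := log_two_lt_d9
      rw [show cA.Z1 = 0 from rfl, show cA.Z2 = 492734192446628545544555 from rfl, show cA.Z3 = 78418090355436888 from rfl, show cA.q = 1 from rfl]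
      norm_num [MM, LL]
      linarith
    rw [show cA.q = 1 from rfl, psiq_one, show cA.s = false from rfl, show cA.D = 20 from rfl, show cA.B = 586 from rfl] at h
    rw [show cA.q = 1 from rfl] at hv
    have hx : (16384 : ℝ) < n := by exact_mod_cast hn
    have h5 := mul_le_mul_of_nonneg_right hv (show (0 : ℝ) ≤ n by positivity)
    have h6 := log_tangent n 16384 (by linarith) (by norm_num)
    have h7 : log (16384 : ℝ) = 14 * log 2 := by
      rw [show (16384 : ℝ) = 2 ^ 14 by norm_num, log_pow]; norm_num
    have h8 := log_two_lt_d9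
    norm_num at h h5
    linarith
end PS

namespace PS
open Finset Real

noncomputable def EE (x : ℕ) : ℝ := log x / 2 + 2.7

lemma fin_bd (Z B D v x E ps Bd : ℝ) (hx : 0 ≤ x) (hE : 0 ≤ E) (hD : D = 20) (hZ : 20 * v ≤ Z) (hB : B = 20 * Bd)
    (h : Z * x - B * E ≤ D * ps) : v * x - Bd * E ≤ ps := by
  subst hD hB
  have := mul_le_mul_of_nonneg_right hZ hx
  linarith

lemma EE_nonneg (x : ℕ) (hx : 400 ≤ x) : 0 ≤ EE x := by
  unfold EE
  have := log_nonneg (show (1 : ℝ) ≤ x by exact_mod_cast (show 1 ≤ x by omega))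
  linarith

lemma c3_bd (r x : ℕ) (hr : Nat.Coprime r 3) (hx : 400 ≤ x) : 0.4637 * x - 22.3 * EE x ≤ psiq 3 r x := by
  have h := c3.sound c3_ok (by decide) (by decide) (by decide) r x hr (by omega)
      (le_trans (by decide : c3.K ≤ 400) hx) 1.08 psi_bound (by norm_num)
  refine fin_bd _ _ _ _ _ _ _ _ (Nat.cast_nonneg _) (EE_nonneg x hx) ?_ ?_ ?_ h
  · norm_num [show c3.D = 20 from rfl, show c3.s = true from rfl]
  · have := log_two_gt_d9
    rw [show c3.Z1 = 688009077000226677723278 from rfl, show c3.Z2 = 0 from rfl, show c3.Z3 = 395224253222002163 from rfl, show c3.q = 3 from rfl]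
    norm_num [MM, LL]
    linarith
  · rw [show c3.B = 446 from rfl]; norm_num

lemma c4_bd (r x : ℕ) (hr : Nat.Coprime r 4) (hx : 400 ≤ x) : 0.4574 * x - 24.9 * EE x ≤ psiq 4 r x := by
  have h := c4.sound c4_ok (by decide) (by decide) (by decide) r x hr (by omega)
      (le_trans (by decide : c4.K ≤ 400) hx) 1.08 psi_bound (by norm_num)
  refine fin_bd _ _ _ _ _ _ _ _ (Nat.cast_nonneg _) (EE_nonneg x hx) ?_ ?_ ?_ h
  · norm_num [show c4.D = 20 from rfl, show c4.s = true from rfl]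
  · have := log_two_gt_d9
    rw [show c4.Z1 = 918882901512921750049453 from rfl, show c4.Z2 = 0 from rfl, show c4.Z3 = 528363222299067539 from rfl, show c4.q = 4 from rfl]
    norm_num [MM, LL]
    linarith
  · rw [show c4.B = 498 from rfl]; norm_num

lemma c5_bd (r x : ℕ) (hr : Nat.Coprime r 5) (hx : 400 ≤ x) : 0.2327 * x - 120.25 * EE x ≤ psiq 5 r x := by
  have h := c5.sound c5_ok (by decide) (by decide) (by decide) r x hr (by omega)
      (le_trans (by decide : c5.K ≤ 400) hx) 1.08 psi_bound (by norm_num)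
  refine fin_bd _ _ _ _ _ _ _ _ (Nat.cast_nonneg _) (EE_nonneg x hx) ?_ ?_ ?_ h
  · norm_num [show c5.D = 20 from rfl, show c5.s = true from rfl]
  · have := log_two_gt_d9
    rw [show c5.Z1 = 584652959022907990454852 from rfl, show c5.Z2 = 0 from rfl, show c5.Z3 = 270822384536037573 from rfl, show c5.q = 5 from rfl]
    norm_num [MM, LL]
    linarith
  · rw [show c5.B = 2405 from rfl]; norm_num

lemma c6_bd (r x : ℕ) (hr : Nat.Coprime r 6) (hx : 400 ≤ x) : 0.4602 * x - 44.4 * EE x ≤ psiq 6 r x := by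
  have h := c6.sound c6_ok (by decide) (by decide) (by decide) r x hr (by omega)
      (le_trans (by decide : c6.K ≤ 400) hx) 1.08 psi_bound (by norm_num)
  refine fin_bd _ _ _ _ _ _ _ _ (Nat.cast_nonneg _) (EE_nonneg x hx) ?_ ?_ ?_ h
  · norm_num [show c6.D = 20 from rfl, show c6.s = true from rfl]
  · have := log_two_gt_d9
    rw [show c6.Z1 = 1352137425206276486397073 from rfl, show c6.Z2 = 0 from rfl, show c6.Z3 = 303741880374605415 from rfl, show c6.q = 6 from rfl]
    norm_num [MM, LL]
    linarith
  · rw [show c6.B = 888 from rfl]; norm_num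

lemma c7_bd (r x : ℕ) (hr : Nat.Coprime r 7) (hx : 400 ≤ x) : 0.1501 * x - 130.05 * EE x ≤ psiq 7 r x := by
  have h := c7.sound c7_ok (by decide) (by decide) (by decide) r x hr (by omega)
      (le_trans (by decide : c7.K ≤ 400) hx) 1.08 psi_bound (by norm_num)
  refine fin_bd _ _ _ _ _ _ _ _ (Nat.cast_nonneg _) (EE_nonneg x hx) ?_ ?_ ?_ h
  · norm_num [show c7.D = 20 from rfl, show c7.s = true from rfl]
  · have := log_two_gt_d9
    rw [show c7.Z1 = 536699084124787561809608 from rfl, show c7.Z2 = 0 from rfl, show c7.Z3 = 223231977176029318 from rfl, show c7.q = 7 from rfl]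
    norm_num [MM, LL]
    linarith
  · rw [show c7.B = 2601 from rfl]; norm_num

lemma c8_bd (r x : ℕ) (hr : Nat.Coprime r 8) (hx : 400 ≤ x) : 0.2313 * x - 99.9 * EE x ≤ psiq 8 r x := by
  have h := c8.sound c8_ok (by decide) (by decide) (by decide) r x hr (by omega)
      (le_trans (by decide : c8.K ≤ 400) hx) 1.08 psi_bound (by norm_num)
  refine fin_bd _ _ _ _ _ _ _ _ (Nat.cast_nonneg _) (EE_nonneg x hx) ?_ ?_ ?_ h
  · norm_num [show c8.D = 20 from rfl, show c8.s = true from rfl]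
  · have := log_two_gt_d9
    rw [show c8.Z1 = 936781477719148046277550 from rfl, show c8.Z2 = 0 from rfl, show c8.Z3 = 302070584394214712 from rfl, show c8.q = 8 from rfl]
    norm_num [MM, LL]
    linarith
  · rw [show c8.B = 1998 from rfl]; norm_num

lemma c9_bd (r x : ℕ) (hr : Nat.Coprime r 9) (hx : 400 ≤ x) : 0.15249 * x - 116.55 * EE x ≤ psiq 9 r x := by
  have h := c9.sound c9_ok (by decide) (by decide) (by decide) r x hr (by omega)
      (le_trans (by decide : c9.K ≤ 400) hx) 1.08 psi_bound (by norm_num)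
  refine fin_bd _ _ _ _ _ _ _ _ (Nat.cast_nonneg _) (EE_nonneg x hx) ?_ ?_ ?_ h
  · norm_num [show c9.D = 20 from rfl, show c9.s = true from rfl]
  · have := log_two_gt_d9
    rw [show c9.Z1 = 700511242477098487685656 from rfl, show c9.Z2 = 0 from rfl, show c9.Z3 = 224926693794714271 from rfl, show c9.q = 9 from rfl]
    norm_num [MM, LL]
    linarith
  · rw [show c9.B = 2331 from rfl]; norm_num

lemma c10_bd (r x : ℕ) (hr : Nat.Coprime r 10) (hx : 400 ≤ x) : 0.2332 * x - 126.75 * EE x ≤ psiq 10 r x := by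
  have h := c10.sound c10_ok (by decide) (by decide) (by decide) r x hr (by omega)
      (le_trans (by decide : c10.K ≤ 400) hx) 1.08 psi_bound (by norm_num)
  refine fin_bd _ _ _ _ _ _ _ _ (Nat.cast_nonneg _) (EE_nonneg x hx) ?_ ?_ ?_ h
  · norm_num [show c10.D = 20 from rfl, show c10.s = true from rfl]
  · have := log_two_gt_d9
    rw [show c10.Z1 = 1162505825152014652832184 from rfl, show c10.Z2 = 0 from rfl, show c10.Z3 = 234456172150161581 from rfl, show c10.q = 10 from rfl]
    norm_num [MM, LL]
    linarith
  · rw [show c10.B = 2535 from rfl]; norm_num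

lemma cU_bd (x : ℕ) (hx : 400 ≤ x) : psiN x ≤ 1.01772 * x + 86.0 * EE x := by
  have h := cU.sound cU_ok (by decide) (by decide) (by decide) 0 x (by decide) (by omega)
      (le_trans (by decide : cU.K ≤ 400) hx) 1.08 psi_bound (by norm_num)
  have h2 : -1.01772 * x - 86.0 * EE x ≤ -psiq cU.q 0 x := by
    refine fin_bd _ _ 20 _ _ _ _ _ (Nat.cast_nonneg _) (EE_nonneg x hx) rfl ?_ ?_ (h.trans (le_of_eq ?_))
    · have := log_two_lt_d9
      rw [show cU.Z1 = 0 from rfl, show cU.Z2 = 476381433467944521724704 from rfl, show cU.Z3 = 185404391582786371 from rfl, show cU.q = 1 from rfl]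
      norm_num [MM, LL]
      linarith
    · rw [show cU.B = 1720 from rfl]; norm_num
    · norm_num [show cU.D = 20 from rfl, show cU.s = false from rfl]
  rw [show cU.q = 1 from rfl, psiq_one] at h2
  linarith
end PS

namespace PS
open Finset Real
open scoped ArithmeticFunction.vonMangoldt

def VV (a : ℕ) : Finset ℕ := (Icc 1 (a - 1)).filter (fun v => Nat.Coprime v a)
def cc (a b n : ℕ) : ℕ := ((VV a).filter (fun v => n % a = (b * v) % a ∧ n < b * v)).card

lemma mem_VV {a v : ℕ} : v ∈ VV a ↔ (1 ≤ v ∧ v ≤ a - 1) ∧ Nat.Coprime v a := by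
  simp [VV]

lemma cc_inj {a b v w : ℕ} (h : Nat.Coprime a b) (hv : v ∈ VV a) (hw : w < a) (he : (b * v) % a = (b * w) % a) : v = w := by
  rw [mem_VV] at hv
  have h1 : b * v ≡ b * w [MOD a] := he
  have h2 := Nat.ModEq.cancel_left_of_coprime h h1
  exact Nat.ModEq.eq_of_lt_of_lt h2 (by omega) hw

lemma cc_le_one (a b n : ℕ) (h : Nat.Coprime a b) : cc a b n ≤ 1 := by
  unfold cc
  rw [Finset.card_le_one]
  intro v hv w hw
  rw [mem_filter] at hv hw
  have hw' := mem_VV.1 hw.1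
  exact cc_inj h hv.1 (by omega) (hv.2.1.symm.trans hw.2.1)

lemma cc_nonrep (a b n : ℕ) (h : Nat.Coprime a b) (hn : 1 ≤ cc a b n) : ¬ ∃ u v : ℕ, n = a * u + b * v := by
  rintro ⟨u, w, rfl⟩
  obtain ⟨v, hv⟩ := Finset.card_pos.1 hn
  rw [mem_filter] at hv
  obtain ⟨hv1, hv2, hv3⟩ := hv
  rw [Nat.mul_add_mod] at hv2
  have hwv : w < v := by
    have : b * w < b * v := by omega
    exact lt_of_mul_lt_mul_left this (Nat.zero_le _)
  have hv' := mem_VV.1 hv1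
  have := cc_inj h hv1 (show w < a by omega) hv2.symm
  omega

lemma nonrep_finite (a b : ℕ) (ha : 1 ≤ a) (h : Nat.Coprime a b) :
    {p : ℕ | p.Prime ∧ ¬ ∃ u v : ℕ, p = a * u + b * v}.Finite := by
  apply Set.Finite.subset (Set.finite_lt_nat (b * a))
  rintro p ⟨_, hp⟩
  by_contra hc
  simp only [Set.mem_setOf_eq, not_lt] at hc
  apply hp
  obtain ⟨w, hw⟩ := Nat.exists_mul_mod_eq_of_coprime p h.symm (by omega)
  obtain ⟨hw1, hw2⟩ := hw
  have hle : b * w ≤ p := (Nat.mul_le_mul_left b hw1.le).trans hc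
  have h3 : b * w ≡ p [MOD a] := hw2
  obtain ⟨u, hu⟩ := (Nat.modEq_iff_dvd' hle).1 h3
  exact ⟨u, w, by omega⟩

lemma count_le_piStar (a b X : ℕ) (ha : 1 ≤ a) (h : Nat.Coprime a b) :
    ∑ p ∈ (Icc 1 X).filter Nat.Prime, cc a b p ≤ piStar a b := by
  have h1 : ∑ p ∈ (Icc 1 X).filter Nat.Prime, cc a b p ≤ (((Icc 1 X).filter Nat.Prime).filter (fun p => 1 ≤ cc a b p)).card := by
    rw [Finset.card_filter]
    apply Finset.sum_le_sum
    intro p _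
    have := cc_le_one a b p h
    split_ifs <;> omega
  refine h1.trans ?_
  rw [piStar, ← Set.ncard_coe_finset]
  apply Set.ncard_le_ncard _ (nonrep_finite a b ha h)
  intro p hp
  simp only [coe_filter, mem_filter, Set.mem_setOf_eq] at hp
  exact ⟨hp.1.2, cc_nonrep a b p h hp.2⟩

/-! analytic part -/
noncomputable def lp (n : ℕ) : ℝ := if n.Prime then log n else 0

lemma lp_nonneg (n : ℕ) : 0 ≤ lp n := by
  unfold lp; split_ifs with h
  · exact log_nonneg (by exact_mod_cast h.one_lt.le)
  · exact le_rfl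

lemma lp_le (n : ℕ) : lp n ≤ Λ n := by
  unfold lp; split_ifs with h
  · rw [ArithmeticFunction.vonMangoldt_apply_prime h]
  · exact ArithmeticFunction.vonMangoldt_nonneg

lemma psi_theta (t : ℕ) (ht : 1 ≤ t) : ∑ n ∈ Icc 1 t, (Λ n - lp n) ≤ 3.24 * √t := by
  have h1 : ∑ n ∈ Icc 1 t, (Λ n - lp n) = Chebyshev.psi t - Chebyshev.theta t := by
    rw [Finset.sum_sub_distrib, ← psiN_eq, psiN]
    congr 1
    rw [Chebyshev.theta, Finset.sum_filter]
    simp only [Nat.floor_natCast]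
    rfl
  rw [h1]
  have h2 := Chebyshev.psi_sub_theta_le_psi_add_psi_add_psi t
  have hb : ∀ y : ℝ, 0 ≤ y → Chebyshev.psi y ≤ 1.08 * y := by
    intro y hy
    rw [Chebyshev.psi_eq_psi_coe_floor, ← psiN_eq]
    refine (psi_bound _).trans ?_
    have := Nat.floor_le hy
    linarith
  have hs : (t : ℝ) ^ (2 : ℝ)⁻¹ = √t := by rw [Real.sqrt_eq_rpow]; norm_num
  have ht' : (1 : ℝ) ≤ t := by exact_mod_cast ht
  have h3 : (t : ℝ) ^ (3 : ℝ)⁻¹ ≤ √t := by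
    rw [← hs]; exact Real.rpow_le_rpow_of_exponent_le ht' (by norm_num)
  have h5 : (t : ℝ) ^ (5 : ℝ)⁻¹ ≤ √t := by
    rw [← hs]; exact Real.rpow_le_rpow_of_exponent_le ht' (by norm_num)
  rw [hs] at h2
  have m3 := Chebyshev.psi_mono h3
  have m5 := Chebyshev.psi_mono h5
  have := hb (√t) (by positivity)
  linarith

lemma psiq_sum (a b t : ℕ) :
    ∑ v ∈ VV a, psiq a (b * v) (min t (b * v - 1)) ≤ ∑ n ∈ Icc 1 t, (cc a b n : ℝ) * Λ n := by
  have h1 : ∀ v ∈ VV a, psiq a (b * v) (min t (b * v - 1)) ≤ ∑ n ∈ Icc 1 t, if (n % a = (b * v) % a ∧ n < b * v) then Λ n else 0 := by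
    intro v _
    unfold psiq
    rw [← Finset.sum_filter]
    apply Finset.sum_le_sum_of_subset_of_nonneg
    · intro n hn
      simp only [mem_filter, mem_Icc] at hn ⊢
      omega
    · intro _ _ _; exact ArithmeticFunction.vonMangoldt_nonneg
  refine (Finset.sum_le_sum h1).trans (le_of_eq ?_)
  rw [Finset.sum_comm]
  apply Finset.sum_congr rfl
  intro n _
  rw [← Finset.sum_filter, Finset.sum_const, cc, nsmul_eq_mul]

lemma W_low (a b t : ℕ) (h : Nat.Coprime a b) (ht : 1 ≤ t) :
    2 * ∑ v ∈ VV a, psiq a (b * v) (min t (b * v - 1)) - psiN t - 3.24 * √t ≤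
      ∑ n ∈ Icc 1 t, (2 * (cc a b n : ℝ) - 1) * lp n := by
  have h1 := psiq_sum a b t
  have h2 := psi_theta t ht
  have h3 : 2 * ∑ n ∈ Icc 1 t, (cc a b n : ℝ) * Λ n - psiN t - ∑ n ∈ Icc 1 t, (Λ n - lp n) ≤
      ∑ n ∈ Icc 1 t, (2 * (cc a b n : ℝ) - 1) * lp n := by
    rw [psiN, Finset.mul_sum, ← Finset.sum_sub_distrib, ← Finset.sum_sub_distrib]
    apply Finset.sum_le_sum
    intro n _
    have c1 : (cc a b n : ℝ) ≤ 1 := by exact_mod_cast cc_le_one a b n h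
    have := mul_le_mul_of_nonneg_right c1 (sub_nonneg.2 (lp_le n))
    linarith
  linarith

lemma abel (w : ℕ → ℝ) (hw : ∀ m, w 0 = 0 ∧ w 1 = 0 ∧ (True ∨ m = 0)) (X : ℕ) (hX : 2 ≤ X)
    (hp : ∀ m, m ≤ X → 0 ≤ ∑ n ∈ Icc 1 m, w n) :
    (∑ n ∈ Icc 1 X, w n) / log X ≤ ∑ n ∈ Icc 1 X, w n / log n := by
  induction X, hX using Nat.le_induction with
  | base =>
    have := hw 0
    rw [show Icc 1 2 = {1, 2} from rfl]
    simp [this.2.1]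
  | succ m hm ih =>
    have ih' := ih (fun k hk => hp k (by omega))
    rw [Finset.sum_Icc_succ_top (by omega), Finset.sum_Icc_succ_top (by omega), add_div]
    have l1 : 0 < log (m : ℝ) := log_pos (by exact_mod_cast (show 1 < m by omega))
    have l2 : log (m : ℝ) ≤ log ((m + 1 : ℕ) : ℝ) :=
      log_le_log (by exact_mod_cast (show 0 < m by omega)) (by exact_mod_cast (show m ≤ m + 1 by omega))
    have := div_le_div_of_nonneg_left (hp m (by omega)) l1 l2
    linarith
end PS

namespace PS
open Finset Real

lemma cc_pos_of_lt (a b p : ℕ) (ha : 2 ≤ a) (h : Nat.Coprime a b) (hp : Nat.Coprime p a) (hpb : p < b) :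
    1 ≤ cc a b p := by
  obtain ⟨v, hv1, hv2⟩ := Nat.exists_mul_mod_eq_of_coprime p h.symm (by omega)
  have h3 : b * v ≡ p [MOD a] := hv2
  have hco : Nat.Coprime v a := by
    have h4 : Nat.gcd (b * v) a = Nat.gcd p a := Nat.ModEq.gcd_eq h3
    have h5 : Nat.Coprime (b * v) a := by rw [Nat.Coprime, h4]; exact hp
    exact Nat.Coprime.coprime_mul_left h5
  have hv0 : 1 ≤ v := by
    rcases Nat.eq_zero_or_pos v with h0 | h0
    · subst h0; simp at hco; omega
    · exact h0
  apply Finset.card_pos.2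
  refine ⟨v, mem_filter.2 ⟨mem_VV.2 ⟨⟨hv0, by omega⟩, hco⟩, h3.symm, ?_⟩⟩
  calc p < b := hpb
    _ ≤ b * v := Nat.le_mul_of_pos_right _ hv0

lemma W_main (a b t X : ℕ) (ha : 3 ≤ a) (h : Nat.Coprime a b) (hb : 401 ≤ b)
    (vv Ba κ : ℝ) (hvv : 0 ≤ vv) (hBa : 0 ≤ Ba)
    (hcert : ∀ r x : ℕ, Nat.Coprime r a → 400 ≤ x → vv * x - Ba * EE x ≤ psiq a r x)
    (φ s1 : ℕ) (hφ : (VV a).card = φ) (hs1 : ∑ v ∈ VV a, v = s1)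
    (k1 : κ ≤ 2 * vv * φ - 1.01772) (k2 : κ ≤ 2 * vv * s1 - 1.01772 * (a - 1))
    (hX : X ≤ (a - 1) * b) (hbt : b ≤ t) (htX : t ≤ X) :
    κ * b - 2 * vv * φ - (2 * φ * Ba + 86) * EE X - 3.24 * √X ≤
      ∑ n ∈ Icc 1 t, (2 * (cc a b n : ℝ) - 1) * lp n := by
  have hEm : ∀ x : ℕ, 1 ≤ x → x ≤ X → EE x ≤ EE X := by
    intro x h1 h2
    unfold EE
    have := log_le_log (show (0:ℝ) < x by exact_mod_cast h1) (show (x:ℝ) ≤ X by exact_mod_cast h2)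
    linarith
  have hW := W_low a b t h (by omega)
  have hU := cU_bd t (by omega)
  have hsq : √(t:ℝ) ≤ √X := Real.sqrt_le_sqrt (by exact_mod_cast htX)
  have hE1 := hEm t (by omega) htX
  have hb0 : (0:ℝ) < b := by exact_mod_cast (show 0 < b by omega)
  have ha2 : (0:ℝ) < (a:ℝ) - 2 := by
    have : (3:ℝ) ≤ a := by exact_mod_cast ha
    linarith
  have hbt' : (b:ℝ) ≤ t := by exact_mod_cast hbt
  have htX' : (t:ℝ) ≤ ((a:ℝ) - 1) * b := by
    have h1 : t ≤ (a - 1) * b := htX.trans hX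
    have h2 : (t:ℝ) ≤ ((a - 1 : ℕ):ℝ) * b := by exact_mod_cast h1
    rwa [Nat.cast_sub (by omega), Nat.cast_one] at h2
  obtain ⟨s, hs⟩ : ∃ s : ℝ, s = (t - b) / (b * (a - 2)) := ⟨_, rfl⟩
  have hs' : (t:ℝ) = b + s * b * (a - 2) := by rw [hs]; field_simp; ring
  have hs0 : 0 ≤ s := by rw [hs]; apply div_nonneg; linarith; positivity
  have hs1' : s ≤ 1 := by rw [hs, div_le_one (by positivity)]; linarith
  have hv : ∀ v ∈ VV a, vv * (b + s * b * ((v:ℝ) - 1) - 1) - Ba * EE X ≤ psiq a (b * v) (min t (b * v - 1)) := by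
    intro v hv
    have hv' := mem_VV.1 hv
    have hbv : b ≤ b * v := Nat.le_mul_of_pos_right _ (by omega)
    have hc := hcert (b * v) (min t (b * v - 1)) (Nat.Coprime.mul_left h.symm hv'.2) (by omega)
    have hm := hEm (min t (b * v - 1)) (by omega) (by omega)
    refine le_trans ?_ hc
    have hv1 : (1:ℝ) ≤ v := by exact_mod_cast hv'.1.1
    have hva : (v:ℝ) ≤ a - 1 := by
      have : v + 1 ≤ a := by omega
      have : ((v + 1 : ℕ):ℝ) ≤ a := by exact_mod_cast this
      push_cast at this; linarith
    have hx : b + s * b * ((v:ℝ) - 1) - 1 ≤ ((min t (b * v - 1) : ℕ) : ℝ) := by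
      rw [Nat.cast_min, le_min_iff, Nat.cast_sub (by omega)]
      push_cast
      have hsb : 0 ≤ s * b := by positivity
      constructor
      · rw [hs']
        have := mul_le_mul_of_nonneg_left (show (v:ℝ) - 1 ≤ a - 2 by linarith) hsb
        linarith
      · have h1 : s * b ≤ 1 * b := mul_le_mul_of_nonneg_right hs1' hb0.le
        have := mul_le_mul_of_nonneg_right h1 (show 0 ≤ (v:ℝ) - 1 by linarith)
        linarith
    have e1 := mul_le_mul_of_nonneg_left hx hvv
    have e2 := mul_le_mul_of_nonneg_left hm hBa
    linarith
  have hsum := Finset.sum_le_sum hv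
  have hl : ∑ v ∈ VV a, (vv * (b + s * b * ((v:ℝ) - 1) - 1) - Ba * EE X) =
      φ * (vv * (b - s * b - 1) - Ba * EE X) + vv * s * b * s1 := by
    have : ∀ v ∈ VV a, (vv * (b + s * b * ((v:ℝ) - 1) - 1) - Ba * EE X) =
      (vv * (b - s * b - 1) - Ba * EE X) + vv * s * b * v := by intro v _; ring
    rw [Finset.sum_congr rfl this, Finset.sum_add_distrib, Finset.sum_const, hφ, nsmul_eq_mul,
      ← Finset.mul_sum, ← Nat.cast_sum, hs1]
  rw [hl] at hsum
  have f1 := mul_le_mul_of_nonneg_right k1 (show 0 ≤ (1 - s) * b from mul_nonneg (by linarith) hb0.le)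
  have f2 := mul_le_mul_of_nonneg_right k2 (show 0 ≤ s * b from mul_nonneg hs0 hb0.le)
  rw [hs'] at hU
  nlinarith

theorem large (a b : ℕ) (ha : 3 ≤ a) (ha' : a ≤ 10) (h : Nat.Coprime a b) (hb : 401 ≤ b)
    (vv Ba κ : ℝ) (hvv : 0 ≤ vv) (hBa : 0 ≤ Ba)
    (hcert : ∀ r x : ℕ, Nat.Coprime r a → 400 ≤ x → vv * x - Ba * EE x ≤ psiq a r x)
    (φ s1 : ℕ) (hφ : (VV a).card = φ) (hs1 : ∑ v ∈ VV a, v = s1)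
    (k1 : κ ≤ 2 * vv * φ - 1.01772) (k2 : κ ≤ 2 * vv * s1 - 1.01772 * (a - 1))
    (hnum : (2 * φ * Ba + 86) * EE (S a b) + 2 * vv * φ + 3.24 * √(S a b : ℕ) + 4 * log (S a b : ℕ) < κ * b) :
    Nat.primeCounting (S a b) < 2 * piStar a b := by
  have hab : 3 * b ≤ a * b := Nat.mul_le_mul_right _ ha
  set X := S a b with hXdef
  have hX : X ≤ (a - 1) * b := by
    rw [hXdef, S, Nat.sub_mul, one_mul]; omega
  have hXb : b ≤ X := by
    rw [hXdef, S]; omega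
  have hlX : 0 < log (X:ℝ) := log_pos (by exact_mod_cast (show 1 < X by omega))
  let w : ℕ → ℝ := fun n => (2 * (cc a b n : ℝ) - 1 + 2 * (if n ∣ a then 1 else 0)) * lp n
  have hw0 : ∀ n, (2 * (cc a b n : ℝ) - 1) * lp n ≤ w n := by
    intro n
    apply mul_le_mul_of_nonneg_right _ (lp_nonneg n)
    split_ifs <;> linarith
  have hWX : ∀ t, b ≤ t → t ≤ X → 4 * log (X:ℝ) < ∑ n ∈ Icc 1 t, w n := by
    intro t h1 h2
    have := W_main a b t X ha h hb vv Ba κ hvv hBa hcert φ s1 hφ hs1 k1 k2 hX h1 h2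
    have h3 : ∑ n ∈ Icc 1 t, (2 * (cc a b n : ℝ) - 1) * lp n ≤ ∑ n ∈ Icc 1 t, w n :=
      Finset.sum_le_sum (fun n _ => hw0 n)
    linarith
  have hpos : ∀ m, m ≤ X → 0 ≤ ∑ n ∈ Icc 1 m, w n := by
    intro m hm
    by_cases hmb : b ≤ m
    · have := hWX m hmb hm
      linarith
    · apply Finset.sum_nonneg
      intro n hn
      rw [mem_Icc] at hn
      by_cases hp : n.Prime
      · apply mul_nonneg _ (lp_nonneg n)
        by_cases hd : n ∣ a
        · rw [if_pos hd]
          have : (0:ℝ) ≤ cc a b n := Nat.cast_nonneg _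
          linarith
        · have := cc_pos_of_lt a b n (by omega) h ((Nat.Prime.coprime_iff_not_dvd hp).2 hd) (by omega)
          have : (1:ℝ) ≤ cc a b n := by exact_mod_cast this
          rw [if_neg hd]; linarith
      · simp [w, lp, hp]
  have hab2 := abel w (fun m => ⟨by simp [w, lp], by simp [w, lp], Or.inl trivial⟩) X (by omega) hpos
  have h4 : 4 < ∑ n ∈ Icc 1 X, w n / log n := by
    refine lt_of_lt_of_le ?_ hab2
    rw [lt_div_iff₀ hlX]
    exact hWX X hXb le_rfl
  have h5 : ∑ n ∈ Icc 1 X, w n / log n =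
      ∑ n ∈ (Icc 1 X).filter Nat.Prime, (2 * (cc a b n : ℝ) - 1 + 2 * (if n ∣ a then 1 else 0)) := by
    rw [Finset.sum_filter]
    apply Finset.sum_congr rfl
    intro n _
    by_cases hp : n.Prime
    · have : log (n:ℝ) ≠ 0 := (log_pos (by exact_mod_cast hp.one_lt)).ne'
      simp only [w, lp, hp, if_true]
      field_simp
    · simp [w, lp, hp]
  rw [h5, Finset.sum_add_distrib, Finset.sum_sub_distrib, ← Finset.mul_sum, ← Finset.mul_sum] at h4
  have h6 : ∑ n ∈ (Icc 1 X).filter Nat.Prime, (if n ∣ a then (1:ℝ) else 0) ≤ 2 := by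
    rw [← Finset.sum_filter, Finset.sum_const, nsmul_eq_mul, mul_one]
    have h7 : (((Icc 1 X).filter Nat.Prime).filter (· ∣ a)).card ≤ a.primeFactors.card := by
      apply Finset.card_le_card
      intro p hp
      simp only [mem_filter] at hp
      exact Nat.mem_primeFactors.2 ⟨hp.1.2, hp.2, by omega⟩
    have h8 : a.primeFactors.card ≤ 2 := by
      clear * - ha ha'
      have : ∀ a : ℕ, a < 11 → a.primeFactors.card ≤ 2 := by decide +kernel
      exact this a (by omega)
    exact_mod_cast h7.trans h8
  have h9 : ∑ n ∈ (Icc 1 X).filter Nat.Prime, (1:ℝ) = Nat.primeCounting X := by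
    rw [Finset.sum_const, nsmul_eq_mul, mul_one]
    congr 1
    rw [Nat.primeCounting, Nat.primeCounting', Nat.count_eq_card_filter_range]
    congr 1
    ext p
    simp only [mem_filter, mem_Icc, mem_range]
    constructor
    · rintro ⟨h1, h2⟩; exact ⟨by omega, h2⟩
    · rintro ⟨h1, h2⟩; exact ⟨⟨h2.one_lt.le, by omega⟩, h2⟩
  rw [h9] at h4
  have h10 := count_le_piStar a b X (by omega) h
  have h11 : (∑ n ∈ (Icc 1 X).filter Nat.Prime, (cc a b n : ℝ)) ≤ piStar a b := by exact_mod_cast h10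
  have h12 : (Nat.primeCounting X : ℝ) < 2 * piStar a b := by linarith
  exact_mod_cast h12

lemma S_le (a b : ℕ) (ha : 1 ≤ a) : (S a b : ℝ) ≤ ((a:ℝ) - 1) * b := by
  have h1 : S a b ≤ (a - 1) * b := by rw [S, Nat.sub_mul, one_mul]; omega
  have h2 : (S a b : ℝ) ≤ ((a - 1 : ℕ):ℝ) * b := by exact_mod_cast h1
  rwa [Nat.cast_sub (by omega), Nat.cast_one] at h2

lemma num_help (C d κ a1 x : ℝ) (X b : ℝ) (hC : 0 ≤ C) (hX0 : 0 < X) (hX : X ≤ a1 * b) (e : ℕ) (sq : ℝ) (hsq : 0 < sq) (he : 1 ≤ e)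
    (hxe : x = e * 0.6931471808 - 1)
    (hfin : (C / 2 + 4) * (a1 * b / 2 ^ e + x) + C * 2.7 + d + 3.24 * (a1 * b / (2 * sq) + sq / 2) < κ * b) :
    C * (log X / 2 + 2.7) + d + 3.24 * √X + 4 * log X < κ * b := by
  have h1 := log_tangent X (2 ^ e) hX0 (by positivity)
  rw [log_pow] at h1
  have h2 := log_two_lt_d9
  have he' : (0:ℝ) < e := by exact_mod_cast he
  have h3 : log X ≤ a1 * b / 2 ^ e + x := by
    have h4 : X / 2 ^ e ≤ a1 * b / 2 ^ e := by gcongr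
    have := mul_le_mul_of_nonneg_left h2.le he'.le
    rw [hxe]; linarith
  have h5 : √X ≤ a1 * b / (2 * sq) + sq / 2 := by
    have h6 : √X ≤ X / (2 * sq) + sq / 2 := by
      rw [show X / (2 * sq) + sq / 2 = (X + sq ^ 2) / (2 * sq) by field_simp]
      rw [le_div_iff₀ (by positivity)]
      nlinarith [sq_nonneg (√X - sq), Real.sq_sqrt hX0.le]
    have : X / (2 * sq) ≤ a1 * b / (2 * sq) := by gcongr
    linarith
  have h7 := mul_le_mul_of_nonneg_left h3 (show 0 ≤ C / 2 + 4 by linarith)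
  linarith

lemma S_pos (a b : ℕ) (ha : 3 ≤ a) (ha' : a ≤ 10) (hb : 401 ≤ b) : (0:ℝ) < (S a b : ℕ) := by
  have hab : 3 * b ≤ a * b := Nat.mul_le_mul_right _ ha
  have : 0 < S a b := by rw [S]; omega
  exact_mod_cast this

lemma large3 (b : ℕ) (h : Nat.Coprime 3 b) (hb : 131072 ≤ b) : Nat.primeCounting (S 3 b) < 2 * piStar 3 b := by
  refine large 3 b (by norm_num) (by norm_num) h (by omega) 0.4637 22.3 0.7467 (by norm_num) (by norm_num) c3_bd 2 3
    (by decide) (by decide) (by norm_num) (by norm_num) ?_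
  have hb' : (131072:ℝ) ≤ b := by exact_mod_cast hb
  refine num_help _ _ _ _ _ _ _ (by norm_num) (S_pos 3 b (by norm_num) (by norm_num) (by omega)) (S_le 3 b (by norm_num)) 20 1024 (by norm_num) (by norm_num) rfl ?_
  norm_num
  linarith

lemma large4 (b : ℕ) (h : Nat.Coprime 4 b) (hb : 131072 ≤ b) : Nat.primeCounting (S 4 b) < 2 * piStar 4 b := by
  refine large 4 b (by norm_num) (by norm_num) h (by omega) 0.4574 24.9 0.606 (by norm_num) (by norm_num) c4_bd 2 4
    (by decide) (by decide) (by norm_num) (by norm_num) ?_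
  have hb' : (131072:ℝ) ≤ b := by exact_mod_cast hb
  refine num_help _ _ _ _ _ _ _ (by norm_num) (S_pos 4 b (by norm_num) (by norm_num) (by omega)) (S_le 4 b (by norm_num)) 20 1024 (by norm_num) (by norm_num) rfl ?_
  norm_num
  linarith

lemma large5 (b : ℕ) (h : Nat.Coprime 5 b) (hb : 131072 ≤ b) : Nat.primeCounting (S 5 b) < 2 * piStar 5 b := by
  refine large 5 b (by norm_num) (by norm_num) h (by omega) 0.2327 120.25 0.5831 (by norm_num) (by norm_num) c5_bd 4 10
    (by decide) (by decide) (by norm_num) (by norm_num) ?_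
  have hb' : (131072:ℝ) ≤ b := by exact_mod_cast hb
  refine num_help _ _ _ _ _ _ _ (by norm_num) (S_pos 5 b (by norm_num) (by norm_num) (by omega)) (S_le 5 b (by norm_num)) 20 1024 (by norm_num) (by norm_num) rfl ?_
  norm_num
  linarith

lemma large6 (b : ℕ) (h : Nat.Coprime 6 b) (hb : 131072 ≤ b) : Nat.primeCounting (S 6 b) < 2 * piStar 6 b := by
  refine large 6 b (by norm_num) (by norm_num) h (by omega) 0.4602 44.4 0.4338 (by norm_num) (by norm_num) c6_bd 2 6
    (by decide) (by decide) (by norm_num) (by norm_num) ?_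
  have hb' : (131072:ℝ) ≤ b := by exact_mod_cast hb
  refine num_help _ _ _ _ _ _ _ (by norm_num) (S_pos 6 b (by norm_num) (by norm_num) (by omega)) (S_le 6 b (by norm_num)) 20 1024 (by norm_num) (by norm_num) rfl ?_
  norm_num
  linarith

lemma large7 (b : ℕ) (h : Nat.Coprime 7 b) (hb : 131072 ≤ b) : Nat.primeCounting (S 7 b) < 2 * piStar 7 b := by
  refine large 7 b (by norm_num) (by norm_num) h (by omega) 0.1501 130.05 0.1978 (by norm_num) (by norm_num) c7_bd 6 21
    (by decide) (by decide) (by norm_num) (by norm_num) ?_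
  have hb' : (131072:ℝ) ≤ b := by exact_mod_cast hb
  refine num_help _ _ _ _ _ _ _ (by norm_num) (S_pos 7 b (by norm_num) (by norm_num) (by omega)) (S_le 7 b (by norm_num)) 20 1024 (by norm_num) (by norm_num) rfl ?_
  norm_num
  linarith

lemma large8 (b : ℕ) (h : Nat.Coprime 8 b) (hb : 131072 ≤ b) : Nat.primeCounting (S 8 b) < 2 * piStar 8 b := by
  refine large 8 b (by norm_num) (by norm_num) h (by omega) 0.2313 99.9 0.2775 (by norm_num) (by norm_num) c8_bd 4 16
    (by decide) (by decide) (by norm_num) (by norm_num) ?_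
  have hb' : (131072:ℝ) ≤ b := by exact_mod_cast hb
  refine num_help _ _ _ _ _ _ _ (by norm_num) (S_pos 8 b (by norm_num) (by norm_num) (by omega)) (S_le 8 b (by norm_num)) 20 1024 (by norm_num) (by norm_num) rfl ?_
  norm_num
  linarith

lemma large9 (b : ℕ) (h : Nat.Coprime 9 b) (hb : 262144 ≤ b) : Nat.primeCounting (S 9 b) < 2 * piStar 9 b := by
  refine large 9 b (by norm_num) (by norm_num) h (by omega) 0.15249 116.55 0.0927 (by norm_num) (by norm_num) c9_bd 6 27
    (by decide) (by decide) (by norm_num) (by norm_num) ?_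
  have hb' : (262144:ℝ) ≤ b := by exact_mod_cast hb
  refine num_help _ _ _ _ _ _ _ (by norm_num) (S_pos 9 b (by norm_num) (by norm_num) (by omega)) (S_le 9 b (by norm_num)) 21 1448 (by norm_num) (by norm_num) rfl ?_
  norm_num
  linarith

lemma large10 (b : ℕ) (h : Nat.Coprime 10 b) (hb : 131072 ≤ b) : Nat.primeCounting (S 10 b) < 2 * piStar 10 b := by
  refine large 10 b (by norm_num) (by norm_num) h (by omega) 0.2332 126.75 0.1685 (by norm_num) (by norm_num) c10_bd 4 20
    (by decide) (by decide) (by norm_num) (by norm_num) ?_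
  have hb' : (131072:ℝ) ≤ b := by exact_mod_cast hb
  refine num_help _ _ _ _ _ _ _ (by norm_num) (S_pos 10 b (by norm_num) (by norm_num) (by omega)) (S_le 10 b (by norm_num)) 20 1024 (by norm_num) (by norm_num) rfl ?_
  norm_num
  linarith

end PS

namespace PS
open Finset

def mk (d : ℕ) : ℕ → ℕ
  | 0 => 1 <<< (2 * d)
  | t + 1 => force (mk d t) (fun g => g ||| g <<< (d * 2 ^ t))

def sv : ℕ → ℕ
  | 0 => 0
  | k + 1 => cond (Nat.ble 38 (k + 2) && Nat.blt 1 (Nat.gcd (k + 2) 7420738134810)) (sv k)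
      (force (sv k) (fun c => c ||| mk (k + 2) (21 - Nat.log2 (k + 2))))

def PP : ℕ := (2 ^ 2097152 - 1) ^^^ (sv 1447 ||| 3)

def sumc (Q M a r m : ℕ) : ℕ :=
  Nat.rec 0 (fun i ih => Nat.add ih (Nat.land (Nat.shiftRight Q (Nat.add r (Nat.mul a i))) M)) m

def cntc (P M a m r x : ℕ) : ℕ :=
  force (P &&& (1 <<< x - 1)) (fun Q => sumc Q M a r m % (2 ^ (a * m) - 1))

def find (r : ℕ) : List (ℕ × ℕ) → ℕ
  | [] => 0
  | e :: l => cond (Nat.beq e.1 r) e.2 (find r l)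

def tab (D : ℕ → ℕ) : List ℕ → (List (ℕ × ℕ) → Bool) → Bool
  | [], k => k []
  | r :: l, k => force (D r) (fun d => tab D l (fun L => k ((r, d) :: L)))

/-- prefix digit sum of a packed number -/
def pref (w d j : ℕ) : ℕ := (d &&& (1 <<< (w * j) - 1)) % (2 ^ w - 1)

def sumv (low : ℕ → ℕ → ℕ) (a ρ B : ℕ) : List ℕ → ℕ
  | [] => 0
  | v :: l => low ((ρ * v) % a) (B * v) + sumv low a ρ B l

def allr (low : ℕ → ℕ → ℕ) (a B p : ℕ) (vs : List ℕ) : List ℕ → Bool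
  | [] => true
  | ρ :: l => Nat.blt p (2 * sumv low a ρ B vs) && allr low a B p vs l

def step1 (q B b0 : ℕ) : ℕ := cond (Nat.ble (B + B / q) b0) (B + B / q) b0

def chk (low : ℕ → ℕ → ℕ) (up : ℕ → ℕ) (a q b0 : ℕ) (vs : List ℕ) : ℕ → ℕ → Bool
  | 0, B => Nat.ble b0 B
  | f + 1, B => Nat.ble b0 B ||
      force (step1 q B b0) (fun B1 =>
        force (up (a * B1 - a - B1 + 1)) (fun p => allr low a B p vs vs) &&
        force (B1 + 1) (fun B' => chk low up a q b0 vs f B'))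

def chkA (P P0 M1 D1 a m b0 L : ℕ) (vs : List ℕ) : Bool :=
  force (geo (a * m) 1 11) (fun M0 =>
    chk (fun r x => cntc P0 M0 a m r x) (fun x => cntc P0 M1 1 22 0 x) a 16 2048 vs 100 L) &&
  force (geo (a * m) 1 17) (fun M =>
    tab (fun r => sumc P M a r m) vs (fun T =>
      chk (fun r x => pref (a * m) (find r T) (x / (a * m))) (fun x => pref 22 D1 (x / 22 + 1)) a 8 b0 vs 100 2048))

def chkAll : Bool :=
  force PP (fun P => force (P &&& (2 ^ 32768 - 1)) (fun P0 => force (geo 22 1 11) (fun M1 =>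
    force (sumc P (geo 22 1 17) 1 0 22) (fun D1 =>
    chkA P P0 M1 D1 3 7 131072 6 [1, 2] &&
    (chkA P P0 M1 D1 4 5 131072 5 [1, 3] &&
    (chkA P P0 M1 D1 5 4 131072 6 [1, 2, 3, 4] &&
    (chkA P P0 M1 D1 6 4 131072 13 [1, 5] &&
    (chkA P P0 M1 D1 7 3 131072 8 [1, 2, 3, 4, 5, 6] &&
    (chkA P P0 M1 D1 8 3 131072 9 [1, 3, 5, 7] &&
    (chkA P P0 M1 D1 9 3 262144 10 [1, 2, 4, 5, 7, 8] &&
    chkA P P0 M1 D1 10 2 131072 11 [1, 3, 7, 9])))))))))) 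

set_option maxRecDepth 100000 in
lemma chkAll_ok : chkAll = true := by decide +kernel
end PS

namespace PS
open Finset

lemma mk_testBit (d t n : ℕ) : (mk d t).testBit n = true ↔ ∃ i < 2 ^ t, n = 2 * d + d * i := by
  induction t generalizing n with
  | zero =>
    rw [mk, Nat.shiftLeft_eq, one_mul, Nat.testBit_two_pow]
    simp only [decide_eq_true_eq, pow_zero, Nat.lt_one_iff, exists_eq_left, mul_zero, add_zero]
    exact eq_comm
  | succ t ih =>
    rw [mk, force_eq, Nat.testBit_or, Bool.or_eq_true, ih, Nat.testBit_shiftLeft, Bool.and_eq_true, ih]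
    simp only [decide_eq_true_eq]
    constructor
    · rintro (⟨i, hi, rfl⟩ | ⟨h1, i, hi, h2⟩)
      · exact ⟨i, by rw [pow_succ]; omega, rfl⟩
      · refine ⟨2 ^ t + i, by rw [pow_succ]; omega, ?_⟩
        rw [mul_add]; omega
    · rintro ⟨i, hi, rfl⟩
      rw [pow_succ] at hi
      by_cases h : i < 2 ^ t
      · exact Or.inl ⟨i, h, rfl⟩
      · right
        obtain ⟨j, rfl⟩ := Nat.exists_eq_add_of_le (not_lt.1 h)
        rw [mul_add]
        exact ⟨by omega, j, by omega, by omega⟩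

lemma sv_comp (k n : ℕ) (h : (sv k).testBit n = true) : ∃ d, 2 ≤ d ∧ ∃ i, n = 2 * d + d * i := by
  induction k with
  | zero => simp [sv] at h
  | succ k ih =>
    rw [sv] at h
    cases hc : (Nat.ble 38 (k + 2) && Nat.blt 1 (Nat.gcd (k + 2) 7420738134810)) with
    | true => rw [hc] at h; exact ih h
    | false =>
      rw [hc, cond_false, force_eq, Nat.testBit_or, Bool.or_eq_true, mk_testBit] at h
      rcases h with h | ⟨i, _, hi⟩
      · exact ih h
      · exact ⟨k + 2, by omega, i, hi⟩

lemma keep_prime (p : ℕ) (hp : p.Prime) (h38 : 38 ≤ p) : Nat.gcd p 7420738134810 = 1 := by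
  apply (Nat.Prime.coprime_iff_not_dvd hp).2
  intro h
  rw [show 7420738134810 = 2 * 3 * 5 * 7 * 11 * 13 * 17 * 19 * 23 * 29 * 31 * 37 by norm_num] at h
  simp only [hp.dvd_mul] at h
  have : ∀ m, 1 ≤ m → m < 38 → ¬ p ∣ m := fun m h1 h2 h3 => by
    have := Nat.le_of_dvd h1 h3
    omega
  rcases h with (((((((((((h | h) | h) | h) | h) | h) | h) | h) | h) | h) | h) | h) <;>
    exact this _ (by norm_num) (by norm_num) h

lemma sv_prime (k n p i : ℕ) (hn : n < 2 ^ 21) (hp : p.Prime) (hk : p ≤ k + 1) (h : n = 2 * p + p * i) :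
    (sv k).testBit n = true := by
  induction k with
  | zero => have := hp.two_le; omega
  | succ k ih =>
    rw [sv]
    by_cases hpk : p = k + 2
    · have hc : (Nat.ble 38 (k + 2) && Nat.blt 1 (Nat.gcd (k + 2) 7420738134810)) = false := by
        rw [Bool.and_eq_false_iff]
        by_cases h38 : 38 ≤ p
        · right
          rw [← hpk, keep_prime p hp h38]; rfl
        · left
          rw [← hpk]
          exact Bool.eq_false_iff.2 (fun hh => h38 (Nat.le_of_ble_eq_true hh))
      rw [hc, cond_false, force_eq, Nat.testBit_or, Bool.or_eq_true, mk_testBit]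
      right
      refine ⟨i, ?_, by rw [← hpk]; exact h⟩
      rw [← hpk]
      have := range_enough p 21 (p * i) (by omega) (by omega)
      rwa [Nat.mul_div_cancel_left _ (by omega)] at this
    · have hi := ih (by omega)
      cases hc : (Nat.ble 38 (k + 2) && Nat.blt 1 (Nat.gcd (k + 2) 7420738134810)) with
      | true => exact hi
      | false => rw [cond_false, force_eq, Nat.testBit_or, hi, Bool.true_or]

lemma PP_spec (n : ℕ) (hn : n < 2 ^ 21) : PP.testBit n = true ↔ n.Prime := by
  rw [PP, Nat.testBit_xor, Nat.testBit_two_pow_sub_one, Nat.testBit_or]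
  rw [show decide (n < 2097152) = true from decide_eq_true (by norm_num at hn; exact hn), Bool.true_xor]
  rw [Bool.not_eq_true', Bool.or_eq_false_iff]
  have h3 : Nat.testBit 3 n = decide (n < 2) := by
    rw [show 3 = 2 ^ 2 - 1 by norm_num, Nat.testBit_two_pow_sub_one]
  rw [h3, decide_eq_false_iff_not]
  constructor
  · rintro ⟨h1, h2⟩
    by_contra hc
    have hm := Nat.minFac_prime (show n ≠ 1 by omega)
    have hsq := Nat.minFac_sq_le_self (show 0 < n by omega) hc
    obtain ⟨e, he⟩ := Nat.minFac_dvd n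
    have hlt : n.minFac < 1449 := by
      by_contra hh
      have : 1449 ^ 2 ≤ n.minFac ^ 2 := Nat.pow_le_pow_left (not_lt.1 hh) 2
      norm_num at hn this; omega
    have he2 : 2 ≤ e := by
      by_contra hh
      have he' : e = 0 ∨ e = 1 := by omega
      rcases he' with rfl | rfl
      · omega
      · apply hc; rw [he, mul_one]; exact hm
    obtain ⟨j, rfl⟩ := Nat.exists_eq_add_of_le he2
    have := sv_prime 1447 n n.minFac j hn hm (by omega) (by rw [mul_add] at he; omega)
    rw [h1] at this; exact absurd this (by simp)
  · intro hp
    refine ⟨?_, not_lt.2 hp.two_le⟩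
    by_contra hc
    obtain ⟨d, hd, i, hi⟩ := sv_comp 1447 n (by simpa using hc)
    have hdn : d ∣ n := ⟨2 + i, by rw [hi]; ring⟩
    rcases (Nat.dvd_prime hp).1 hdn with h | h
    · omega
    · have : 0 ≤ d * i := Nat.zero_le _
      omega

/-! popcount -/
def bt (Q n : ℕ) : ℕ := if Q.testBit n then 1 else 0

lemma and_geo (w : ℕ) (hw : 1 ≤ w) (x J : ℕ) :
    x &&& (∑ j ∈ range J, 2 ^ (w * j)) = ∑ j ∈ range J, bt x (w * j) * 2 ^ (w * j) := by
  induction J with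
  | zero => simp
  | succ J ih =>
    have hlt : ∑ j ∈ range J, 2 ^ (w * j) < 2 ^ (w * J) := by
      have := digits_lt w (fun _ => 1) (fun _ => Nat.one_lt_two_pow (by omega)) J
      simpa using this
    have e1 := Nat.two_pow_add_eq_or_of_lt hlt 1
    simp only [mul_one] at e1
    rw [Finset.sum_range_succ, Finset.sum_range_succ, ← ih,
      add_comm (∑ j ∈ range J, 2 ^ (w * j)), e1, Nat.and_or_distrib_left, Nat.and_two_pow, bt]
    cases hx : x.testBit (w * J) with
    | false => simp
    | true =>
      have hlt2 : x &&& ∑ j ∈ range J, 2 ^ (w * j) < 2 ^ (w * J) := lt_of_le_of_lt Nat.and_le_right hlt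
      have := Nat.two_pow_add_eq_or_of_lt hlt2 1
      simp only [mul_one] at this
      simp only [Bool.toNat_true, one_mul, if_true]
      rw [← this, add_comm]

lemma pow_modEq (w j : ℕ) : 2 ^ (w * j) ≡ 1 [MOD 2 ^ w - 1] := by
  rw [pow_mul]
  have h : 2 ^ w ≡ 1 [MOD 2 ^ w - 1] := by
    have h1 : (1:ℕ) ≤ 2 ^ w := Nat.one_le_two_pow
    exact ((Nat.modEq_iff_dvd' h1).2 dvd_rfl).symm
  simpa using h.pow j

lemma geo_sum (w t : ℕ) : geo w 1 t = ∑ j ∈ range (2 ^ t), 2 ^ (w * j) := by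
  rw [geo_eval, geoP, Polynomial.eval_finsetSum]
  apply Finset.sum_congr rfl; intro i _
  simp [pow_mul]

lemma sumc_eq (w : ℕ) (hw : 1 ≤ w) (Q a r t m : ℕ) :
    sumc Q (geo w 1 t) a r m = ∑ j ∈ range (2 ^ t), (∑ i ∈ range m, bt Q (r + a * i + w * j)) * 2 ^ (w * j) := by
  induction m with
  | zero => simp [sumc]
  | succ m ih =>
    have : sumc Q (geo w 1 t) a r (m + 1) = sumc Q (geo w 1 t) a r m + ((Q >>> (r + a * m)) &&& geo w 1 t) := rfl
    rw [this, ih, geo_sum, and_geo w hw, ← Finset.sum_add_distrib]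
    apply Finset.sum_congr rfl
    intro j _
    rw [Finset.sum_range_succ, add_mul]
    congr 2
    rw [bt, bt, Nat.testBit_shiftRight]

lemma sum_digit_mod (w J : ℕ) (d : ℕ → ℕ) (h : ∑ j ∈ range J, d j < 2 ^ w - 1) :
    (∑ j ∈ range J, d j * 2 ^ (w * j)) % (2 ^ w - 1) = ∑ j ∈ range J, d j := by
  have h1 : ∑ j ∈ range J, d j * 2 ^ (w * j) ≡ ∑ j ∈ range J, d j [MOD 2 ^ w - 1] := by
    clear h
    induction J with
    | zero => rfl
    | succ J ih =>
      rw [Finset.sum_range_succ, Finset.sum_range_succ]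
      apply ih.add
      simpa using (pow_modEq w J).mul_left (d J)
  rw [h1, Nat.mod_eq_of_lt h]

lemma bt_le (Q n : ℕ) : bt Q n ≤ 1 := by unfold bt; split_ifs <;> omega

lemma dbl_sum (a m J : ℕ) (f : ℕ → ℕ) :
    ∑ j ∈ range J, ∑ i ∈ range m, f (a * i + a * m * j) = ∑ k ∈ range (m * J), f (a * k) := by
  induction J with
  | zero => simp
  | succ J ih =>
    rw [Finset.sum_range_succ, ih, mul_add, mul_one, Finset.sum_range_add]
    congr 1
    apply Finset.sum_congr rfl
    intro i _
    congr 1; ring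

lemma class_card (Q a r K : ℕ) (ha : 1 ≤ a) (hr : r < a) :
    ∑ k ∈ range K, bt Q (r + a * k) = ((range (a * K)).filter (fun n => Q.testBit n = true ∧ n % a = r)).card := by
  unfold bt
  rw [← Finset.card_filter]
  apply Finset.card_bij' (fun k _ => r + a * k) (fun n _ => n / a)
  · intro k hk
    simp only [mem_filter, mem_range] at hk ⊢
    refine ⟨?_, hk.2, by rw [Nat.add_mul_mod_self_left, Nat.mod_eq_of_lt hr]⟩
    have : a * (k + 1) ≤ a * K := Nat.mul_le_mul_left _ hk.1
    rw [mul_add] at this; omega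
  · intro n hn
    simp only [mem_filter, mem_range] at hn ⊢
    have h1 := Nat.mod_add_div n a
    rw [hn.2.2] at h1
    refine ⟨?_, by rw [h1]; exact hn.2.1⟩
    rw [Nat.div_lt_iff_lt_mul (by omega), mul_comm]; exact hn.1
  · intro k hk
    rw [Nat.add_mul_div_left _ _ (by omega), Nat.div_eq_of_lt hr, zero_add]
  · intro n hn
    simp only [mem_filter, mem_range] at hn
    have h1 := Nat.mod_add_div n a
    rw [hn.2.2] at h1; exact h1

lemma pref_eq (P a m r t j : ℕ) (ha : 1 ≤ a) (hm : 1 ≤ m) (hr : r < a) (hmJ : m * 2 ^ t < 2 ^ (a * m) - 1) (hm2 : m < 2 ^ (a * m)) (hj : j ≤ 2 ^ t) :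
    pref (a * m) (sumc P (geo (a * m) 1 t) a r m) j =
      ((range (a * (m * j))).filter (fun n => P.testBit n = true ∧ n % a = r)).card := by
  have hw : 1 ≤ a * m := Nat.mul_pos ha hm
  rw [pref, Nat.shiftLeft_eq, one_mul, Nat.and_two_pow_sub_one_eq_mod, sumc_eq _ hw]
  set d : ℕ → ℕ := fun j => ∑ i ∈ range m, bt P (r + a * i + a * m * j) with hd
  have hdm : ∀ j, d j ≤ m := fun j => by
    calc d j ≤ ∑ i ∈ range m, 1 := Finset.sum_le_sum (fun i _ => bt_le _ _)
      _ = m := by simp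
  have hsplit : (∑ j ∈ range (2 ^ t), d j * 2 ^ (a * m * j)) % 2 ^ (a * m * j) = ∑ j ∈ range j, d j * 2 ^ (a * m * j) := by
    obtain ⟨e, he⟩ := Nat.exists_eq_add_of_le hj
    rw [he, Finset.sum_range_add]
    have : ∑ x ∈ range e, d (j + x) * 2 ^ (a * m * (j + x)) = 2 ^ (a * m * j) * ∑ x ∈ range e, d (j + x) * 2 ^ (a * m * x) := by
      rw [Finset.mul_sum]; apply Finset.sum_congr rfl; intro x _; rw [mul_add, pow_add]; ring
    rw [this, Nat.add_mul_mod_self_left, Nat.mod_eq_of_lt]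
    exact digits_lt (a * m) d (fun n => (hdm n).trans_lt hm2) j
  change (∑ j ∈ range (2 ^ t), d j * 2 ^ (a * m * j)) % 2 ^ (a * m * j) % (2 ^ (a * m) - 1) = _
  rw [hsplit, sum_digit_mod]
  · rw [← class_card P a r (m * j) ha hr]
    have := dbl_sum a m j (fun z => bt P (r + z))
    simp only [← add_assoc] at this
    exact this
  · refine lt_of_le_of_lt ?_ hmJ
    calc ∑ j ∈ range j, d j ≤ ∑ j ∈ range j, m := Finset.sum_le_sum (fun i _ => hdm _)
      _ = m * j := by simp [mul_comm]
      _ ≤ m * 2 ^ t := Nat.mul_le_mul_left _ hj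

lemma cntc_eq (P a m r t x : ℕ) (ha : 1 ≤ a) (hm : 1 ≤ m) (hr : r < a) (hmJ : m * 2 ^ t < 2 ^ (a * m) - 1)
    (hx : x ≤ a * (m * 2 ^ t)) :
    cntc P (geo (a * m) 1 t) a m r x = ((range x).filter (fun n => P.testBit n = true ∧ n % a = r)).card := by
  have hw : 1 ≤ a * m := Nat.mul_pos ha hm
  rw [cntc, force_eq, Nat.shiftLeft_eq, one_mul, Nat.and_two_pow_sub_one_eq_mod, sumc_eq _ hw, sum_digit_mod]
  · have := dbl_sum a m (2 ^ t) (fun z => bt (P % 2 ^ x) (r + z))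
    simp only [← add_assoc] at this
    rw [this, class_card _ a r _ ha hr]
    congr 1
    ext n
    simp only [mem_filter, mem_range, Nat.testBit_mod_two_pow, Bool.and_eq_true, decide_eq_true_eq]
    constructor
    · rintro ⟨_, ⟨h1, h2⟩, h3⟩; exact ⟨h1, h2, h3⟩
    · rintro ⟨h1, h2, h3⟩; exact ⟨by omega, ⟨h1, h2⟩, h3⟩
  · refine lt_of_le_of_lt ?_ hmJ
    calc _ ≤ ∑ j ∈ range (2 ^ t), m := Finset.sum_le_sum (fun j _ => by
            calc _ ≤ ∑ i ∈ range m, 1 := Finset.sum_le_sum (fun i _ => bt_le _ _)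
              _ = m := by simp)
      _ = m * 2 ^ t := by simp [mul_comm]
end PS

namespace PS
open Finset

def kc (a r x : ℕ) : ℕ := ((range x).filter (fun n => n.Prime ∧ n % a = r)).card

lemma kc_sum (a b B : ℕ) (ha : 1 ≤ a) (h : Nat.Coprime a b) (hB : B ≤ b) :
    ∑ v ∈ VV a, kc a ((b % a * v) % a) (B * v) ≤ piStar a b := by
  refine le_trans ?_ (count_le_piStar a b (a * b) ha h)
  have h1 : ∀ v ∈ VV a, kc a ((b % a * v) % a) (B * v) ≤
      ∑ p ∈ (Icc 1 (a * b)).filter Nat.Prime, if (p % a = (b * v) % a ∧ p < b * v) then 1 else 0 := by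
    intro v hv
    rw [mem_VV] at hv
    rw [← Finset.card_filter, kc]
    apply Finset.card_le_card
    intro p hp
    simp only [mem_filter, mem_range, mem_Icc] at hp ⊢
    obtain ⟨h1, h2, h3⟩ := hp
    have h4 : p < b * v := lt_of_lt_of_le h1 (Nat.mul_le_mul_right _ hB)
    have h5 : b * v ≤ a * b := by rw [mul_comm a]; exact Nat.mul_le_mul_left _ (by omega)
    refine ⟨⟨⟨h2.one_lt.le, by omega⟩, h2⟩, ?_, h4⟩
    rw [h3, Nat.mod_mul_mod]
  refine (Finset.sum_le_sum h1).trans (le_of_eq ?_)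
  rw [Finset.sum_comm]
  apply Finset.sum_congr rfl
  intro n _
  rw [cc, Finset.card_filter]

lemma sumv_eq (low : ℕ → ℕ → ℕ) (a ρ B : ℕ) (vs : List ℕ) (hn : vs.Nodup) :
    sumv low a ρ B vs = ∑ v ∈ vs.toFinset, low ((ρ * v) % a) (B * v) := by
  induction vs with
  | nil => simp [sumv]
  | cons v l ih =>
    rw [List.nodup_cons] at hn
    rw [sumv, ih hn.2, List.toFinset_cons, Finset.sum_insert (by simpa using hn.1)]

lemma allr_mem (low : ℕ → ℕ → ℕ) (a B p : ℕ) (vs l : List ℕ) (h : allr low a B p vs l = true) :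
    ∀ ρ ∈ l, p < 2 * sumv low a ρ B vs := by
  induction l with
  | nil => simp
  | cons v l ih =>
    rw [allr, Bool.and_eq_true] at h
    intro ρ hρ
    rcases List.mem_cons.1 hρ with rfl | hρ
    · exact Eq.mp Nat.blt_eq h.1
    · exact ih h.2 ρ hρ

lemma pc_eq (X : ℕ) : Nat.primeCounting X = ((range (X + 1)).filter Nat.Prime).card := by
  rw [Nat.primeCounting, Nat.primeCounting', Nat.count_eq_card_filter_range]

lemma chk_sound (low : ℕ → ℕ → ℕ) (up : ℕ → ℕ) (a q b0 XB : ℕ) (vs : List ℕ) (ha : 2 ≤ a)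
    (hXB : (a - 1) * b0 ≤ XB)
    (Hlow : ∀ r x, r < a → x ≤ XB → low r x ≤ kc a r x)
    (Hup : ∀ x, x ≤ XB → ((range x).filter Nat.Prime).card ≤ up x)
    (hvs : vs.toFinset = VV a) (hn : vs.Nodup) (f B : ℕ)
    (hc : chk low up a q b0 vs f B = true) (b : ℕ) (hb : B ≤ b) (hb0 : b < b0) (h : Nat.Coprime a b) :
    Nat.primeCounting (S a b) < 2 * piStar a b := by
  induction f generalizing B with
  | zero =>
    rw [chk, Nat.ble_eq] at hc; omega
  | succ f ih =>
    rw [chk, force_eq, force_eq, force_eq, Bool.or_eq_true, Bool.and_eq_true, Nat.ble_eq] at hc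
    rcases hc with hc | ⟨h1, h2⟩
    · omega
    by_cases hB1 : step1 q B b0 + 1 ≤ b
    · exact ih _ h2 hB1
    · have hs : step1 q B b0 ≤ b0 := by
        unfold step1
        cases hq : Nat.ble (B + B / q) b0 with
        | false => exact le_rfl
        | true => exact Nat.le_of_ble_eq_true hq
      set B1 := step1 q B b0 with hB1d
      have hmem : b % a ∈ vs := by
        rw [← List.mem_toFinset, hvs, mem_VV]
        have hlt := Nat.mod_lt b (show a > 0 by omega)
        have hco : Nat.Coprime (b % a) a := by
          rw [Nat.Coprime, ← Nat.gcd_rec]; exact h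
        refine ⟨⟨?_, by omega⟩, hco⟩
        by_contra h0
        have h0' : b % a = 0 := by omega
        rw [h0'] at hco
        simp at hco; omega
      have h3 := allr_mem _ _ _ _ _ _ h1 _ hmem
      rw [sumv_eq _ _ _ _ _ hn, hvs] at h3
      have h4 : ∑ v ∈ VV a, low ((b % a * v) % a) (B * v) ≤ piStar a b := by
        refine le_trans (Finset.sum_le_sum ?_) (kc_sum a b B (by omega) h hb)
        intro v hv
        rw [mem_VV] at hv
        apply Hlow _ _ (Nat.mod_lt _ (by omega))
        refine le_trans ?_ hXB
        rw [mul_comm]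
        exact Nat.mul_le_mul hv.1.2 (by omega)
      have e : ∀ c, a * c - a - c = (a - 1) * c - a := by
        intro c; rw [Nat.sub_mul, one_mul]; omega
      have hm1 : (a - 1) * b ≤ (a - 1) * B1 := Nat.mul_le_mul_left _ (by omega)
      have hm2 : (a - 1) * B1 ≤ (a - 1) * b0 := Nat.mul_le_mul_left _ hs
      have hm3 : (a - 1) * 1 ≤ (a - 1) * b0 := Nat.mul_le_mul_left _ (by omega)
      have h5 : Nat.primeCounting (S a b) ≤ up (a * B1 - a - B1 + 1) := by
        refine le_trans ?_ (Hup _ (by rw [e]; omega))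
        rw [pc_eq, S]
        apply Finset.card_le_card
        apply Finset.filter_subset_filter
        apply Finset.range_mono
        rw [e, e]; omega
      omega

lemma tab_eq (D : ℕ → ℕ) (rs : List ℕ) (k : List (ℕ × ℕ) → Bool) :
    tab D rs k = k (rs.map (fun r => (r, D r))) := by
  induction rs generalizing k with
  | nil => rfl
  | cons r l ih => rw [tab, force_eq, ih, List.map_cons]

lemma find_eq (D : ℕ → ℕ) (rs : List ℕ) (r : ℕ) :
    find r (rs.map (fun r => (r, D r))) = 0 ∨ find r (rs.map (fun r => (r, D r))) = D r := by
  induction rs with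
  | nil => left; rfl
  | cons s l ih =>
    rw [List.map_cons, find]
    cases hs : Nat.beq s r with
    | false => simpa using ih
    | true =>
      right
      have := Nat.eq_of_beq_eq_true hs
      rw [cond_true, this]

lemma card_conv (P X a r x : ℕ) (hx : x ≤ X) (hP : ∀ n, n < X → (P.testBit n = true ↔ n.Prime)) :
    ((range x).filter (fun n => P.testBit n = true ∧ n % a = r)).card = kc a r x := by
  unfold kc
  congr 1
  apply Finset.filter_congr
  intro n hn
  rw [mem_range] at hn
  rw [hP n (by omega)]

lemma kc_one (x : ℕ) : kc 1 0 x = ((range x).filter Nat.Prime).card := by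
  unfold kc
  simp [Nat.mod_one]

lemma chkA_sound (P P0 a m b0 L : ℕ) (vs : List ℕ) (ha : 2 ≤ a) (hm : 1 ≤ m)
    (hP : ∀ n, n < 2097152 → (P.testBit n = true ↔ n.Prime))
    (hP0 : ∀ n, n < 32768 → (P0.testBit n = true ↔ n.Prime))
    (ha10 : a ≤ 10) (hb0 : (a - 1) * b0 ≤ 2097152) (h1 : m * 131072 < 2 ^ (a * m) - 1)
    (h2 : 20 ≤ a * m)
    (hvs : vs.toFinset = VV a) (hn : vs.Nodup)
    (hc : chkA P P0 (geo 22 1 11) (sumc P (geo 22 1 17) 1 0 22) a m b0 L vs = true)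
    (b : ℕ) (hb : L ≤ b) (hbb : b < b0) (h : Nat.Coprime a b) :
    Nat.primeCounting (S a b) < 2 * piStar a b := by
  rw [chkA, Bool.and_eq_true, force_eq, force_eq, tab_eq] at hc
  obtain ⟨c1, c2⟩ := hc
  have hpow : m < 2 ^ (a * m) := by omega
  have hJ1 : m * 2 ^ 11 < 2 ^ (a * m) - 1 := lt_of_le_of_lt (Nat.mul_le_mul_left _ (by norm_num)) h1
  have hJ2 : m * 2 ^ 17 < 2 ^ (a * m) - 1 := lt_of_le_of_lt (Nat.mul_le_mul_left _ (by norm_num)) h1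
  have hJ3 : ∀ x, x ≤ 32768 → x ≤ a * (m * 2 ^ 11) := by
    intro x hx
    rw [← mul_assoc]
    exact hx.trans (le_trans (by norm_num) (Nat.mul_le_mul_right (2 ^ 11) h2))
  rcases lt_or_ge b 2048 with hlt | hge
  · refine chk_sound _ _ a 16 2048 32768 vs ha (by omega) ?_ ?_ hvs hn 100 L c1 b hb hlt h
    · intro r x hr hx
      rw [cntc_eq P0 a m r 11 x (by omega) hm hr hJ1 (hJ3 x hx),
        card_conv P0 32768 a r x hx hP0]
    · intro x hx
      have := cntc_eq P0 1 22 0 11 x (by norm_num) (by norm_num) (by norm_num) (by norm_num) (by norm_num; omega)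
      rw [one_mul] at this
      rw [this, card_conv P0 32768 1 0 x hx hP0, kc_one]
  · refine chk_sound _ _ a 8 b0 2097152 vs ha hb0 ?_ ?_ hvs hn 100 2048 c2 b hge hbb h
    · intro r x hr hx
      rcases find_eq (fun r => sumc P (geo (a * m) 1 17) a r m) vs r with e | e
      · rw [e, pref]; simp
      · rw [e]
        have hj : x / (a * m) ≤ 2 ^ 17 := by
          refine le_trans (Nat.div_le_div_left h2 (by norm_num)) ?_
          norm_num; omega
        rw [pref_eq P a m r 17 _ (by omega) hm hr hJ2 hpow hj]
        have hle : a * (m * (x / (a * m))) ≤ x := by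
          rw [← mul_assoc]; exact Nat.mul_div_le _ _
        rw [card_conv P 2097152 a r _ (hle.trans hx) hP, kc, kc]
        exact Finset.card_le_card (Finset.filter_subset_filter _ (Finset.range_mono hle))
    · intro x hx
      have := pref_eq P 1 22 0 17 (x / 22 + 1) (by norm_num) (by norm_num) (by norm_num) (by norm_num) (by norm_num) (by norm_num; omega)
      rw [one_mul] at this
      rw [this, ← kc_one, ← card_conv P 2097152 1 0 x hx hP]
      apply Finset.card_le_card (Finset.filter_subset_filter _ (Finset.range_mono ?_))
      rw [one_mul]; omega

lemma PP_spec' (P : ℕ) (hP : P = PP) (n : ℕ) (hn : n < 2097152) : P.testBit n = true ↔ n.Prime := by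
  rw [hP]
  exact PP_spec n (lt_of_lt_of_le hn (by norm_num))

lemma P0_spec (P : ℕ) (k : ℕ) (hk : k ≤ 2097152) (hP : ∀ n, n < 2097152 → (P.testBit n = true ↔ n.Prime)) (n : ℕ) (hn : n < k) :
    (P &&& (2 ^ k - 1)).testBit n = true ↔ n.Prime := by
  rw [Nat.and_two_pow_sub_one_eq_mod, Nat.testBit_mod_two_pow, decide_eq_true hn, Bool.true_and, hP n (by omega)]

lemma small : ∀ b, (6 ≤ b → b < 131072 → Nat.Coprime 3 b → Nat.primeCounting (S 3 b) < 2 * piStar 3 b) ∧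
    (5 ≤ b → b < 131072 → Nat.Coprime 4 b → Nat.primeCounting (S 4 b) < 2 * piStar 4 b) ∧
    (6 ≤ b → b < 131072 → Nat.Coprime 5 b → Nat.primeCounting (S 5 b) < 2 * piStar 5 b) ∧
    (13 ≤ b → b < 131072 → Nat.Coprime 6 b → Nat.primeCounting (S 6 b) < 2 * piStar 6 b) ∧
    (8 ≤ b → b < 131072 → Nat.Coprime 7 b → Nat.primeCounting (S 7 b) < 2 * piStar 7 b) ∧
    (9 ≤ b → b < 131072 → Nat.Coprime 8 b → Nat.primeCounting (S 8 b) < 2 * piStar 8 b) ∧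
    (10 ≤ b → b < 262144 → Nat.Coprime 9 b → Nat.primeCounting (S 9 b) < 2 * piStar 9 b) ∧
    (11 ≤ b → b < 131072 → Nat.Coprime 10 b → Nat.primeCounting (S 10 b) < 2 * piStar 10 b) := by
  intro b
  have H := chkAll_ok
  rw [chkAll, force_eq] at H
  obtain ⟨P, hPdef⟩ : ∃ P, P = PP := ⟨_, rfl⟩
  rw [← hPdef] at H
  have hP := PP_spec' P hPdef
  clear hPdef
  have hP0 := P0_spec P 32768 (by norm_num) hP
  obtain ⟨P0, hP0d⟩ : ∃ P0, P0 = P &&& (2 ^ 32768 - 1) := ⟨_, rfl⟩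
  rw [← hP0d] at H hP0
  clear hP0d
  rw [force_eq, force_eq, force_eq] at H
  simp only [Bool.and_eq_true] at H
  obtain ⟨c3, c4, c5, c6, c7, c8, c9, c10⟩ := H
  refine ⟨?_, ?_, ?_, ?_, ?_, ?_, ?_, ?_⟩ <;> intro hb hbb h
  · exact chkA_sound P P0 3 7 131072 6 _ (by norm_num) (by norm_num) hP hP0 (by norm_num) (by norm_num) (by norm_num) (by norm_num) (by decide) (by decide) c3 b hb hbb h
  · exact chkA_sound P P0 4 5 131072 5 _ (by norm_num) (by norm_num) hP hP0 (by norm_num) (by norm_num) (by norm_num) (by norm_num) (by decide) (by decide) c4 b hb hbb h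
  · exact chkA_sound P P0 5 4 131072 6 _ (by norm_num) (by norm_num) hP hP0 (by norm_num) (by norm_num) (by norm_num) (by norm_num) (by decide) (by decide) c5 b hb hbb h
  · exact chkA_sound P P0 6 4 131072 13 _ (by norm_num) (by norm_num) hP hP0 (by norm_num) (by norm_num) (by norm_num) (by norm_num) (by decide) (by decide) c6 b hb hbb h
  · exact chkA_sound P P0 7 3 131072 8 _ (by norm_num) (by norm_num) hP hP0 (by norm_num) (by norm_num) (by norm_num) (by norm_num) (by decide) (by decide) c7 b hb hbb h
  · exact chkA_sound P P0 8 3 131072 9 _ (by norm_num) (by norm_num) hP hP0 (by norm_num) (by norm_num) (by norm_num) (by norm_num) (by decide) (by decide) c8 b hb hbb h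
  · exact chkA_sound P P0 9 3 262144 10 _ (by norm_num) (by norm_num) hP hP0 (by norm_num) (by norm_num) (by norm_num) (by norm_num) (by decide) (by decide) c9 b hb hbb h
  · exact chkA_sound P P0 10 2 131072 11 _ (by norm_num) (by norm_num) hP hP0 (by norm_num) (by norm_num) (by norm_num) (by norm_num) (by decide) (by decide) c10 b hb hbb h
end PS

namespace PS
open Finset

lemma piStar_ge (a b : ℕ) (s : Finset ℕ) (ha : 1 ≤ a) (h : Nat.Coprime a b)
    (hs : ∀ p ∈ s, p.Prime ∧ ¬ ∃ u v : ℕ, p = a * u + b * v) : s.card ≤ piStar a b := by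
  rw [piStar, ← Set.ncard_coe_finset]
  exact Set.ncard_le_ncard (fun p hp => hs p (by simpa using hp)) (nonrep_finite a b ha h)

lemma nonrep_dec (a b p : ℕ) (h : ∀ v ∈ range (p + 1), b * v ≤ p → ¬ a ∣ p - b * v) (hb : 1 ≤ b) :
    ¬ ∃ u v : ℕ, p = a * u + b * v := by
  rintro ⟨u, v, hp⟩
  have h1 : v ≤ b * v := Nat.le_mul_of_pos_left _ hb
  exact h v (by simp; omega) (by omega) ⟨u, by omega⟩

lemma ex34 : Nat.primeCounting (S 3 4) < 2 * piStar 3 4 := by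
  have h := piStar_ge 3 4 {2, 5} (by norm_num) (by norm_num) (by
    intro p hp
    simp only [mem_insert, mem_singleton] at hp
    rcases hp with rfl | rfl <;> exact ⟨by norm_num, nonrep_dec _ _ _ (by decide) (by norm_num)⟩)
  have h2 : Nat.primeCounting (S 3 4) = 3 := by rw [S, pc_eq]; decide
  have h3 : ({2, 5} : Finset ℕ).card = 2 := by decide
  omega

lemma ex67 : Nat.primeCounting (S 6 7) < 2 * piStar 6 7 := by
  have h := piStar_ge 6 7 {2, 3, 5, 11, 17, 23} (by norm_num) (by norm_num) (by
    intro p hp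
    simp only [mem_insert, mem_singleton] at hp
    rcases hp with rfl | rfl | rfl | rfl | rfl | rfl <;> exact ⟨by norm_num, nonrep_dec _ _ _ (by decide) (by norm_num)⟩)
  have h2 : Nat.primeCounting (S 6 7) = 10 := by rw [S, pc_eq]; decide
  have h3 : ({2, 3, 5, 11, 17, 23} : Finset ℕ).card = 6 := by decide
  omega

lemma ex611 : Nat.primeCounting (S 6 11) < 2 * piStar 6 11 := by
  have h := piStar_ge 6 11 {2, 3, 5, 7, 13, 19, 31, 37} (by norm_num) (by norm_num) (by
    intro p hp
    simp only [mem_insert, mem_singleton] at hp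
    rcases hp with rfl | rfl | rfl | rfl | rfl | rfl | rfl | rfl <;> exact ⟨by norm_num, nonrep_dec _ _ _ (by decide) (by norm_num)⟩)
  have h2 : Nat.primeCounting (S 6 11) = 15 := by rw [S, pc_eq]; decide
  have h3 : ({2, 3, 5, 7, 13, 19, 31, 37} : Finset ℕ).card = 8 := by decide
  omega

lemma ex35 : Nat.primeCounting (S 3 5) = 2 * piStar 3 5 := by
  have h2 : Nat.primeCounting (S 3 5) = 4 := by rw [S, pc_eq]; decide
  have h3 : {p : ℕ | p.Prime ∧ ¬ ∃ u v : ℕ, p = 3 * u + 5 * v} = (({2, 7} : Finset ℕ) : Set ℕ) := by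
    ext p
    simp only [Set.mem_setOf_eq, coe_insert, coe_singleton, Set.mem_insert_iff, Set.mem_singleton_iff]
    constructor
    · rintro ⟨hp, hn⟩
      by_contra hc
      apply hn
      have hp2 := hp.two_le
      have h4 : p ≠ 4 := by rintro rfl; norm_num at hp
      have : p % 3 = 0 ∨ p % 3 = 1 ∨ p % 3 = 2 := by omega
      rcases this with h | h | h
      · exact ⟨p / 3, 0, by omega⟩
      · exact ⟨(p - 10) / 3, 2, by omega⟩
      · exact ⟨(p - 5) / 3, 1, by omega⟩
    · intro hp
      rcases hp with rfl | rfl <;> exact ⟨by norm_num, nonrep_dec _ _ _ (by decide) (by norm_num)⟩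
  rw [h2, piStar, h3, Set.ncard_coe_finset]; decide

lemma one_case (b : ℕ) : Nat.primeCounting (S 1 b) = 2 * piStar 1 b := by
  have h3 : {p : ℕ | p.Prime ∧ ¬ ∃ u v : ℕ, p = 1 * u + b * v} = ∅ := by
    ext p
    simp only [Set.mem_setOf_eq, Set.mem_empty_iff_false, iff_false, not_and, not_not]
    intro _; exact ⟨p, 0, by simp⟩
  have hS : S 1 b = 0 := by rw [S]; omega
  rw [piStar, h3, hS]; simp

lemma two_case (b : ℕ) (hb : 3 ≤ b) (h : Nat.Coprime 2 b) :
    piStar 2 b + 1 = ((range b).filter Nat.Prime).card ∧ Nat.primeCounting (S 2 b) = ((range (b - 1)).filter Nat.Prime).card := by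
  have hodd : b % 2 = 1 := by
    rcases Nat.mod_two_eq_zero_or_one b with h0 | h0
    · have : 2 ∣ Nat.gcd 2 b := Nat.dvd_gcd dvd_rfl (by omega)
      rw [h] at this; omega
    · exact h0
  constructor
  · have h3 : {p : ℕ | p.Prime ∧ ¬ ∃ u v : ℕ, p = 2 * u + b * v} = ((((range b).filter Nat.Prime).erase 2 : Finset ℕ) : Set ℕ) := by
      ext p
      simp only [Set.mem_setOf_eq, coe_erase, coe_filter, mem_range, Set.mem_sdiff, Set.mem_singleton_iff]
      constructor
      · rintro ⟨hp, hn⟩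
        refine ⟨⟨?_, hp⟩, ?_⟩
        · by_contra hc
          apply hn
          rcases Nat.mod_two_eq_zero_or_one p with h0 | h0
          · exact ⟨p / 2, 0, by omega⟩
          · exact ⟨(p - b) / 2, 1, by omega⟩
        · rintro rfl; exact hn ⟨1, 0, by omega⟩
      · rintro ⟨⟨h1, h2⟩, h4⟩
        refine ⟨h2, ?_⟩
        rintro ⟨u, v, hp⟩
        have hv : v = 0 := by
          by_contra hv
          have := Nat.le_mul_of_pos_right b (Nat.pos_of_ne_zero hv)
          omega
        subst hv
        have : p % 2 = 1 := (h2.eq_two_or_odd).resolve_left h4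
        omega
    have hm : 2 ∈ (range b).filter Nat.Prime := by simp [Nat.prime_two]; omega
    rw [piStar, h3, Set.ncard_coe_finset, Finset.card_erase_add_one hm]
  · rw [pc_eq, S]
    congr 3; omega

lemma two_strict (b : ℕ) (hb : 7 ≤ b) (h : Nat.Coprime 2 b) : Nat.primeCounting (S 2 b) < 2 * piStar 2 b := by
  obtain ⟨h1, h2⟩ := two_case b (by omega) h
  have h3 : ((range (b - 1)).filter Nat.Prime).card ≤ ((range b).filter Nat.Prime).card :=
    Finset.card_le_card (Finset.filter_subset_filter _ (Finset.range_mono (by omega)))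
  have h4 : ((range 7).filter Nat.Prime).card ≤ ((range b).filter Nat.Prime).card :=
    Finset.card_le_card (Finset.filter_subset_filter _ (Finset.range_mono (by omega)))
  have h5 : ((range 7).filter Nat.Prime).card = 3 := by decide
  omega

lemma two_three : Nat.primeCounting (S 2 3) = 2 * piStar 2 3 := by
  obtain ⟨h1, h2⟩ := two_case 3 (by norm_num) (by norm_num)
  have h5 : ((range 3).filter Nat.Prime).card = 1 := by decide
  have h6 : ((range (3 - 1)).filter Nat.Prime).card = 0 := by decide
  omega

lemma two_five : Nat.primeCounting (S 2 5) = 2 * piStar 2 5 := by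
  obtain ⟨h1, h2⟩ := two_case 5 (by norm_num) (by norm_num)
  have h5 : ((range 5).filter Nat.Prime).card = 2 := by decide
  have h6 : ((range (5 - 1)).filter Nat.Prime).card = 2 := by decide
  omega

lemma main_nat (a b : ℕ) (ha : 1 ≤ a) (ha' : a ≤ 10) (hab : a < b) (h : Nat.Coprime a b) :
    (Nat.primeCounting (S a b) = 2 * piStar a b ∧ (a = 1 ∨ (a = 2 ∧ b = 3) ∨ (a = 2 ∧ b = 5) ∨ (a = 3 ∧ b = 5))) ∨
    (Nat.primeCounting (S a b) < 2 * piStar a b ∧ ¬ (a = 1 ∨ (a = 2 ∧ b = 3) ∨ (a = 2 ∧ b = 5) ∨ (a = 3 ∧ b = 5))) := by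
  obtain ⟨s3, s4, s5, s6, s7, s8, s9, s10⟩ := small b
  have ha2 : a = 1 ∨ a = 2 ∨ a = 3 ∨ a = 4 ∨ a = 5 ∨ a = 6 ∨ a = 7 ∨ a = 8 ∨ a = 9 ∨ a = 10 := by omega
  rcases ha2 with rfl | rfl | rfl | rfl | rfl | rfl | rfl | rfl | rfl | rfl
  · left; exact ⟨one_case b, Or.inl rfl⟩
  · have hb : b = 3 ∨ b = 4 ∨ b = 5 ∨ b = 6 ∨ 7 ≤ b := by omega
    rcases hb with rfl | rfl | rfl | rfl | hb
    · left; exact ⟨two_three, by simp⟩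
    · norm_num at h
    · left; exact ⟨two_five, by simp⟩
    · norm_num at h
    · right; exact ⟨two_strict b hb h, by omega⟩
  · have hb : b = 4 ∨ b = 5 ∨ 6 ≤ b := by omega
    rcases hb with rfl | rfl | hb
    · right; exact ⟨ex34, by omega⟩
    · left; exact ⟨ex35, by simp⟩
    · right
      refine ⟨?_, by omega⟩
      rcases lt_or_ge b 131072 with hl | hl
      · exact s3 hb hl h
      · exact large3 b h hl
  · right
    refine ⟨?_, by omega⟩
    rcases lt_or_ge b 131072 with hl | hl
    · exact s4 (by omega) hl h
    · exact large4 b h hl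
  · right
    refine ⟨?_, by omega⟩
    rcases lt_or_ge b 131072 with hl | hl
    · exact s5 (by omega) hl h
    · exact large5 b h hl
  · right
    refine ⟨?_, by omega⟩
    have hb : b = 7 ∨ b = 8 ∨ b = 9 ∨ b = 10 ∨ b = 11 ∨ b = 12 ∨ 13 ≤ b := by omega
    rcases hb with rfl | rfl | rfl | rfl | rfl | rfl | hb
    · exact ex67
    · norm_num at h
    · norm_num at h
    · norm_num at h
    · exact ex611
    · norm_num at h
    · rcases lt_or_ge b 131072 with hl | hl
      · exact s6 hb hl h
      · exact large6 b h hl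
  · right
    refine ⟨?_, by omega⟩
    rcases lt_or_ge b 131072 with hl | hl
    · exact s7 (by omega) hl h
    · exact large7 b h hl
  · right
    refine ⟨?_, by omega⟩
    rcases lt_or_ge b 131072 with hl | hl
    · exact s8 (by omega) hl h
    · exact large8 b h hl
  · right
    refine ⟨?_, by omega⟩
    rcases lt_or_ge b 262144 with hl | hl
    · exact s9 (by omega) hl h
    · exact large9 b h hl
  · right
    refine ⟨?_, by omega⟩
    rcases lt_or_ge b 131072 with hl | hl
    · exact s10 (by omega) hl h
    · exact large10 b h hl
end PS

theorem piStar_ge_half_pi_small_a (a b : ℕ) (ha : 1 ≤ a) (ha' : a ≤ 10)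
    (hab : a < b) (h : Nat.Coprime a b) :
    (1 / 2 : ℝ) * (Nat.primeCounting (S a b) : ℝ) ≤ (piStar a b : ℝ) ∧
      ((piStar a b : ℝ) = (1 / 2 : ℝ) * (Nat.primeCounting (S a b) : ℝ) ↔
        a = 1 ∨ (a, b) = (2, 3) ∨ (a, b) = (2, 5) ∨ (a, b) = (3, 5)) := by
  simp only [Prod.mk.injEq]
  rcases PS.main_nat a b ha ha' hab h with ⟨h1, h2⟩ | ⟨h1, h2⟩
  · have h3 : (Nat.primeCounting (S a b) : ℝ) = 2 * (piStar a b : ℝ) := by exact_mod_cast h1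
    exact ⟨by linarith, fun _ => h2, fun _ => by linarith⟩
  · have h3 : (Nat.primeCounting (S a b) : ℝ) < 2 * (piStar a b : ℝ) := by exact_mod_cast h1
    exact ⟨by linarith, fun h4 => by linarith, fun h4 => absurd h4 h2⟩
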